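/- Let d ≥ 2 and let r > d(d+1) be integers. Let J_{r,d}(V) denote the number of 2r-tuples of integers (v₁, …, v_{2r}) with 1 ≤ v_i ≤ V satisfying v₁^j + v₂^j + ⋯ + v_r^j = v_{r+1}^j + ⋯ + v_{2r}^j for every 1 ≤ j ≤ d. Then J_{r,d}(V) ≪ V^{2r − d(d+1)/2}, with implied constant depending only on d and r. -/

import Mathlib

/-!
By orthogonality `J_{r,d}(V)` is the `2r`-th moment of the Weyl sum `f` over the unit cube. At the
moment `d(d+1)` efficient congruencing gives the expected exponent up to `ε`. This bound, combined
with Weyl differencing, confines the points where `|f| ≥ V / T` to narrow arcs around rational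
points with denominators at most a power of `T`. There `f` at scale `V` is comparable, after an
anisotropic dilation, with the Weyl sum at a scale `Y` polynomial in `T`, so Markov's inequality for
the moment `d(d+1)` at the scale `Y` bounds the measure of that set by a power of `T` times
`V ^ (-d(d+1)/2)`, now without any loss in `V`. Since `r > d(d+1)`, a dyadic summation over `T`
converges and removes the `ε`.
-/

/-- `e(x) = exp(2πix)` -/
noncomputable def e (x : ℝ) : ℂ := Complex.exp (2 * Real.pi * Complex.I * x)

namespace VinogradovMeanValue

open Finset MeasureTheory ComplexConjugate
open scoped Polynomial

/-! ### Counting solutions -/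

/-- The solutions of the Vinogradov system of degree `k` in `2s` variables from `A`, as pairs of
`s`-tuples with equal power sums. -/
def solutions (s k : ℕ) (A : Finset ℕ) : Finset ((Fin s → ℕ) × (Fin s → ℕ)) :=
  {z ∈ Fintype.piFinset (fun _ => A) ×ˢ Fintype.piFinset (fun _ => A) |
    ∀ j : Fin k, ∑ i, z.1 i ^ (j + 1 : ℕ) = ∑ i, z.2 i ^ (j + 1 : ℕ)}

lemma mem_solutions {s k : ℕ} {A : Finset ℕ} {z : (Fin s → ℕ) × (Fin s → ℕ)} :
    z ∈ solutions s k A ↔ ((∀ i, z.1 i ∈ A) ∧ ∀ i, z.2 i ∈ A) ∧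
      ∀ j : Fin k, ∑ i, z.1 i ^ (j + 1 : ℕ) = ∑ i, z.2 i ^ (j + 1 : ℕ) := by
  simp only [solutions, mem_filter, mem_product, Fintype.mem_piFinset]

lemma solutions_mono (s k : ℕ) {A B : Finset ℕ} (h : A ⊆ B) : solutions s k A ⊆ solutions s k B :=
  filter_subset_filter _ <| product_subset_product (Fintype.piFinset_subset _ _ fun _ => h)
    (Fintype.piFinset_subset _ _ fun _ => h)

lemma sum_add_pow {ι R : Type*} [Fintype ι] [CommSemiring R] (x : ι → R) (c : R) (n : ℕ) :
    ∑ i, (x i + c) ^ n = ∑ l ∈ range (n + 1), c ^ (n - l) * n.choose l * ∑ i, x i ^ l := by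
  simp only [add_pow, mul_sum]
  rw [sum_comm]
  exact sum_congr rfl fun l _ => sum_congr rfl fun i _ => by ring

lemma sum_add_pow_modEq {ι : Type*} [Fintype ι] {k : ℕ} {m : ℤ} {x y : ι → ℤ}
    (h : ∀ j : Fin k, ∑ i, x i ^ (j + 1 : ℕ) ≡ ∑ i, y i ^ (j + 1 : ℕ) [ZMOD m]) (c : ℤ)
    (j : Fin k) :
    ∑ i, (x i + c) ^ (j + 1 : ℕ) ≡ ∑ i, (y i + c) ^ (j + 1 : ℕ) [ZMOD m] := by
  rw [sum_add_pow, sum_add_pow]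
  refine Int.ModEq.sum fun l hl => Int.ModEq.mul_left _ ?_
  obtain - | l := l
  · simp only [pow_zero]
    rfl
  · exact h ⟨l, by have := mem_range.1 hl; omega⟩

lemma sum_add_mul_pow_eq_iff {ι : Type*} [Fintype ι] {k q : ℕ} (hq : q ≠ 0) (c : ℕ) (x y : ι → ℕ) :
    (∀ j : Fin k, ∑ i, (c + q * x i) ^ (j + 1 : ℕ) = ∑ i, (c + q * y i) ^ (j + 1 : ℕ)) ↔
      ∀ j : Fin k, ∑ i, x i ^ (j + 1 : ℕ) = ∑ i, y i ^ (j + 1 : ℕ) := by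
  zify
  simp only [← Int.modEq_zero_iff]
  constructor <;> intro h j
  · have key := sum_add_pow_modEq h (-c) j
    simp only [add_neg_cancel_comm, mul_pow, ← mul_sum, Int.modEq_zero_iff] at key ⊢
    exact mul_left_cancel₀ (pow_ne_zero _ (by exact_mod_cast hq)) key
  · simp only [add_comm (c : ℤ)]
    refine sum_add_pow_modEq (fun j => ?_) c j
    simp only [mul_pow, ← mul_sum]
    exact (h j).mul_left _

lemma solutions_image_affine {q : ℕ} (hq : q ≠ 0) (c s k : ℕ) (A : Finset ℕ) :
    solutions s k (A.image (c + q * ·)) =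
      (solutions s k A).image
        (Prod.map (fun x i => c + q * x i) (fun y i => c + q * y i)) := by
  ext ⟨x, y⟩
  simp only [mem_solutions, mem_image, Prod.exists, Prod.map_apply, Prod.mk.injEq]
  constructor
  · rintro ⟨⟨hx, hy⟩, h⟩
    choose x' hx' hxx' using hx
    choose y' hy' hyy' using hy
    obtain rfl : (fun i => c + q * x' i) = x := funext hxx'
    obtain rfl : (fun i => c + q * y' i) = y := funext hyy'
    exact ⟨x', y', ⟨⟨hx', hy'⟩, (sum_add_mul_pow_eq_iff hq c x' y').1 h⟩, rfl, rfl⟩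
  · rintro ⟨x', y', ⟨⟨hx', hy'⟩, h⟩, rfl, rfl⟩
    exact ⟨⟨fun i => ⟨_, hx' i, rfl⟩, fun i => ⟨_, hy' i, rfl⟩⟩,
      (sum_add_mul_pow_eq_iff hq c x' y').2 h⟩

lemma card_solutions_image_affine {q : ℕ} (hq : q ≠ 0) (c s k : ℕ) (A : Finset ℕ) :
    #(solutions s k (A.image (c + q * ·))) = #(solutions s k A) := by
  have hinj : Function.Injective fun (x : Fin s → ℕ) i => c + q * x i := fun x y h =>
    funext fun i => Nat.eq_of_mul_eq_mul_left (Nat.pos_of_ne_zero hq)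
      (Nat.add_left_cancel (congrFun h i))
  rw [solutions_image_affine hq, card_image_of_injective _ (hinj.prodMap hinj)]

/-! ### Congruences between power sums -/

lemma add_pow_mul_pow_modEq {l : ℕ} (hl : l ≠ 0) (p z t : ℤ) (n : ℕ) :
    (z + p ^ l * t) ^ (n + 1) ≡ z ^ (n + 1) + p ^ l * ((n + 1) * (t * z ^ n))
      [ZMOD p ^ (l + 1)] := by
  obtain ⟨c, hc⟩ := Polynomial.powAddExpansion z (p ^ l * t) (n + 1)
  obtain ⟨m, rfl⟩ := Nat.exists_eq_add_one_of_ne_zero hl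
  refine (Int.modEq_iff_dvd.2 ⟨c * p ^ m * t ^ 2, ?_⟩).symm
  rw [hc, Nat.add_sub_cancel]
  push_cast
  ring

/-- By the binomial theorem, the congruences become a Vandermonde system for `t` modulo `p`. -/
lemma dvd_of_sum_add_pow_mul_modEq {k p l : ℕ} [Fact p.Prime] (hk : k < p) (hl : l ≠ 0)
    {z t : Fin k → ℤ} (hz : Function.Injective fun i => (z i : ZMod p))
    (h : ∀ j : Fin k, ∑ i, (z i + p ^ l * t i) ^ (j + 1 : ℕ) ≡ ∑ i, z i ^ (j + 1 : ℕ)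
      [ZMOD p ^ (l + 1)]) (i : Fin k) : (p : ℤ) ∣ t i := by
  have hp : p.Prime := Fact.out
  have hlin : ∀ j : Fin k, ∑ i, (t i : ZMod p) * (z i : ZMod p) ^ (j : ℕ) = 0 := by
    intro j
    have hexp : ∑ i, (z i ^ (j + 1 : ℕ) + p ^ l * ((j + 1) * (t i * z i ^ (j : ℕ)))) ≡
        ∑ i, z i ^ (j + 1 : ℕ) [ZMOD p ^ (l + 1)] :=
      (Int.ModEq.sum fun i _ => (add_pow_mul_pow_modEq hl _ _ _ _).symm).trans (h j)
    rw [sum_add_distrib, ← mul_sum, ← mul_sum, Int.add_modEq_left_iff, pow_succ] at hexp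
    have hpl : (p : ℤ) ^ l ≠ 0 := pow_ne_zero _ (by exact_mod_cast hp.ne_zero)
    have hj : ((j + 1 : ℕ) : ZMod p) ≠ 0 := by
      rw [Ne, ZMod.natCast_eq_zero_iff]
      exact Nat.not_dvd_of_pos_of_lt (by omega) (by omega)
    have hcast := (ZMod.intCast_zmod_eq_zero_iff_dvd _ _).2 ((mul_dvd_mul_iff_left hpl).1 hexp)
    push_cast at hcast hj
    exact (mul_eq_zero.1 hcast).resolve_left hj
  exact (ZMod.intCast_zmod_eq_zero_iff_dvd _ _).1
    (congrFun (Matrix.eq_zero_of_forall_pow_sum_mul_pow_eq_zero hz hlin) i)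

lemma modEq_pow_of_sum_pow_modEq {k p : ℕ} [Fact p.Prime] (hk : k < p) {z z' : Fin k → ℤ}
    (hz : Function.Injective fun i => (z i : ZMod p)) (h0 : ∀ i, z i ≡ z' i [ZMOD p]) (m : ℕ)
    (h : ∀ j : Fin k, ∑ i, z' i ^ (j + 1 : ℕ) ≡ ∑ i, z i ^ (j + 1 : ℕ) [ZMOD p ^ m])
    (i : Fin k) : z i ≡ z' i [ZMOD p ^ m] := by
  suffices key : ∀ l ≤ m, ∀ i, z i ≡ z' i [ZMOD p ^ l] from key m le_rfl i
  intro l hlm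
  induction l with
  | zero => intro i; simpa using Int.modEq_one
  | succ l ih =>
    obtain rfl | hl := eq_or_ne l 0
    · simpa using h0
    choose t ht using fun i => Int.modEq_iff_add_fac.1 (ih (by omega) i)
    simp only [ht] at h ⊢
    intro i
    obtain ⟨u, hu⟩ := dvd_of_sum_add_pow_mul_modEq hk hl hz
      (fun j => (h j).of_dvd (pow_dvd_pow _ hlm)) i
    exact Int.modEq_iff_add_fac.2 ⟨u, by rw [hu]; ring⟩

/-- Each residue class modulo `m j` splits into `r j` classes modulo `m j * r j`. -/
lemma card_le_mul_prod_of_modEq {τ κ : Type*} [Fintype κ] {S : Finset τ} {Ψ : κ → τ → ℤ}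
    {m r : κ → ℕ} [∀ j, NeZero (r j)] {n : ℕ}
    (hS : ∀ t ∈ S, ∀ t' ∈ S, ∀ j, Ψ j t ≡ Ψ j t' [ZMOD m j])
    (hn : ∀ S' ⊆ S, (∀ t ∈ S', ∀ t' ∈ S', ∀ j, Ψ j t ≡ Ψ j t' [ZMOD (m j * r j : ℕ)]) → #S' ≤ n) :
    #S ≤ n * ∏ j, r j := by
  classical
  obtain rfl | ⟨t₀, ht₀⟩ := S.eq_empty_or_nonempty
  · simp
  choose! c hc using fun t (ht : t ∈ S) j => Int.modEq_iff_add_fac.1 (hS t₀ ht₀ t ht j)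
  have := card_le_mul_card_image_of_maps_to (s := S) (t := univ)
    (f := fun t j => (c t j : ZMod (r j))) (fun _ _ => mem_univ _) n fun b _ => ?_
  · simpa [Fintype.card_pi, ZMod.card] using this
  refine hn _ (filter_subset _ _) fun t ht t' ht' j => ?_
  rw [mem_filter] at ht ht'
  have hcc : c t j ≡ c t' j [ZMOD r j] :=
    (ZMod.intCast_eq_intCast_iff _ _ _).1 (congrFun (ht.2.trans ht'.2.symm) j)
  rw [hc t ht.1, hc t' ht'.1, Nat.cast_mul]
  exact hcc.mul_left'.add_left _

/-- After passing to the common modulus `p ^ m`, Hensel's lemma leaves at most one solution. -/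
lemma card_le_of_sum_pow_modEq {k p m : ℕ} [Fact p.Prime] (hk : k < p) {z : Fin k → ℕ}
    (hz : ∀ i j, z i ≡ z j [MOD p] → i = j) {u : Fin k → ℕ} (hu : ∀ j, u j ≤ m)
    {S : Finset (Fin k → ℕ)} (hS : ∀ σ ∈ S, ∀ i, σ i < p ^ m ∧ σ i ≡ z i [MOD p])
    (hS' : ∀ σ ∈ S, ∀ σ' ∈ S, ∀ j : Fin k,
      ∑ i, (σ i : ℤ) ^ (j + 1 : ℕ) ≡ ∑ i, (σ' i : ℤ) ^ (j + 1 : ℕ) [ZMOD p ^ u j]) :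
    #S ≤ p ^ ∑ j, (m - u j) := by
  have : ∀ j, NeZero (p ^ (m - u j)) := fun j => ⟨pow_ne_zero _ (Fact.out : p.Prime).ne_zero⟩
  rw [← prod_pow_eq_pow_sum, ← one_mul (∏ _, _)]
  refine card_le_mul_prod_of_modEq (m := fun j => p ^ u j)
    (Ψ := fun (j : Fin k) (σ : Fin k → ℕ) => ∑ i, (σ i : ℤ) ^ (j + 1 : ℕ)) (by simpa using hS')
    fun T hT hTm => card_le_one.2 fun σ hσ σ' hσ' => funext fun i => ?_
  have hinj : Function.Injective fun i => ((σ i : ℤ) : ZMod p) := fun i j hij => hz i j <|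
    ((hS σ (hT hσ) i).2.symm.trans (by simpa [ZMod.natCast_eq_natCast_iff] using hij)).trans
      (hS σ (hT hσ) j).2
  have hσσ' := modEq_pow_of_sum_pow_modEq (z := fun i => σ i) (z' := fun i => σ' i) hk hinj
    (fun i => Int.natCast_modEq_iff.2 ((hS σ (hT hσ) i).2.trans (hS σ' (hT hσ') i).2.symm)) m
    (fun j => by simpa [← pow_add, hu j] using hTm σ' hσ' σ hσ j) i
  exact Nat.ModEq.eq_of_lt_of_lt (by exact_mod_cast hσσ') (hS σ (hT hσ) i).1 (hS σ' (hT hσ') i).1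

/-- Tuples congruent modulo `p ^ a` and distinct modulo `p ^ (a + 1)`: the conditioned tuples of the
efficient congruencing method. -/
def IsTransverse {k : ℕ} (p a : ℕ) (ξ : Fin k → ℕ) : Prop :=
  (∀ i j, ξ i ≡ ξ j [MOD p ^ a]) ∧ ∀ i j, ξ i ≡ ξ j [MOD p ^ (a + 1)] → i = j

/-- The power sums of `ρ` and `ρ'` about `η` agree, the `j`-th one modulo `p ^ (j * b)`. -/
def PowerSumsCongr {k : ℕ} (p b : ℕ) (η : ℤ) (ρ ρ' : Fin k → ℕ) : Prop :=
  ∀ j : Fin k, ∑ i, ((ρ i : ℤ) - η) ^ (j + 1 : ℕ) ≡ ∑ i, ((ρ' i : ℤ) - η) ^ (j + 1 : ℕ)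
    [ZMOD p ^ ((j + 1) * b)]

lemma PowerSumsCongr.symm {k p b : ℕ} {η : ℤ} {ρ ρ' : Fin k → ℕ} (h : PowerSumsCongr p b η ρ ρ') :
    PowerSumsCongr p b η ρ' ρ := fun j => (h j).symm

lemma PowerSumsCongr.trans {k p b : ℕ} {η : ℤ} {ρ ρ' ρ'' : Fin k → ℕ}
    (h : PowerSumsCongr p b η ρ ρ') (h' : PowerSumsCongr p b η ρ' ρ'') :
    PowerSumsCongr p b η ρ ρ'' := fun j => (h j).trans (h' j)

lemma div_pow_modEq_of_modEq {p a x y : ℕ} (h : x ≡ y [MOD p ^ (a + 1)]) :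
    x / p ^ a ≡ y / p ^ a [MOD p] := by
  rw [Nat.ModEq, pow_succ] at h
  rw [Nat.ModEq, ← Nat.mod_mul_right_div_self, h, Nat.mod_mul_right_div_self]

lemma IsTransverse.div_pow_injective {k p a : ℕ} {ξ : Fin k → ℕ} (hξ : IsTransverse p a ξ)
    (i j : Fin k) (h : ξ i / p ^ a ≡ ξ j / p ^ a [MOD p]) : i = j := by
  refine hξ.2 i j ?_
  rw [Nat.ModEq, Nat.mod_pow_succ, Nat.mod_pow_succ, hξ.1 i j, h]

lemma IsTransverse.eq_mod_add_mul_div {k p a : ℕ} {ξ ρ : Fin k → ℕ} (hξ : IsTransverse p a ξ)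
    (hρ : ∀ i, ρ i ≡ ξ i [MOD p ^ (a + 1)]) (i i₀ : Fin k) :
    ρ i = ξ i₀ % p ^ a + p ^ a * (ρ i / p ^ a) := by
  have h : ρ i % p ^ a = ξ i₀ % p ^ a :=
    ((hρ i).of_dvd (pow_dvd_pow p a.le_succ)).trans (hξ.1 i i₀)
  rw [← h, Nat.mod_add_div]

/-- If the centred power sums agree modulo `p ^ n`, then translating to the common residue modulo
`p ^ a` and dividing by `p ^ a` leaves power-sum congruences in the nonsingular case. -/
lemma card_le_of_sum_sub_pow_modEq {k p a n : ℕ} [Fact p.Prime] (hk : k < p) (ha : k * a ≤ n)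
    {η : ℤ} {ξ : Fin k → ℕ} (hξ : IsTransverse p a ξ) {S : Finset (Fin k → ℕ)}
    (hS : ∀ ρ ∈ S, ∀ i, ρ i < p ^ n ∧ ρ i ≡ ξ i [MOD p ^ (a + 1)])
    (hS' : ∀ ρ ∈ S, ∀ ρ' ∈ S, ∀ j : Fin k,
      ∑ i, ((ρ i : ℤ) - η) ^ (j + 1 : ℕ) ≡ ∑ i, ((ρ' i : ℤ) - η) ^ (j + 1 : ℕ) [ZMOD p ^ n]) :
    #S ≤ p ^ ((∑ j ∈ range k, j) * a) := by
  obtain rfl | hk0 := Nat.eq_zero_or_pos k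
  · simpa using card_le_one_of_subsingleton S
  have hp : 0 < p := (Fact.out : p.Prime).pos
  have : NeZero k := ⟨hk0.ne'⟩
  set c := ξ 0 % p ^ a
  have hdec : ∀ ρ ∈ S, ∀ i, ρ i = c + p ^ a * (ρ i / p ^ a) := fun ρ hρ i =>
    hξ.eq_mod_add_mul_div (fun i => (hS ρ hρ i).2) i 0
  have hja : ∀ j : Fin k, (j + 1) * a ≤ n := fun j => (Nat.mul_le_mul_right a j.2).trans ha
  have hinj : Set.InjOn (fun (ρ : Fin k → ℕ) i => ρ i / p ^ a) S := fun ρ hρ ρ' hρ' h =>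
    funext fun i => by
      have hi : ρ i / p ^ a = ρ' i / p ^ a := congrFun h i
      rw [hdec ρ hρ i, hi, ← hdec ρ' hρ' i]
  rw [← card_image_of_injOn hinj]
  have hexp : ∑ j : Fin k, (n - a - (n - (j + 1) * a)) = (∑ j ∈ range k, j) * a := by
    rw [sum_mul, ← Fin.sum_univ_eq_sum_range (· * a)]
    refine sum_congr rfl fun j _ => ?_
    have := hja j
    rw [add_one_mul] at *
    omega
  rw [← hexp]
  refine card_le_of_sum_pow_modEq hk hξ.div_pow_injective
    (fun j => Nat.sub_le_sub_left (Nat.le_mul_of_pos_left a (by omega)) n)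
    (forall_mem_image.2 fun ρ hρ i => ⟨?_, div_pow_modEq_of_modEq (hS ρ hρ i).2⟩)
    (forall_mem_image.2 fun ρ hρ => forall_mem_image.2 fun ρ' hρ' j => ?_)
  · rw [Nat.div_lt_iff_lt_mul (pow_pos hp a), ← pow_add,
      Nat.sub_add_cancel ((Nat.le_mul_of_pos_left a hk0).trans ha)]
    exact (hS ρ hρ i).1
  · have key := sum_add_pow_modEq (hS' ρ hρ ρ' hρ') (η - c) j
    have hcast : ∀ ρ ∈ S, ∀ i, (ρ i : ℤ) - η + (η - c) = p ^ a * (ρ i / p ^ a : ℕ) :=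
      fun ρ hρ i => by
        have := congrArg (Nat.cast (R := ℤ)) (hdec ρ hρ i)
        rw [Nat.cast_add, Nat.cast_mul, Nat.cast_pow] at this
        linarith
    simp only [hcast ρ hρ, hcast ρ' hρ', mul_pow, ← mul_sum, ← pow_mul] at key
    have hpa : (p : ℤ) ^ (a * (j + 1 : ℕ)) ≠ 0 := pow_ne_zero _ (by exact_mod_cast hp.ne')
    rw [← Nat.add_sub_cancel' (hja j), pow_add, mul_comm (j + 1 : ℕ) a] at key
    rw [mul_comm (j + 1 : ℕ) a]
    exact Int.ModEq.mul_left_cancel' hpa key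

lemma card_le_of_powerSumsCongr {k p a b : ℕ} [Fact p.Prime] (hk : k < p) (hab : a ≤ b) {η : ℤ}
    {ξ : Fin k → ℕ} (hξ : IsTransverse p a ξ) {S : Finset (Fin k → ℕ)}
    (hS : ∀ ρ ∈ S, ∀ i, ρ i < p ^ (k * b) ∧ ρ i ≡ ξ i [MOD p ^ (a + 1)])
    (hS' : ∀ ρ ∈ S, ∀ ρ' ∈ S, PowerSumsCongr p b η ρ ρ') :
    #S ≤ p ^ ((∑ j ∈ range k, j) * (a + b)) := by
  have : ∀ j : Fin k, NeZero (p ^ ((k - (j + 1)) * b)) :=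
    fun j => ⟨pow_ne_zero _ (Fact.out : p.Prime).ne_zero⟩
  have hexp : ∑ j : Fin k, (k - (j + 1)) * b = (∑ j ∈ range k, j) * b := by
    rw [← sum_mul, Fin.sum_univ_eq_sum_range fun j => k - (j + 1),
      ← sum_range_reflect (fun j => j) k]
    simp only [Nat.sub_sub, add_comm 1]
  rw [mul_add, pow_add, ← hexp, ← prod_pow_eq_pow_sum]
  refine card_le_mul_prod_of_modEq (m := fun j : Fin k => p ^ ((j + 1) * b))
    (Ψ := fun (j : Fin k) (ρ : Fin k → ℕ) => ∑ i, ((ρ i : ℤ) - η) ^ (j + 1 : ℕ))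
    (by simpa [PowerSumsCongr] using hS')
    fun T hT hTm => card_le_of_sum_sub_pow_modEq (η := η) hk
      (Nat.mul_le_mul_left k hab) hξ
      (fun ρ hρ => hS ρ (hT hρ)) fun ρ hρ ρ' hρ' j => ?_
  have := hTm ρ hρ ρ' hρ' j
  rwa [← pow_add, ← add_mul, Nat.add_sub_cancel' j.2, Nat.cast_pow] at this

/-! ### Exponential sums and orthogonality -/

lemma e_add (x y : ℝ) : e (x + y) = e x * e y := by
  rw [e, e, e, ← Complex.exp_add]
  push_cast
  ring_nf

lemma norm_e (x : ℝ) : ‖e x‖ = 1 := by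
  rw [e, show 2 * Real.pi * Complex.I * x = (2 * Real.pi * x : ℝ) * Complex.I by push_cast; ring,
    Complex.norm_exp_ofReal_mul_I]

lemma e_intCast (n : ℤ) : e n = 1 := by
  rw [e, ← Complex.exp_int_mul_two_pi_mul_I n]
  push_cast
  ring_nf

lemma e_zero : e 0 = 1 := by simpa using e_intCast 0

lemma conj_e (x : ℝ) : conj (e x) = e (-x) := by
  rw [e, e, ← Complex.exp_conj]
  simp [Complex.conj_ofNat]

lemma e_sub (x y : ℝ) : e (x - y) = e x * conj (e y) := by
  rw [sub_eq_add_neg, e_add, conj_e]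

lemma e_sum {ι : Type*} (s : Finset ι) (x : ι → ℝ) : e (∑ i ∈ s, x i) = ∏ i ∈ s, e (x i) := by
  simp only [e, Complex.ofReal_sum, mul_sum, Complex.exp_sum]

@[fun_prop]
lemma continuous_e : Continuous e := by
  unfold e
  fun_prop

lemma integral_Icc_e_mul_intCast (a : ℝ) (n : ℕ) (m : ℤ) :
    ∫ t in Set.Icc a (a + n), e (t * m) = if m = 0 then (n : ℂ) else 0 := by
  rw [integral_Icc_eq_integral_Ioc, ← intervalIntegral.integral_of_le (by simp)]
  split_ifs with hm
  · simp [hm, e_zero]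
  · have hc : (2 * Real.pi * Complex.I * m : ℂ) ≠ 0 := by simp [Real.pi_ne_zero, hm]
    have hexp (t : ℝ) : Complex.exp (2 * Real.pi * Complex.I * m * t) = e (t * m) := by
      rw [e]
      push_cast
      ring_nf
    have hper : e ((a + n) * m) = e (a * m) := by
      rw [add_mul, e_add]
      simpa using congrArg (e (a * m) * ·) (e_intCast (n * m))
    simp only [← hexp]
    rw [integral_exp_mul_complex hc, hexp, hexp, hper, sub_self, zero_div]

lemma integral_Icc_e_sum_mul_intCast {k : ℕ} (a : Fin k → ℝ) (n : ℕ) (m : Fin k → ℤ) :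
    ∫ α in Set.Icc a (a + n), e (∑ i, α i * m i) = if m = 0 then (n : ℂ) ^ k else 0 := by
  simp only [← Set.pi_univ_Icc, volume_pi, Measure.restrict_pi_pi, e_sum]
  rw [integral_fintype_prod_eq_prod (f := fun i t => e (t * m i))]
  simp only [Pi.add_apply, Pi.natCast_apply, integral_Icc_e_mul_intCast, prod_ite_zero,
    mem_univ, true_imp_iff, funext_iff, Pi.zero_apply, prod_const, card_univ, Fintype.card_fin]

/-- The exponential sum `∑ e(α₁x + α₂x² + ⋯ + αₖxᵏ)` over `x ∈ A`; the coefficient of `x ^ (i + 1)`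
is `α i`. -/
noncomputable def expSum {k : ℕ} (A : Finset ℕ) (α : Fin k → ℝ) : ℂ :=
  ∑ x ∈ A, e (∑ i, α i * x ^ (i + 1 : ℕ))

@[fun_prop]
lemma continuous_expSum {k : ℕ} (A : Finset ℕ) : Continuous (expSum (k := k) A) := by
  unfold expSum
  fun_prop

lemma norm_expSum_le {k : ℕ} (A : Finset ℕ) (α : Fin k → ℝ) : ‖expSum A α‖ ≤ #A := by
  refine (norm_sum_le _ _).trans ?_
  simp [norm_e]

lemma prod_expSum {ι : Type*} [Fintype ι] [DecidableEq ι] {k : ℕ} (A : ι → Finset ℕ)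
    (α : Fin k → ℝ) :
    ∏ l, expSum (A l) α =
      ∑ x ∈ Fintype.piFinset A, e (∑ i, α i * ∑ l, (x l : ℝ) ^ (i + 1 : ℕ)) := by
  simp only [expSum, prod_univ_sum, ← e_sum, mul_sum]
  exact sum_congr rfl fun x _ => by rw [sum_comm]

lemma integral_prod_expSum_mul_conj {ι : Type*} [Fintype ι] [DecidableEq ι] {k : ℕ}
    (a : Fin k → ℝ) (n : ℕ) (A B : ι → Finset ℕ) :
    ∫ α in Set.Icc a (a + n), (∏ l, expSum (A l) α) * conj (∏ l, expSum (B l) α) =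
      n ^ k * #{z ∈ Fintype.piFinset A ×ˢ Fintype.piFinset B |
        ∀ j : Fin k, ∑ l, z.1 l ^ (j + 1 : ℕ) = ∑ l, z.2 l ^ (j + 1 : ℕ)} := by
  have hexpand (α : Fin k → ℝ) : (∏ l, expSum (A l) α) * conj (∏ l, expSum (B l) α) =
      ∑ z ∈ Fintype.piFinset A ×ˢ Fintype.piFinset B, e (∑ i, α i *
        (∑ l, (z.1 l : ℤ) ^ (i + 1 : ℕ) - ∑ l, (z.2 l : ℤ) ^ (i + 1 : ℕ) : ℤ)) := by
    rw [prod_expSum, prod_expSum, map_sum, sum_mul_sum, ← sum_product']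
    refine sum_congr rfl fun z _ => ?_
    rw [← e_sub, ← sum_sub_distrib]
    push_cast
    simp only [mul_sub]
  simp only [hexpand]
  rw [integral_finsetSum _ fun z _ => Continuous.integrableOn_Icc (by fun_prop)]
  simp only [integral_Icc_e_sum_mul_intCast, ← sum_filter, sum_const, nsmul_eq_mul, mul_comm,
    funext_iff, Pi.zero_apply, sub_eq_zero]
  norm_cast

lemma integral_norm_expSum_pow {k : ℕ} (a : Fin k → ℝ) (n s : ℕ) (A : Finset ℕ) :
    ∫ α in Set.Icc a (a + n), ‖expSum A α‖ ^ (2 * s) = n ^ k * #(solutions s k A) := by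
  have h := integral_prod_expSum_mul_conj a n (fun _ : Fin s => A) fun _ => A
  simp only [Complex.mul_conj', prod_const, card_univ, Fintype.card_fin, norm_pow,
    Complex.ofReal_pow, ← pow_mul, mul_comm s] at h
  have key := integral_complex_ofReal (μ := volume.restrict (Set.Icc a (a + n)))
    (f := fun α => ‖expSum A α‖ ^ (2 * s))
  push_cast at key
  rw [h] at key
  exact_mod_cast key.symm

/-! ### Integral inequalities -/

lemma integral_rpow_mul_rpow_le {X : Type*} [MeasurableSpace X] {μ : Measure X} {f g : X → ℝ}
    (hf : Integrable f μ) (hg : Integrable g μ) (hf0 : ∀ x, 0 ≤ f x) (hg0 : ∀ x, 0 ≤ g x)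
    {θ : ℝ} (hθ0 : 0 < θ) (hθ1 : θ < 1) :
    ∫ x, f x ^ θ * g x ^ (1 - θ) ∂μ ≤ (∫ x, f x ∂μ) ^ θ * (∫ x, g x ∂μ) ^ (1 - θ) := by
  have hθ1' : 0 < 1 - θ := sub_pos.2 hθ1
  have hmem {h : X → ℝ} (hh : Integrable h μ) (hh0 : ∀ x, 0 ≤ h x) {c : ℝ} (hc : 0 < c) :
      MemLp (fun x => h x ^ c) (ENNReal.ofReal c⁻¹) μ := by
    have := (memLp_one_iff_integrable.2 hh).norm_rpow_div (ENNReal.ofReal c)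
    simpa [Real.norm_of_nonneg (hh0 _), ENNReal.toReal_ofReal hc.le,
      ENNReal.ofReal_inv_of_pos hc] using this
  have hpq : θ⁻¹.HolderConjugate (1 - θ)⁻¹ :=
    Real.holderConjugate_iff.2 ⟨(one_lt_inv₀ hθ0).2 hθ1, by simp⟩
  have key := integral_mul_le_Lp_mul_Lq_of_nonneg hpq
    (.of_forall fun x => Real.rpow_nonneg (hf0 x) _)
    (.of_forall fun x => Real.rpow_nonneg (hg0 x) _) (hmem hf hf0 hθ0) (hmem hg hg0 hθ1')
  simpa only [one_div, inv_inv, ← Real.rpow_mul (hf0 _), ← Real.rpow_mul (hg0 _),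
    mul_inv_cancel₀ hθ0.ne', mul_inv_cancel₀ hθ1'.ne', Real.rpow_one] using key

lemma norm_integral_mul_conj_mul_le {X : Type*} [MeasurableSpace X] {μ : Measure X} {u v : X → ℂ}
    {W : X → ℝ} (hW : ∀ x, 0 ≤ W x) (hu : Integrable (fun x => ‖u x‖ ^ 2 * W x) μ)
    (hv : Integrable (fun x => ‖v x‖ ^ 2 * W x) μ) :
    ‖∫ x, u x * conj (v x) * W x ∂μ‖ ≤
      (∫ x, ‖u x‖ ^ 2 * W x ∂μ + ∫ x, ‖v x‖ ^ 2 * W x ∂μ) / 2 := by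
  rw [← integral_add hu hv, ← integral_div]
  refine norm_integral_le_of_norm_le ((hu.add hv).div_const 2) (.of_forall fun x => ?_)
  rw [norm_mul, norm_mul, RCLike.norm_conj, Complex.norm_real, Real.norm_of_nonneg (hW x)]
  nlinarith [mul_nonneg (sq_nonneg (‖u x‖ - ‖v x‖)) (hW x)]

/-- Schur's test: after splitting the products by AM-GM, each square appears at most `B` times. -/
lemma integral_norm_sum_sq_mul_le {X σ : Type*} [MeasurableSpace X] {μ : Measure X} {R : Finset σ}
    {g : σ → X → ℂ} {W : X → ℝ} {rel : σ → σ → Prop} [DecidableRel rel] {B : ℕ}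
    (hW : ∀ x, 0 ≤ W x) (hrel : ∀ ρ ρ', rel ρ ρ' → rel ρ' ρ)
    (hint : ∀ ρ ∈ R, ∀ ρ' ∈ R, Integrable (fun x => g ρ x * conj (g ρ' x) * W x) μ)
    (horth : ∀ ρ ∈ R, ∀ ρ' ∈ R, ¬ rel ρ ρ' → ∫ x, g ρ x * conj (g ρ' x) * W x ∂μ = 0)
    (hB : ∀ ρ ∈ R, #{ρ' ∈ R | rel ρ ρ'} ≤ B) :
    ∫ x, ‖∑ ρ ∈ R, g ρ x‖ ^ 2 * W x ∂μ ≤ B * ∑ ρ ∈ R, ∫ x, ‖g ρ x‖ ^ 2 * W x ∂μ := by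
  set I : σ → ℝ := fun ρ => ∫ x, ‖g ρ x‖ ^ 2 * W x ∂μ
  have hI (ρ : σ) : 0 ≤ I ρ := integral_nonneg fun x => mul_nonneg (by positivity) (hW x)
  have hsq : ∀ ρ ∈ R, Integrable (fun x => ‖g ρ x‖ ^ 2 * W x) μ := fun ρ hρ => by
    have := (hint ρ hρ ρ hρ).re
    simpa [Complex.mul_conj', ← Complex.ofReal_pow, ← Complex.ofReal_mul] using this
  have hexpand : ((∫ x, ‖∑ ρ ∈ R, g ρ x‖ ^ 2 * W x ∂μ : ℝ) : ℂ) =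
      ∑ ρ ∈ R, ∑ ρ' ∈ R with rel ρ ρ', ∫ x, g ρ x * conj (g ρ' x) * W x ∂μ := by
    have hpt (x : X) : ((‖∑ ρ ∈ R, g ρ x‖ ^ 2 * W x : ℝ) : ℂ) =
        ∑ ρ ∈ R, ∑ ρ' ∈ R, g ρ x * conj (g ρ' x) * W x := by
      push_cast
      rw [← Complex.mul_conj', map_sum, sum_mul_sum, sum_mul]
      simp only [sum_mul]
    rw [← integral_complex_ofReal]
    simp only [hpt]
    rw [integral_finsetSum _ fun ρ hρ => integrable_finsetSum _ (hint ρ hρ)]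
    refine sum_congr rfl fun ρ hρ => ?_
    rw [integral_finsetSum _ (hint ρ hρ), sum_filter]
    refine sum_congr rfl fun ρ' hρ' => ?_
    split_ifs with h
    · rfl
    · exact horth ρ hρ ρ' hρ' h
  have hswap : ∑ ρ ∈ R, ∑ ρ' ∈ R with rel ρ ρ', I ρ' = ∑ ρ ∈ R, ∑ ρ' ∈ R with rel ρ ρ', I ρ :=
    sum_comm' fun ρ ρ' => by
      simp only [mem_filter]
      have := hrel ρ ρ'
      have := hrel ρ' ρ
      tauto
  calc ∫ x, ‖∑ ρ ∈ R, g ρ x‖ ^ 2 * W x ∂μ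
      ≤ ‖((∫ x, ‖∑ ρ ∈ R, g ρ x‖ ^ 2 * W x ∂μ : ℝ) : ℂ)‖ := by
        rw [Complex.norm_real]
        exact le_abs_self _
    _ ≤ ∑ ρ ∈ R, ∑ ρ' ∈ R with rel ρ ρ', (I ρ + I ρ') / 2 := by
        rw [hexpand]
        refine norm_sum_le_of_le _ fun ρ hρ => norm_sum_le_of_le _ fun ρ' hρ' => ?_
        exact norm_integral_mul_conj_mul_le hW (hsq ρ hρ) (hsq ρ' (mem_filter.1 hρ').1)
    _ = ∑ ρ ∈ R, ∑ ρ' ∈ R with rel ρ ρ', I ρ := by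
        simp only [add_div, sum_add_distrib, ← sum_div, hswap, add_halves]
    _ ≤ B * ∑ ρ ∈ R, I ρ := by
        rw [mul_sum]
        refine sum_le_sum fun ρ hρ => ?_
        rw [sum_const, nsmul_eq_mul]
        exact mul_le_mul_of_nonneg_right (by exact_mod_cast hB ρ hρ) (hI ρ)

/-! ### Broad-narrow decomposition -/

lemma norm_sum_le_two_mul_sum_large {σ E : Type*} [SeminormedAddCommGroup E] {p : ℕ}
    {S : Finset σ} (hS : #S ≤ p) (z : σ → E) :
    ‖∑ ζ ∈ S, z ζ‖ ≤ 2 * ∑ ζ ∈ S with ‖∑ ζ ∈ S, z ζ‖ ≤ 2 * p * ‖z ζ‖, ‖z ζ‖ := by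
  obtain rfl | hp := Nat.eq_zero_or_pos p
  · simp [card_eq_zero.1 (Nat.le_zero.1 hS)]
  set A := ‖∑ ζ ∈ S, z ζ‖
  have hsmall : ∑ ζ ∈ S with ¬ A ≤ 2 * p * ‖z ζ‖, ‖z ζ‖ ≤ A / 2 := calc
    _ ≤ #{ζ ∈ S | ¬ A ≤ 2 * p * ‖z ζ‖} • (A / (2 * p)) := by
      refine sum_le_card_nsmul _ _ _ fun ζ hζ => ?_
      rw [le_div_iff₀ (by positivity), mul_comm]
      exact (not_le.1 (mem_filter.1 hζ).2).le
    _ ≤ p * (A / (2 * p)) := by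
      rw [nsmul_eq_mul]
      have : #{ζ ∈ S | ¬ A ≤ 2 * p * ‖z ζ‖} ≤ p := (card_filter_le _ _).trans hS
      gcongr
    _ = A / 2 := by field_simp
  have hsplit : A ≤ ∑ ζ ∈ S with A ≤ 2 * p * ‖z ζ‖, ‖z ζ‖ +
      ∑ ζ ∈ S with ¬ A ≤ 2 * p * ‖z ζ‖, ‖z ζ‖ := by
    rw [sum_filter_add_sum_filter_not]
    exact norm_sum_le _ _
  linarith

lemma pow_le_of_le_sum_of_card_le {σ : Type*} {S T : Finset σ} (hTS : T ⊆ S) {k m : ℕ}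
    (hT : #T ≤ k) (hm : m ≠ 0) {f : σ → ℝ} (hf : ∀ ζ, 0 ≤ f ζ) {A : ℝ} (hA0 : 0 ≤ A)
    (hA : A ≤ 2 * ∑ ζ ∈ T, f ζ) : A ^ m ≤ (2 * k) ^ m * ∑ ζ ∈ S, f ζ ^ m := by
  obtain rfl | hne := T.eq_empty_or_nonempty
  · obtain rfl : A = 0 := le_antisymm (by simpa using hA) hA0
    rw [zero_pow hm]
    exact mul_nonneg (by positivity) (sum_nonneg fun ζ _ => pow_nonneg (hf ζ) m)
  obtain ⟨ζ, hζ, hmax⟩ := exists_max_image T f hne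
  have hle : A ≤ 2 * k * f ζ := by
    have hcard : #T * f ζ ≤ k * f ζ := by
      have := hf ζ
      gcongr
    have := sum_le_card_nsmul T f (f ζ) hmax
    rw [nsmul_eq_mul] at this
    linarith
  calc A ^ m ≤ (2 * k * f ζ) ^ m := by gcongr
    _ = (2 * k) ^ m * f ζ ^ m := mul_pow _ _ _
    _ ≤ _ := by
      gcongr
      exact single_le_sum (f := fun ζ => f ζ ^ m) (fun ζ _ => pow_nonneg (hf ζ) m) (hTS hζ)

lemma pow_mul_le_sum_injective {σ : Type*} [DecidableEq σ] {S T : Finset σ} (hTS : T ⊆ S)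
    {k : ℕ} (hT : k ≤ #T) (n : ℕ) {f : σ → ℝ} (hf : ∀ ζ, 0 ≤ f ζ) {A c : ℝ} (hA0 : 0 ≤ A)
    (hc : 0 ≤ c) (hA : ∀ ζ ∈ T, A ≤ c * f ζ) :
    A ^ (k * n) ≤ c ^ (k * n) *
      ∑ ζ ∈ Fintype.piFinset (fun _ : Fin k => S) with Function.Injective ζ,
        (∏ i, f (ζ i)) ^ n := by
  obtain ⟨ζ⟩ : Nonempty (Fin k ↪ T) := Function.Embedding.nonempty_of_card_le (by simpa using hT)
  have hprod : A ^ k ≤ c ^ k * ∏ i, f (ζ i) := calc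
    A ^ k = ∏ _i : Fin k, A := by simp
    _ ≤ ∏ i, (c * f (ζ i)) := prod_le_prod (fun _ _ => hA0) fun i _ => hA _ (ζ i).2
    _ = _ := by rw [prod_mul_distrib]; simp
  calc A ^ (k * n) ≤ (c ^ k * ∏ i, f (ζ i)) ^ n := by rw [pow_mul]; gcongr
    _ = c ^ (k * n) * (∏ i, f (ζ i)) ^ n := by rw [mul_pow, pow_mul]
    _ ≤ _ := by
      gcongr
      refine single_le_sum (f := fun ζ : Fin k → σ => (∏ i, f (ζ i)) ^ n)
        (fun ζ _ => pow_nonneg (prod_nonneg fun i _ => hf _) n) ?_ (a := fun i => (ζ i : σ))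
      simp only [mem_filter, Fintype.mem_piFinset]
      exact ⟨fun i => hTS (ζ i).2, Subtype.val_injective.comp ζ.injective⟩

/-- Either at least `k` of the terms are comparable to the average, or one of the few large terms
dominates the sum. -/
lemma norm_sum_pow_le_narrow_add_broad {σ E : Type*} [DecidableEq σ] [SeminormedAddCommGroup E]
    {k p n : ℕ} (hk : k ≠ 0) (hn : n ≠ 0) {S : Finset σ} (hS : #S ≤ p) (z : σ → E) :
    ‖∑ ζ ∈ S, z ζ‖ ^ (k * n) ≤ (2 * k) ^ (k * n) * ∑ ζ ∈ S, ‖z ζ‖ ^ (k * n) +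
      (2 * p) ^ (k * n) *
        ∑ ζ ∈ Fintype.piFinset (fun _ : Fin k => S) with Function.Injective ζ,
          (∏ i, ‖z (ζ i)‖) ^ n := by
  obtain hT | hT := le_total k #{ζ ∈ S | ‖∑ ζ ∈ S, z ζ‖ ≤ 2 * p * ‖z ζ‖}
  · refine (pow_mul_le_sum_injective (filter_subset _ S) hT n (fun ζ => norm_nonneg (z ζ))
      (norm_nonneg _) (by positivity) fun ζ hζ => (mem_filter.1 hζ).2).trans ?_
    exact le_add_of_nonneg_left (by positivity)
  · refine (pow_le_of_le_sum_of_card_le (filter_subset _ S) hT (mul_ne_zero hk hn)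
      (fun ζ => norm_nonneg (z ζ)) (norm_nonneg _)
      (norm_sum_le_two_mul_sum_large hS z)).trans ?_
    exact le_add_of_nonneg_right (by positivity)

lemma prod_le_sum_pow {ι : Type*} [Fintype ι] [Nonempty ι] {y : ι → ℝ} (hy : ∀ i, 0 ≤ y i) :
    ∏ i, y i ≤ ∑ i, y i ^ Fintype.card ι := by
  obtain ⟨j, -, hj⟩ := exists_max_image univ y univ_nonempty
  calc ∏ i, y i ≤ ∏ _i : ι, y j := prod_le_prod (fun i _ => hy i) hj
    _ = y j ^ Fintype.card ι := by simp
    _ ≤ _ := single_le_sum (f := fun i => y i ^ Fintype.card ι)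
      (fun i _ => pow_nonneg (hy i) _) (mem_univ j)

/-! ### Mean values over the torus -/

/-- The mean value of `g` over the torus `(ℝ / ℤ) ^ k`, as an integral over the unit cube. -/
noncomputable def torusMean {k : ℕ} (g : (Fin k → ℝ) → ℝ) : ℝ := ∫ α in Set.Icc 0 1, g α

section torusMean

variable {k : ℕ} {f g : (Fin k → ℝ) → ℝ}

lemma torusMean_nonneg (hf : ∀ α, 0 ≤ f α) : 0 ≤ torusMean f := integral_nonneg hf

lemma torusMean_mono (hf : Continuous f) (hg : Continuous g) (h : ∀ α, f α ≤ g α) :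
    torusMean f ≤ torusMean g :=
  integral_mono hf.integrableOn_Icc hg.integrableOn_Icc h

lemma torusMean_const_mul (c : ℝ) (f : (Fin k → ℝ) → ℝ) :
    torusMean (fun α => c * f α) = c * torusMean f := integral_const_mul c f

lemma torusMean_add (hf : Continuous f) (hg : Continuous g) :
    torusMean (fun α => f α + g α) = torusMean f + torusMean g :=
  integral_add hf.integrableOn_Icc hg.integrableOn_Icc

lemma torusMean_sum_le {σ : Type*} {S : Finset σ} {F : σ → (Fin k → ℝ) → ℝ} {B : ℝ}
    (hF : ∀ ρ ∈ S, Continuous (F ρ)) (hB : ∀ ρ ∈ S, torusMean (F ρ) ≤ B) :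
    torusMean (fun α => ∑ ρ ∈ S, F ρ α) ≤ #S * B := by
  rw [torusMean, integral_finsetSum _ fun ρ hρ => (hF ρ hρ).integrableOn_Icc, ← nsmul_eq_mul]
  exact sum_le_card_nsmul _ _ _ hB

lemma torusMean_rpow_mul_rpow_le (hf : Continuous f) (hg : Continuous g) (hf0 : ∀ α, 0 ≤ f α)
    (hg0 : ∀ α, 0 ≤ g α) {θ : ℝ} (hθ0 : 0 < θ) (hθ1 : θ < 1) :
    torusMean (fun α => f α ^ θ * g α ^ (1 - θ)) ≤ torusMean f ^ θ * torusMean g ^ (1 - θ) :=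
  integral_rpow_mul_rpow_le hf.integrableOn_Icc hg.integrableOn_Icc hf0 hg0 hθ0 hθ1

variable {E F : Type*} [NormedAddCommGroup E] [NormedAddCommGroup F] {u : (Fin k → ℝ) → E}
  {v : (Fin k → ℝ) → F}

lemma torusMean_norm_pow_mul_norm_pow_le (hk : 1 < k) (hu : Continuous u) (hv : Continuous v) :
    torusMean (fun α => ‖u α‖ ^ (2 * k) * ‖v α‖ ^ (2 * k)) ≤
      torusMean (fun α => ‖v α‖ ^ 2 * ‖u α‖ ^ (2 * k ^ 2)) ^ (k : ℝ)⁻¹ *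
        torusMean (fun α => ‖v α‖ ^ (2 * (k + 1))) ^ (1 - (k : ℝ)⁻¹) := by
  have hk' : (1 : ℝ) < k := by exact_mod_cast hk
  have hle : (k : ℝ)⁻¹ < 1 := inv_lt_one_of_one_lt₀ hk'
  refine le_of_eq_of_le (congrArg torusMean (funext fun α => ?_)) <| torusMean_rpow_mul_rpow_le
    (by fun_prop) (by fun_prop) (fun α => by positivity) (fun α => by positivity)
    (inv_pos.2 (by linarith)) hle
  have h1 : 2 * (k : ℝ)⁻¹ + (2 * (k + 1)) * (1 - (k : ℝ)⁻¹) = 2 * k := by field_simp; ring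
  have h2 : (2 * (k : ℝ) ^ 2) * (k : ℝ)⁻¹ = 2 * k := by field_simp
  rw [Real.mul_rpow (by positivity) (by positivity)]
  simp only [← Real.rpow_natCast, ← Real.rpow_mul (norm_nonneg _)]
  push_cast
  rw [mul_right_comm, ← Real.rpow_add_of_nonneg (norm_nonneg _) (by positivity)
    (mul_nonneg (by positivity) (by linarith)), h1, h2, mul_comm]

lemma torusMean_norm_sq_mul_norm_pow_le (hk : 0 < k) (hu : Continuous u) (hv : Continuous v) :
    torusMean (fun α => ‖v α‖ ^ 2 * ‖u α‖ ^ (2 * k ^ 2)) ≤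
      torusMean (fun α => ‖v α‖ ^ (2 * (k + 1))) ^ ((k : ℝ) + 1)⁻¹ *
        torusMean (fun α => ‖u α‖ ^ (2 * (k * (k + 1)))) ^ (1 - ((k : ℝ) + 1)⁻¹) := by
  have hk' : (0 : ℝ) < k := by exact_mod_cast hk
  refine le_of_eq_of_le (congrArg torusMean (funext fun α => ?_)) <| torusMean_rpow_mul_rpow_le
    (by fun_prop) (by fun_prop) (fun α => by positivity) (fun α => by positivity)
    (by positivity) (inv_lt_one_of_one_lt₀ (by linarith))
  simp only [← Real.rpow_natCast, ← Real.rpow_mul (norm_nonneg _)]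
  congr 2 <;> push_cast <;> field_simp
  ring

end torusMean

/-! ### Sums over residue classes -/

/-- The mean value `J_{s,k}(X)`: the number of solutions of the Vinogradov system of degree `k` in
`2s` variables from `{0, …, X - 1}`, which by translation invariance may replace `{1, …, X}`. -/
def J (s k X : ℕ) : ℕ := #(solutions s k (range X))

lemma J_mono (s k : ℕ) {X Y : ℕ} (h : X ≤ Y) : J s k X ≤ J s k Y :=
  card_le_card (solutions_mono s k (range_mono h))

lemma J_le_pow (s k X : ℕ) : J s k X ≤ X ^ (2 * s) := by
  refine (card_filter_le _ _).trans ?_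
  simp [card_product, two_mul, pow_add]

lemma torusMean_norm_expSum_pow {k : ℕ} (s : ℕ) (A : Finset ℕ) :
    torusMean (fun α : Fin k → ℝ => ‖expSum A α‖ ^ (2 * s)) = #(solutions s k A) := by
  simpa [torusMean] using integral_norm_expSum_pow (0 : Fin k → ℝ) 1 s A

/-- The residue class of `ξ` modulo `p ^ a` inside `{0, …, p ^ M - 1}`. -/
def residueClass (p M a ξ : ℕ) : Finset ℕ := {x ∈ range (p ^ M) | x ≡ ξ [MOD p ^ a]}

lemma mem_residueClass {p M a ξ x : ℕ} :
    x ∈ residueClass p M a ξ ↔ x < p ^ M ∧ x ≡ ξ [MOD p ^ a] := by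
  rw [residueClass, mem_filter, mem_range]

lemma residueClass_subset_image {p M a : ℕ} (hp : 0 < p) (ha : a ≤ M) (ξ : ℕ) :
    residueClass p M a ξ ⊆ (range (p ^ (M - a))).image (ξ % p ^ a + p ^ a * ·) := by
  intro x hx
  obtain ⟨hxM, hxξ⟩ := mem_residueClass.1 hx
  refine mem_image.2 ⟨x / p ^ a, mem_range.2 ?_, ?_⟩
  · rwa [Nat.div_lt_iff_lt_mul (pow_pos hp a), ← pow_add, Nat.sub_add_cancel ha]
  · rw [← hxξ, Nat.mod_add_div]

lemma card_residueClass_le {p M a : ℕ} (hp : 0 < p) (ha : a ≤ M) (ξ : ℕ) :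
    #(residueClass p M a ξ) ≤ p ^ (M - a) := by
  simpa using (card_le_card (residueClass_subset_image hp ha ξ)).trans card_image_le

/-- The exponential sum over a residue class modulo `p ^ a`, written `𝔣_a(α; ξ)` by Wooley. -/
noncomputable def classSum {k : ℕ} (p M a ξ : ℕ) (α : Fin k → ℝ) : ℂ :=
  expSum (residueClass p M a ξ) α

@[fun_prop]
lemma continuous_classSum {k : ℕ} (p M a ξ : ℕ) : Continuous (classSum (k := k) p M a ξ) :=
  continuous_expSum _

lemma classSum_eq_sum {k p M a b : ℕ} (hp : 0 < p) (hab : a ≤ b) (ξ : ℕ) (α : Fin k → ℝ) :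
    classSum p M a ξ α = ∑ ρ ∈ residueClass p b a ξ, classSum p M b ρ α := by
  simp only [classSum, expSum]
  rw [← sum_biUnion]
  · refine sum_congr ?_ fun _ _ => rfl
    ext x
    simp only [mem_biUnion, mem_residueClass]
    constructor
    · rintro ⟨hxM, hxξ⟩
      exact ⟨x % p ^ b, ⟨Nat.mod_lt _ (pow_pos hp b),
        ((Nat.mod_modEq x _).of_dvd (pow_dvd_pow p hab)).trans hxξ⟩, hxM, (Nat.mod_modEq x _).symm⟩
    · rintro ⟨ρ, ⟨-, hρξ⟩, hxM, hxρ⟩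
      exact ⟨hxM, (hxρ.of_dvd (pow_dvd_pow p hab)).trans hρξ⟩
  · refine fun ρ hρ ρ' hρ' hne => disjoint_left.2 fun x hx hx' => hne ?_
    exact Nat.ModEq.eq_of_lt_of_lt
      ((mem_residueClass.1 hx).2.symm.trans (mem_residueClass.1 hx').2)
      (mem_residueClass.1 hρ).1 (mem_residueClass.1 hρ').1

lemma torusMean_norm_classSum_pow_le (k s : ℕ) {p M a : ℕ} (hp : 0 < p) (ha : a ≤ M) (ξ : ℕ) :
    torusMean (fun α : Fin k → ℝ => ‖classSum p M a ξ α‖ ^ (2 * s)) ≤ J s k (p ^ (M - a)) := by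
  simp only [classSum]
  rw [torusMean_norm_expSum_pow, J,
    ← card_solutions_image_affine (pow_ne_zero a hp.ne') (ξ % p ^ a) s k (range _)]
  exact Nat.cast_le.2 (card_le_card (solutions_mono s k (residueClass_subset_image hp ha ξ)))

/-- The product of the exponential sums over the classes modulo `p ^ (a + 1)` of a transverse tuple,
written `𝔉_a(α; ξ)` by Wooley. -/
noncomputable def classProd {k : ℕ} (p M a : ℕ) (ξ : Fin k → ℕ) (α : Fin k → ℝ) : ℂ :=
  ∏ i, classSum p M (a + 1) (ξ i) α

@[fun_prop]
lemma continuous_classProd {k : ℕ} (p M a : ℕ) (ξ : Fin k → ℕ) :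
    Continuous (classProd p M a ξ) := by
  unfold classProd
  fun_prop

lemma classProd_eq_sum {k p M a b : ℕ} (hp : 0 < p) (hab : a + 1 ≤ b) (ξ : Fin k → ℕ)
    (α : Fin k → ℝ) :
    classProd p M a ξ α = ∑ ρ ∈ Fintype.piFinset (fun i => residueClass p b (a + 1) (ξ i)),
      ∏ i, classSum p M b (ρ i) α := by
  simp only [classProd, classSum_eq_sum hp hab, prod_univ_sum]

lemma norm_prod_pow_le {ι 𝕜 : Type*} [Fintype ι] [Nonempty ι] [NormedField 𝕜] (z : ι → 𝕜) (n : ℕ) :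
    ‖∏ i, z i‖ ^ n ≤ ∑ i, ‖z i‖ ^ (n * Fintype.card ι) := by
  simp only [norm_prod, ← prod_pow, pow_mul]
  exact prod_le_sum_pow fun i => by positivity

lemma torusMean_norm_classProd_pow_le {k p M a : ℕ} (hk : 0 < k) (hp : 0 < p) (ha : a + 1 ≤ M)
    (ξ : Fin k → ℕ) :
    torusMean (fun α => ‖classProd p M a ξ α‖ ^ (2 * (k + 1))) ≤
      k * J (k * (k + 1)) k (p ^ (M - (a + 1))) := by
  have : NeZero k := ⟨hk.ne'⟩
  calc torusMean (fun α => ‖classProd p M a ξ α‖ ^ (2 * (k + 1)))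
      ≤ torusMean fun α => ∑ i, ‖classSum p M (a + 1) (ξ i) α‖ ^ (2 * (k * (k + 1))) := by
        refine torusMean_mono (by fun_prop) (by fun_prop) fun α => ?_
        refine (norm_prod_pow_le _ _).trans_eq ?_
        rw [Fintype.card_fin, mul_assoc, mul_comm (k + 1)]
    _ ≤ #(univ : Finset (Fin k)) * J (k * (k + 1)) k (p ^ (M - (a + 1))) :=
        torusMean_sum_le (fun i _ => by fun_prop) fun i _ =>
          torusMean_norm_classSum_pow_le k _ hp ha (ξ i)
    _ = _ := by rw [card_univ, Fintype.card_fin]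

/-! ### Efficient congruencing -/

lemma powerSumsCongr_of_sum_add_sum_eq {κ : Type*} [Fintype κ] {k p b η : ℕ}
    {t t' ρ ρ' : Fin k → ℕ} {v v' : κ → ℕ} (ht : ∀ i, t i ≡ ρ i [MOD p ^ (k * b)])
    (ht' : ∀ i, t' i ≡ ρ' i [MOD p ^ (k * b)]) (hv : ∀ l, v l ≡ η [MOD p ^ b])
    (hv' : ∀ l, v' l ≡ η [MOD p ^ b])
    (h : ∀ j : Fin k, ∑ i, t i ^ (j + 1 : ℕ) + ∑ l, v l ^ (j + 1 : ℕ) =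
      ∑ i, t' i ^ (j + 1 : ℕ) + ∑ l, v' l ^ (j + 1 : ℕ)) :
    PowerSumsCongr p b η ρ ρ' := by
  intro j
  have hmod {t ρ : Fin k → ℕ} (ht : ∀ i, t i ≡ ρ i [MOD p ^ (k * b)]) :
      ∑ i, ((t i : ℤ) - η) ^ (j + 1 : ℕ) ≡ ∑ i, ((ρ i : ℤ) - η) ^ (j + 1 : ℕ)
        [ZMOD p ^ ((j + 1) * b)] := Int.ModEq.sum fun i _ => by
    have := Int.natCast_modEq_iff.2 ((ht i).of_dvd (pow_dvd_pow p (Nat.mul_le_mul_right b j.2)))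
    exact ((by exact_mod_cast this : (t i : ℤ) ≡ ρ i [ZMOD p ^ ((j + 1) * b)]).sub_right η).pow _
  have hzero {v : κ → ℕ} (hv : ∀ l, v l ≡ η [MOD p ^ b]) :
      ∑ l, ((v l : ℤ) - η) ^ (j + 1 : ℕ) ≡ 0 [ZMOD p ^ ((j + 1) * b)] := by
    refine Int.modEq_zero_iff_dvd.2 (dvd_sum fun l _ => ?_)
    rw [mul_comm, pow_mul]
    refine pow_dvd_pow_of_dvd ?_ _
    exact_mod_cast (Nat.modEq_iff_dvd.1 (hv l).symm)
  have hsum := sum_add_pow_modEq (m := p ^ ((j + 1) * b)) (x := fun l => ((Sum.elim t v l : ℕ) : ℤ))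
    (y := fun l => ((Sum.elim t' v' l : ℕ) : ℤ)) (fun i => by
      simp only [Fintype.sum_sum_type, Sum.elim_inl, Sum.elim_inr]
      exact congrArg (· % _) (by exact_mod_cast h i)) (-η) j
  simp only [Fintype.sum_sum_type, Sum.elim_inl, Sum.elim_inr, ← sub_eq_add_neg] at hsum
  have := (((hmod ht).symm.add (hzero hv).symm).trans hsum).trans ((hmod ht').add (hzero hv'))
  simpa using this

lemma integral_classSum_mul_conj_eq_zero {k s p M b : ℕ} {η ρ ρ' : Fin k → ℕ}
    (hη : ∀ i j, η i ≡ η j [MOD p ^ b]) (i₀ : Fin k) (hρ : ¬ PowerSumsCongr p b (η i₀) ρ ρ') :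
    ∫ α in Set.Icc (0 : Fin k → ℝ) 1, (∏ i, classSum p M (k * b) (ρ i) α) *
      conj (∏ i, classSum p M (k * b) (ρ' i) α) * (‖classProd p M b η α‖ ^ (2 * s) : ℝ) = 0 := by
  let A (ρ : Fin k → ℕ) : Fin k ⊕ Fin s × Fin k → Finset ℕ :=
    Sum.elim (fun i => residueClass p M (k * b) (ρ i)) fun l => residueClass p M (b + 1) (η l.2)
  have hA (ρ : Fin k → ℕ) (α : Fin k → ℝ) : ∏ l, expSum (A ρ l) α =
      (∏ i, classSum p M (k * b) (ρ i) α) * classProd p M b η α ^ s := by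
    simp [A, Fintype.prod_prod_type, classProd, classSum]
  have hint := integral_prod_expSum_mul_conj (0 : Fin k → ℝ) 1 (A ρ) (A ρ')
  rw [filter_false_of_mem, card_empty, Nat.cast_zero, mul_zero, Nat.cast_one, zero_add] at hint
  · rw [← hint]
    refine integral_congr_ae (.of_forall fun α => ?_)
    simp only [hA, map_mul, map_pow]
    push_cast
    rw [pow_mul, ← Complex.mul_conj']
    ring
  · intro z hz hsol
    simp only [mem_product, Fintype.mem_piFinset, Sum.forall, A, Sum.elim_inl, Sum.elim_inr,
      mem_residueClass] at hz
    have hmod {v : Fin s × Fin k → ℕ} (hv : ∀ l, v l < p ^ M ∧ v l ≡ η l.2 [MOD p ^ (b + 1)])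
        (l : Fin s × Fin k) : v l ≡ η i₀ [MOD p ^ b] :=
      ((hv l).2.of_dvd (pow_dvd_pow p b.le_succ)).trans (hη _ _)
    simp only [Fintype.sum_sum_type] at hsol
    exact hρ (powerSumsCongr_of_sum_add_sum_eq (fun i => (hz.1.1 i).2) (fun i => (hz.2.1 i).2)
      (hmod hz.1.2) (hmod hz.2.2) hsol)

lemma torusMean_classProd_mul_classProd_le_sum {k s p M a b : ℕ} [Fact p.Prime] (hk : 0 < k)
    (hkp : k < p) (hab : a ≤ b) (hakb : a + 1 ≤ k * b) {ξ η : Fin k → ℕ} (hξ : IsTransverse p a ξ)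
    (hη : IsTransverse p b η) :
    torusMean (fun α => ‖classProd p M a ξ α‖ ^ 2 * ‖classProd p M b η α‖ ^ (2 * s)) ≤
      (p ^ ((∑ j ∈ range k, j) * (a + b)) : ℕ) *
        ∑ ρ ∈ Fintype.piFinset (fun i => residueClass p (k * b) (a + 1) (ξ i)),
          torusMean (fun α : Fin k → ℝ =>
            ‖∏ i, classSum p M (k * b) (ρ i) α‖ ^ 2 * ‖classProd p M b η α‖ ^ (2 * s)) := by
  classical
  simp only [classProd_eq_sum (M := M) (Fact.out : p.Prime).pos hakb ξ]
  refine integral_norm_sum_sq_mul_le (rel := PowerSumsCongr p b (η ⟨0, hk⟩))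
    (fun α => by positivity) (fun _ _ => PowerSumsCongr.symm)
    (fun ρ _ ρ' _ => Continuous.integrableOn_Icc ?_)
    (fun ρ _ ρ' _ => integral_classSum_mul_conj_eq_zero hη.1 ⟨0, hk⟩) fun ρ _ => ?_
  · have := Complex.continuous_conj
    fun_prop
  · refine card_le_of_powerSumsCongr hkp hab hξ (fun ρ' hρ' i => ?_)
      fun ρ₁ h₁ ρ₂ h₂ => (mem_filter.1 h₁).2.symm.trans (mem_filter.1 h₂).2
    exact mem_residueClass.1 (Fintype.mem_piFinset.1 (mem_filter.1 hρ').1 i)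

/-- Wooley's congruencing step: replacing `ξ` modulo `p ^ (a + 1)` by classes modulo
`p ^ (k * b)` costs only the number of nonsingular solutions of the congruences. -/
lemma torusMean_classProd_mul_classProd_le {k s p M a b : ℕ} [Fact p.Prime] (hk : 0 < k)
    (hkp : k < p) (hab : a ≤ b) (hakb : a + 1 ≤ k * b) {ξ η : Fin k → ℕ} (hξ : IsTransverse p a ξ)
    (hη : IsTransverse p b η) {R : ℝ}
    (hR : ∀ ρ, torusMean (fun α : Fin k → ℝ =>
      ‖classSum p M (k * b) ρ α‖ ^ (2 * k) * ‖classProd p M b η α‖ ^ (2 * s)) ≤ R) :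
    torusMean (fun α => ‖classProd p M a ξ α‖ ^ 2 * ‖classProd p M b η α‖ ^ (2 * s)) ≤
      (p : ℝ) ^ ((∑ j ∈ range k, j) * (a + b) + k * (k * b - (a + 1))) * (k * R) := by
  have hp : 0 < p := (Fact.out : p.Prime).pos
  have : NeZero k := ⟨hk.ne'⟩
  have hR0 : 0 ≤ R := (torusMean_nonneg fun α => by positivity).trans (hR 0)
  have hterm (ρ : Fin k → ℕ) : torusMean (fun α : Fin k → ℝ =>
      ‖∏ i, classSum p M (k * b) (ρ i) α‖ ^ 2 * ‖classProd p M b η α‖ ^ (2 * s)) ≤ k * R := calc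
    _ ≤ torusMean fun α => ∑ i, ‖classSum p M (k * b) (ρ i) α‖ ^ (2 * k) *
          ‖classProd p M b η α‖ ^ (2 * s) := by
        refine torusMean_mono (by fun_prop) (by fun_prop) fun α => ?_
        rw [← sum_mul]
        gcongr
        simpa using norm_prod_pow_le (fun i => classSum p M (k * b) (ρ i) α) 2
    _ ≤ #(univ : Finset (Fin k)) * R :=
        torusMean_sum_le (fun i _ => by fun_prop) fun i _ => hR (ρ i)
    _ = k * R := by rw [card_univ, Fintype.card_fin]
  have hcard : #(Fintype.piFinset fun i => residueClass p (k * b) (a + 1) (ξ i)) ≤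
      p ^ (k * (k * b - (a + 1))) := by
    rw [Fintype.card_piFinset, mul_comm k (_ - _), pow_mul]
    simpa using prod_le_prod' (s := univ) fun i _ => card_residueClass_le hp hakb (ξ i)
  calc _ ≤ _ := torusMean_classProd_mul_classProd_le_sum hk hkp hab hakb hξ hη
    _ ≤ (p ^ ((∑ j ∈ range k, j) * (a + b)) : ℕ) *
        (#(Fintype.piFinset fun i => residueClass p (k * b) (a + 1) (ξ i)) * (k * R)) := by
      rw [← nsmul_eq_mul (#_)]
      gcongr
      exact sum_le_card_nsmul _ _ _ fun ρ _ => hterm ρ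
    _ ≤ (p ^ ((∑ j ∈ range k, j) * (a + b)) : ℕ) *
        ((p ^ (k * (k * b - (a + 1))) : ℕ) * (k * R)) := by
      gcongr
    _ = _ := by
      push_cast
      rw [pow_add, mul_assoc]

lemma isTransverse_of_mem_piFinset {k p b η : ℕ} {ζ : Fin k → ℕ}
    (hζ : ζ ∈ Fintype.piFinset fun _ => residueClass p (b + 1) b η) (hinj : Function.Injective ζ) :
    IsTransverse p b ζ := by
  simp only [Fintype.mem_piFinset, mem_residueClass] at hζ
  exact ⟨fun i j => (hζ i).2.trans (hζ j).2.symm,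
    fun i j hij => hinj (Nat.ModEq.eq_of_lt_of_lt hij (hζ i).1 (hζ j).1)⟩

lemma torusMean_mul_norm_classSum_pow_le {k p M b n : ℕ} (hk : k ≠ 0) (hp : 0 < p) (hn : n ≠ 0)
    {W : (Fin k → ℝ) → ℝ} (hW : Continuous W) (hW0 : 0 ≤ W) {R R' : ℝ} (hR0 : 0 ≤ R)
    (hR' : ∀ ζ, torusMean (fun α => W α * ‖classSum p M (b + 1) ζ α‖ ^ (k * n)) ≤ R')
    (hR : ∀ ζ, IsTransverse p b ζ → torusMean (fun α => W α * ‖classProd p M b ζ α‖ ^ n) ≤ R)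
    (η : ℕ) :
    torusMean (fun α => W α * ‖classSum p M b η α‖ ^ (k * n)) ≤
      (2 * k) ^ (k * n) * (p * R') + (2 * p) ^ (k * n) * (p ^ k * R) := by
  classical
  set S := residueClass p (b + 1) b η
  have hS : #S ≤ p := by
    simpa [Nat.add_sub_cancel_left] using card_residueClass_le hp (Nat.le_succ b) η
  set T := {ζ ∈ Fintype.piFinset (fun _ : Fin k => S) | Function.Injective ζ}
  have hT : #T ≤ p ^ k := by
    refine (card_filter_le _ _).trans ?_
    simpa using Nat.pow_le_pow_left hS k
  have hR'0 : 0 ≤ R' := (torusMean_nonneg fun α => mul_nonneg (hW0 α) (by positivity)).trans (hR' 0)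
  calc torusMean (fun α => W α * ‖classSum p M b η α‖ ^ (k * n))
      ≤ torusMean fun α =>
          (2 * k) ^ (k * n) * ∑ ζ ∈ S, W α * ‖classSum p M (b + 1) ζ α‖ ^ (k * n) +
          (2 * p) ^ (k * n) * ∑ ζ ∈ T, W α * ‖classProd p M b ζ α‖ ^ n := by
        refine torusMean_mono (by fun_prop) (by fun_prop) fun α => ?_
        rw [classSum_eq_sum hp b.le_succ]
        refine (mul_le_mul_of_nonneg_left
          (norm_sum_pow_le_narrow_add_broad hk hn hS _) (hW0 α)).trans_eq ?_
        simp only [classProd, norm_prod, T, ← mul_sum]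
        ring
    _ = (2 * k) ^ (k * n) *
            torusMean (fun α => ∑ ζ ∈ S, W α * ‖classSum p M (b + 1) ζ α‖ ^ (k * n)) +
          (2 * p) ^ (k * n) *
            torusMean (fun α => ∑ ζ ∈ T, W α * ‖classProd p M b ζ α‖ ^ n) := by
        rw [torusMean_add (by fun_prop) (by fun_prop), torusMean_const_mul, torusMean_const_mul]
    _ ≤ (2 * k) ^ (k * n) * (#S * R') + (2 * p) ^ (k * n) * (#T * R) := by
        gcongr
        · exact torusMean_sum_le (fun ζ _ => by fun_prop) fun ζ _ => hR' ζ
        · refine torusMean_sum_le (fun ζ _ => by fun_prop) fun ζ hζ => hR ζ ?_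
          obtain ⟨hζS, hinj⟩ := mem_filter.1 hζ
          exact isTransverse_of_mem_piFinset hζS hinj
    _ ≤ _ := by
        gcongr
        norm_cast

/-- Wooley's mixed mean value `I_{a,b}` for a transverse tuple modulo `p ^ (a + 1)` and a single
class modulo `p ^ b`. -/
noncomputable def meanI {k : ℕ} (p M a : ℕ) (ξ : Fin k → ℕ) (b η : ℕ) : ℝ :=
  torusMean fun α => ‖classProd p M a ξ α‖ ^ 2 * ‖classSum p M b η α‖ ^ (2 * k ^ 2)

/-- Wooley's mixed mean value `K_{a,b}` for two transverse tuples. -/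
noncomputable def meanK {k : ℕ} (p M a : ℕ) (ξ : Fin k → ℕ) (b : ℕ) (η : Fin k → ℕ) : ℝ :=
  torusMean fun α => ‖classProd p M a ξ α‖ ^ 2 * ‖classProd p M b η α‖ ^ (2 * k)

lemma meanI_nonneg {k : ℕ} (p M a : ℕ) (ξ : Fin k → ℕ) (b η : ℕ) : 0 ≤ meanI p M a ξ b η :=
  torusMean_nonneg fun α => by positivity

/-- The narrow part of `meanI` is a sum of `p` terms of the same shape with `b + 1` in place of `b`.
Going on for `H` steps trades the level `b + H`, where the trivial bound suffices, against the broad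
parts `meanK`. -/
lemma meanI_le_of_meanK_le {k p M a : ℕ} (hk : k ≠ 0) (hp : 0 < p) (ξ : Fin k → ℕ) {R : ℝ}
    (hR : 0 ≤ R) {H b : ℕ}
    (hK : ∀ h < H, ∀ ζ, IsTransverse p (b + h) ζ →
      (p : ℝ) ^ h * (p ^ (2 * k ^ 2 + k) * meanK p M a ξ (b + h) ζ) ≤ R)
    (hI : ∀ η, (p : ℝ) ^ H * meanI p M a ξ (b + H) η ≤ R) (η : ℕ) :
    meanI p M a ξ b η ≤ (2 * (2 * k) ^ (2 * k ^ 2)) ^ H * R := by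
  have hp0 : (0 : ℝ) < p := Nat.cast_pos.2 hp
  induction H generalizing b R η with
  | zero => simpa using hI η
  | succ H ih =>
    set C : ℝ := 2 * (2 * k) ^ (2 * k ^ 2)
    have hC : 1 ≤ C := by
      have hk1 : (1 : ℝ) ≤ k := Nat.one_le_cast.2 (Nat.one_le_iff_ne_zero.2 hk)
      have : (1 : ℝ) ≤ (2 * k) ^ (2 * k ^ 2) := one_le_pow₀ (by linarith)
      linarith
    have hnarrow (η' : ℕ) : meanI p M a ξ (b + 1) η' ≤ C ^ H * (R / p) := by
      refine ih (by positivity) (fun h hh ζ hζ => ?_) (fun η'' => ?_) η'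
      · rw [le_div_iff₀' hp0, ← mul_assoc, ← pow_succ', add_right_comm, add_assoc b]
        exact hK (h + 1) (by lia) ζ (by rwa [add_right_comm, add_assoc] at hζ)
      · rw [le_div_iff₀' hp0, ← mul_assoc, ← pow_succ', add_right_comm, add_assoc b]
        exact hI η''
    have hbroad (ζ : Fin k → ℕ) (hζ : IsTransverse p b ζ) :
        meanK p M a ξ b ζ ≤ R / p ^ (2 * k ^ 2 + k) := by
      rw [le_div_iff₀' (by positivity)]
      simpa using hK 0 H.succ_pos ζ hζ
    have hexp : k * (2 * k) = 2 * k ^ 2 := by ring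
    have hrec := torusMean_mul_norm_classSum_pow_le (n := 2 * k)
      (W := fun α => ‖classProd p M a ξ α‖ ^ 2) hk hp (by simpa using hk) (by fun_prop)
      (fun α => by positivity) (by positivity) (by simpa only [hexp, meanI] using hnarrow) hbroad η
    rw [hexp] at hrec
    calc meanI p M a ξ b η
        ≤ (2 * k) ^ (2 * k ^ 2) * (p * (C ^ H * (R / p))) +
          (2 * p) ^ (2 * k ^ 2) * (p ^ k * (R / p ^ (2 * k ^ 2 + k))) := hrec
      _ = (2 * k) ^ (2 * k ^ 2) * (C ^ H * R) + 2 ^ (2 * k ^ 2) * R := by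
          rw [pow_add, mul_pow (2 : ℝ) (p : ℝ)]
          field_simp
      _ ≤ (2 * k) ^ (2 * k ^ 2) * (C ^ H * R) + (2 * k) ^ (2 * k ^ 2) * (C ^ H * R) := by
          have hk1 : (1 : ℝ) ≤ k := Nat.one_le_cast.2 (Nat.one_le_iff_ne_zero.2 hk)
          gcongr
          · linarith
          · exact le_mul_of_one_le_left hR (one_le_pow₀ hC)
      _ = C ^ (H + 1) * R := by rw [pow_succ']; ring

/-- A power bound `J_{k(k+1),k}(X) ≤ A X ^ lam` for the mean value at the moment `k(k+1)`. -/
def MeanValueBound (k : ℕ) (lam A : ℝ) : Prop :=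
  ∀ X : ℕ, 1 ≤ X → (J (k * (k + 1)) k X : ℝ) ≤ A * (X : ℝ) ^ lam

lemma MeanValueBound.nonneg {k : ℕ} {lam A : ℝ} (h : MeanValueBound k lam A) : 0 ≤ A := by
  simpa using (Nat.cast_nonneg _).trans (h 1 le_rfl)

lemma MeanValueBound.mono {k : ℕ} {lam lam' A : ℝ} (h : MeanValueBound k lam A)
    (hlam : lam ≤ lam') : MeanValueBound k lam' A := fun X hX =>
  (h X hX).trans (mul_le_mul_of_nonneg_left
    (Real.rpow_le_rpow_of_exponent_le (Nat.one_le_cast.2 hX) hlam) h.nonneg)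

lemma MeanValueBound.J_pow_sub_le {k p M a : ℕ} {lam A : ℝ} (h : MeanValueBound k lam A)
    (hp : 0 < p) (ha : a ≤ M) :
    (J (k * (k + 1)) k (p ^ (M - a)) : ℝ) ≤ A * (p : ℝ) ^ (lam * (M - a)) := by
  refine (h (p ^ (M - a)) (Nat.one_le_pow _ _ hp)).trans_eq ?_
  rw [Nat.cast_pow, ← Real.rpow_natCast, ← Real.rpow_mul (Nat.cast_nonneg p), Nat.cast_sub ha,
    mul_comm lam]

lemma rpow_mul_rpow_le_of_le_mul_rpow {c P x y θ u v : ℝ} (hP : 0 < P) (hu0 : 0 ≤ u) (hv0 : 0 ≤ v)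
    (hu : u ≤ c * P ^ x) (hv : v ≤ c * P ^ y) (hθ0 : 0 ≤ θ) (hθ1 : θ ≤ 1) :
    u ^ θ * v ^ (1 - θ) ≤ c * P ^ (θ * x + (1 - θ) * y) := by
  have hc : 0 ≤ c := nonneg_of_mul_nonneg_left (hu0.trans hu) (by positivity)
  calc u ^ θ * v ^ (1 - θ) ≤ (c * P ^ x) ^ θ * (c * P ^ y) ^ (1 - θ) := by
        gcongr
    _ = c ^ (θ + (1 - θ)) * P ^ (θ * x + (1 - θ) * y) := by
        rw [Real.rpow_add_of_nonneg hc hθ0 (by linarith), Real.rpow_add hP,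
          Real.mul_rpow hc (by positivity), Real.mul_rpow hc (by positivity), ← Real.rpow_mul hP.le,
          ← Real.rpow_mul hP.le, mul_comm x, mul_comm y]
        ring
    _ = _ := by rw [add_sub_cancel, Real.rpow_one]

/-- The exponent of `p` in the bound for `meanI` at levels `a` and `b`. For `lam = 3k(k+1)/2` and
`g = 0` it is, up to the final constant, the expected one; `g` measures the saving over it that
efficient congruencing forces when `lam` is larger. -/
noncomputable def savingExponent (k lam g M a b : ℝ) : ℝ :=
  lam * M - 2 * k * a - (2 * k ^ 2 - k * (k + 1) / 2) * b - g * b + 2 * (2 * k ^ 2 + k)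

/-- The bound for the mean values `meanI` at scale `p ^ M`, uniform in the prime `p` and in the
levels, with a saving of `p ^ g` per level. -/
def MeanIBound (k : ℕ) (lam g : ℝ) (M D : ℕ) (C : ℝ) : Prop :=
  ∀ p, p.Prime → k < p → ∀ a b : ℕ, 1 ≤ b → k * a ≤ b → D * b ≤ M →
    ∀ ξ : Fin k → ℕ, IsTransverse p a ξ → ∀ η,
      meanI p M a ξ b η ≤ C * (p : ℝ) ^ savingExponent k lam g M a b

lemma MeanValueBound.meanIBound_zero {k : ℕ} {lam A : ℝ} (hk : 1 < k)
    (hA : MeanValueBound k lam A) (hlam : 3 / 2 * (k : ℝ) * (k + 1) ≤ lam) (M : ℕ) :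
    MeanIBound k lam 0 M 1 (k * A) := by
  intro p hp _ a b hb hab hbM ξ _ η
  have hk2 : (2 : ℝ) ≤ k := by exact_mod_cast hk
  have hp1 : (1 : ℝ) ≤ p := Nat.one_le_cast.2 hp.one_le
  have hab1 : a + 1 ≤ b := by nlinarith
  have hA0 := hA.nonneg
  set θ : ℝ := ((k : ℝ) + 1)⁻¹
  have hθ : θ * (k + 1) = 1 := inv_mul_cancel₀ (by positivity)
  have hθ0 : 0 ≤ θ := by positivity
  have hθ1 : θ ≤ 1 := inv_le_one_of_one_le₀ (by linarith)
  have hprod : torusMean (fun α => ‖classProd p M a ξ α‖ ^ (2 * (k + 1))) ≤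
      k * A * (p : ℝ) ^ (lam * (M - (a + 1 : ℕ))) := by
    refine (torusMean_norm_classProd_pow_le (by lia) hp.pos (by lia) ξ).trans ?_
    rw [mul_assoc]
    gcongr
    exact hA.J_pow_sub_le hp.pos (by lia)
  have hclass : torusMean (fun α : Fin k → ℝ => ‖classSum p M b η α‖ ^ (2 * (k * (k + 1)))) ≤
      k * A * (p : ℝ) ^ (lam * (M - b)) := by
    refine (torusMean_norm_classSum_pow_le k _ hp.pos (by lia) η).trans
      ((hA.J_pow_sub_le hp.pos (by lia)).trans ?_)
    gcongr
    exact le_mul_of_one_le_left hA0 (by linarith)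
  refine (torusMean_norm_sq_mul_norm_pow_le (by lia) (by fun_prop) (by fun_prop)).trans
    ((rpow_mul_rpow_le_of_le_mul_rpow (by positivity) (torusMean_nonneg fun α => by positivity)
      (torusMean_nonneg fun α => by positivity) hprod hclass hθ0 hθ1).trans ?_)
  gcongr
  have hlamθ : 3 / 2 * (k : ℝ) ≤ θ * lam := by nlinarith
  have habR : (k : ℝ) * a ≤ b := by exact_mod_cast hab
  have hsplit : θ * (lam * (M - (a + 1 : ℕ))) + (1 - θ) * (lam * (M - b)) =
      lam * M - θ * lam * (a + 1 + k * b) := by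
    have : 1 - θ = θ * k := by linarith
    rw [this]
    push_cast
    linear_combination lam * M * hθ
  have := mul_le_mul_of_nonneg_right hlamθ (by positivity : (0 : ℝ) ≤ a + 1 + k * b)
  rw [hsplit, savingExponent]
  nlinarith

lemma cast_sum_range_id (k : ℕ) : ((∑ j ∈ range k, j : ℕ) : ℝ) = k * (k - 1) / 2 := by
  rw [sum_range_id, ← Nat.choose_two_right, Nat.cast_choose_two]

lemma meanK_le {k p M a b D : ℕ} {lam A g C : ℝ} (hk : 1 < k) (hA : MeanValueBound k lam A)
    (hI : MeanIBound k lam g M D C) (hp : p.Prime) (hkp : k < p) (hb : 1 ≤ b) (hab : k * a ≤ b)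
    (hbM : b + 1 ≤ M) (hDb : D * (k * b) ≤ M) {ξ ζ : Fin k → ℕ} (hξ : IsTransverse p a ξ)
    (hζ : IsTransverse p b ζ) :
    meanK p M a ξ b ζ ≤ k * max C (k * A) * (p : ℝ) ^ (k * (k - 1) / 2 * (a + b) +
      k * (k * b - (a + 1)) + ((k : ℝ)⁻¹ * savingExponent k lam g M b (k * b) +
        (1 - (k : ℝ)⁻¹) * (lam * (M - (b + 1))))) := by
  have hp0 : (0 : ℝ) < p := Nat.cast_pos.2 hp.pos
  have := Fact.mk hp
  have hakb : a + 1 ≤ k * b := by nlinarith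
  have hclass (ρ : ℕ) :
      torusMean (fun α : Fin k → ℝ =>
        ‖classSum p M (k * b) ρ α‖ ^ (2 * k) * ‖classProd p M b ζ α‖ ^ (2 * k)) ≤
      max C (k * A) * (p : ℝ) ^ ((k : ℝ)⁻¹ * savingExponent k lam g M b (k * b) +
        (1 - (k : ℝ)⁻¹) * (lam * (M - (b + 1)))) := by
    refine (torusMean_norm_pow_mul_norm_pow_le hk (by fun_prop) (by fun_prop)).trans
      (rpow_mul_rpow_le_of_le_mul_rpow hp0 (meanI_nonneg p M b ζ (k * b) ρ)
        (torusMean_nonneg fun α => by positivity) ?_ ?_ (by positivity) (Nat.cast_inv_le_one k))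
    · refine (hI p hp hkp b (k * b) (by lia) le_rfl hDb ζ hζ ρ).trans ?_
      push_cast
      gcongr
      exact le_max_left _ _
    · refine (torusMean_norm_classProd_pow_le (by lia) hp.pos hbM ζ).trans ?_
      calc (k : ℝ) * J (k * (k + 1)) k (p ^ (M - (b + 1)))
          ≤ k * (A * (p : ℝ) ^ (lam * (M - (b + 1 : ℕ)))) := by
            gcongr
            exact hA.J_pow_sub_le hp.pos hbM
        _ ≤ max C (k * A) * (p : ℝ) ^ (lam * (M - (b + 1))) := by
            rw [← mul_assoc]
            push_cast
            gcongr
            exact le_max_right _ _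
  refine (torusMean_classProd_mul_classProd_le (by lia) hkp (by nlinarith) hakb hξ hζ
    hclass).trans_eq ?_
  have hcast : (((∑ j ∈ range k, j) * (a + b) + k * (k * b - (a + 1)) : ℕ) : ℝ) =
      k * (k - 1) / 2 * (a + b) + k * (k * b - (a + 1)) := by
    rw [Nat.cast_add, Nat.cast_mul, cast_sum_range_id, Nat.cast_mul, Nat.cast_sub hakb]
    push_cast
    rfl
  rw [← hcast, Real.rpow_add hp0 (Nat.cast _), Real.rpow_natCast]
  ring

lemma savingExponent_step {k a b h lam η g M : ℝ} (hk : 2 ≤ k) (hη : 0 ≤ η) (hg : 0 ≤ g)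
    (hlam : 3 / 2 * k * (k + 1) + η ≤ lam) (hab : k * a ≤ b) (hh : 0 ≤ h) (hb : 0 ≤ b) :
    h + (2 * k ^ 2 + k) + (k * (k - 1) / 2 * (a + b) + k * (k * b - (a + 1)) +
      (k⁻¹ * savingExponent k lam g M b (k * b) + (1 - k⁻¹) * (lam * (M - (b + 1))))) ≤
    savingExponent k lam (g + η * (1 - k⁻¹)) M a (b - h) := by
  have hk0 : k ≠ 0 := by linarith
  have hθ : 0 ≤ 1 - k⁻¹ := sub_nonneg.2 (inv_le_one_of_one_le₀ (by linarith))
  have hsplit : k⁻¹ * savingExponent k lam g M b (k * b) + (1 - k⁻¹) * (lam * (M - (b + 1))) =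
      lam * M - 2 * b - (2 * k ^ 2 - k * (k + 1) / 2) * b - g * b + (4 * k + 2) -
        (1 - k⁻¹) * lam * (b + 1) := by
    rw [savingExponent]
    field_simp
    ring
  have hsaving : 3 / 2 * (k ^ 2 - 1) + η * (1 - k⁻¹) ≤ (1 - k⁻¹) * lam := by
    calc _ = (1 - k⁻¹) * (3 / 2 * k * (k + 1) + η) := by
          field_simp
          ring
      _ ≤ _ := mul_le_mul_of_nonneg_left hlam hθ
  have hsaving_b := mul_le_mul_of_nonneg_right hsaving (by positivity : 0 ≤ b + 1)
  have hlevel := mul_le_mul_of_nonneg_left hab (by positivity : 0 ≤ (k + 1) / 2)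
  have hshift : 0 ≤ (2 * k ^ 2 - k * (k + 1) / 2 - 1) * h := mul_nonneg (by nlinarith) hh
  have hw : 0 ≤ η * (1 - k⁻¹) := mul_nonneg hη hθ
  have hgain : 0 ≤ (g + η * (1 - k⁻¹)) * h := by positivity
  rw [hsplit, savingExponent]
  generalize η * (1 - k⁻¹) = w at *
  generalize (1 - k⁻¹) * lam = y at *
  nlinarith

lemma pow_mul_pow_mul_meanK_le {k p M a b D h : ℕ} {lam A η g C : ℝ} (hk : 1 < k)
    (hA : MeanValueBound k lam A) (hI : MeanIBound k lam g M D C) (hη : 0 ≤ η) (hg : 0 ≤ g)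
    (hlam : 3 / 2 * (k : ℝ) * (k + 1) + η ≤ lam) (hp : p.Prime) (hkp : k < p) (hb : 1 ≤ b)
    (hab : k * a ≤ b) (hbM : b + h + 1 ≤ M) (hDb : D * (k * (b + h)) ≤ M) {ξ ζ : Fin k → ℕ}
    (hξ : IsTransverse p a ξ) (hζ : IsTransverse p (b + h) ζ) :
    (p : ℝ) ^ h * (p ^ (2 * k ^ 2 + k) * meanK p M a ξ (b + h) ζ) ≤ k * max C (k * A) *
      (p : ℝ) ^ savingExponent k lam (g + η * (1 - (k : ℝ)⁻¹)) M a b := by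
  have hp0 : (0 : ℝ) < p := Nat.cast_pos.2 hp.pos
  have hk2 : (2 : ℝ) ≤ k := by exact_mod_cast hk
  have hA0 := hA.nonneg
  have hexp := savingExponent_step (M := M) hk2 hη hg hlam
    (show (k : ℝ) * a ≤ b + h by exact_mod_cast hab.trans (Nat.le_add_right b h)) h.cast_nonneg
    (by positivity)
  rw [add_sub_cancel_right] at hexp
  have hK := meanK_le hk hA hI hp hkp (by lia) (by lia) hbM hDb hξ hζ
  push_cast at hK
  refine (mul_le_mul_of_nonneg_left (mul_le_mul_of_nonneg_left hK (by positivity))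
    (by positivity)).trans ?_
  calc _ = k * max C (k * A) * (p : ℝ) ^ ((h : ℝ) + (2 * k ^ 2 + k) +
        (k * (k - 1) / 2 * (a + (b + h)) + k * (k * (b + h) - (a + 1)) +
        ((k : ℝ)⁻¹ * savingExponent k lam g M (b + h) (k * (b + h)) +
          (1 - (k : ℝ)⁻¹) * (lam * (M - (b + h + 1)))))) := by
        rw [Real.rpow_add hp0 (h + (2 * k ^ 2 + k)), Real.rpow_add hp0 h, Real.rpow_natCast]
        rw [show (2 * (k : ℝ) ^ 2 + k) = (2 * k ^ 2 + k : ℕ) by push_cast; rfl, Real.rpow_natCast]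
        ring
    _ ≤ _ := by
        have hp1 : (1 : ℝ) ≤ p := Nat.one_le_cast.2 hp.one_le
        have := hA0.trans (le_mul_of_one_le_left hA0 (by linarith : (1 : ℝ) ≤ k))
        gcongr

/-- The last level `b + G b` of the recursion is so deep that the trivial bound suffices there. -/
lemma pow_mul_meanI_le {k p M a b G : ℕ} {lam A g : ℝ} (hk : 1 < k)
    (hA : MeanValueBound k lam A) (hlam : 3 / 2 * (k : ℝ) * (k + 1) ≤ lam) (hg : g ≤ G)
    (hp : p.Prime) (hkp : k < p) (hb : 1 ≤ b) (hab : k * a ≤ b) (hbM : b + G * b ≤ M)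
    {ξ : Fin k → ℕ} (hξ : IsTransverse p a ξ) (η : ℕ) :
    (p : ℝ) ^ (G * b) * meanI p M a ξ (b + G * b) η ≤
      k * A * (p : ℝ) ^ savingExponent k lam g M a b := by
  have hp0 : (0 : ℝ) < p := Nat.cast_pos.2 hp.pos
  have hp1 : (1 : ℝ) ≤ p := Nat.one_le_cast.2 hp.one_le
  have hk2 : (2 : ℝ) ≤ k := by exact_mod_cast hk
  have hA0 := hA.nonneg
  have hI := hA.meanIBound_zero hk hlam M p hp hkp a (b + G * b) (by lia) (by lia) (by lia) ξ hξ η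
  have hexp : ((G * b : ℕ) : ℝ) + savingExponent k lam 0 M a (b + G * b : ℕ) ≤
      savingExponent k lam g M a b := by
    have hgain := mul_le_mul_of_nonneg_right hg (Nat.cast_nonneg (α := ℝ) b)
    have hshift : 0 ≤ (2 * (k : ℝ) ^ 2 - k * (k + 1) / 2 - 2) * (G * b) :=
      mul_nonneg (by nlinarith) (by positivity)
    simp only [savingExponent]
    push_cast
    nlinarith
  calc _ ≤ (p : ℝ) ^ (G * b) * (k * A * (p : ℝ) ^ savingExponent k lam 0 M a (b + G * b : ℕ)) := by
        gcongr
    _ = k * A * (p : ℝ) ^ ((G * b : ℕ) + savingExponent k lam 0 M a (b + G * b : ℕ)) := by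
        rw [Real.rpow_add hp0, Real.rpow_natCast]
        ring
    _ ≤ _ := by gcongr

lemma MeanIBound.step {k M D G : ℕ} {lam A η g C : ℝ} (hk : 1 < k) (hA : MeanValueBound k lam A)
    (hI : MeanIBound k lam g M D C) (hη : 0 ≤ η) (hg : 0 ≤ g) (hD : 1 ≤ D)
    (hlam : 3 / 2 * (k : ℝ) * (k + 1) + η ≤ lam) (hG : g + η * (1 - (k : ℝ)⁻¹) ≤ G) :
    MeanIBound k lam (g + η * (1 - (k : ℝ)⁻¹)) M (D * k * (1 + G))
      ((2 * (2 * k) ^ (2 * k ^ 2)) ^ (G * M) * (k * max C (k * A))) := by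
  intro p hp hkp a b hb hab hbM ξ hξ η'
  have hk2 : (2 : ℝ) ≤ k := by exact_mod_cast hk
  have hA0 := hA.nonneg
  have hdeep : D * k * (b + G * b) ≤ M := by linarith
  have hDk : 2 ≤ D * k := by nlinarith
  have hbG : b + G * b ≤ M := by nlinarith
  have hC : k * A ≤ k * max C (k * A) := by
    gcongr
    exact (le_mul_of_one_le_left hA0 (by linarith)).trans (le_max_right _ _)
  have hC0 : 0 ≤ k * max C (k * A) := le_trans (by positivity) hC
  refine (meanI_le_of_meanK_le (by lia) hp.pos ξ (mul_nonneg hC0 (Real.rpow_nonneg p.cast_nonneg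
    (savingExponent k lam (g + η * (1 - (k : ℝ)⁻¹)) M a b))) (H := G * b) (fun h hh ζ hζ => ?_)
    (fun η'' => ?_) η').trans ?_
  · refine pow_mul_pow_mul_meanK_le hk hA hI hη hg hlam hp hkp hb hab ?_ ?_ hξ hζ
    · lia
    · rw [← mul_assoc]
      exact (Nat.mul_le_mul_left _ (by lia)).trans hdeep
  · refine (pow_mul_meanI_le hk hA (by linarith) hG hp hkp hb hab hbG hξ η'').trans ?_
    gcongr
  · rw [← mul_assoc]
    gcongr
    · exact one_le_mul_of_one_le_of_one_le one_le_two (one_le_pow₀ (by linarith))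
    · lia

lemma exists_meanIBound {k : ℕ} (hk : 1 < k) {η : ℝ} (hη : 0 ≤ η) (n : ℕ) :
    ∃ D, 1 ≤ D ∧ ∀ lam A : ℝ, MeanValueBound k lam A → 3 / 2 * (k : ℝ) * (k + 1) + η ≤ lam →
      ∀ M, ∃ C, MeanIBound k lam (n * (η * (1 - (k : ℝ)⁻¹))) M D C := by
  have hw : 0 ≤ η * (1 - (k : ℝ)⁻¹) := mul_nonneg hη (sub_nonneg.2 (Nat.cast_inv_le_one k))
  induction n with
  | zero =>
    refine ⟨1, le_rfl, fun lam A hA hlam M => ⟨k * A, ?_⟩⟩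
    simpa using hA.meanIBound_zero hk (by linarith) M
  | succ n ih =>
    obtain ⟨D, hD, ih⟩ := ih
    obtain ⟨G, hG⟩ := exists_nat_ge (n * (η * (1 - (k : ℝ)⁻¹)) + η * (1 - (k : ℝ)⁻¹))
    refine ⟨D * k * (1 + G), Nat.one_le_iff_ne_zero.2 (by positivity), fun lam A hA hlam M => ?_⟩
    obtain ⟨C, hI⟩ := ih lam A hA hlam M
    rw [Nat.cast_succ, add_one_mul]
    exact ⟨_, hI.step hk hA hη (by positivity) hD hlam hG⟩

lemma J_pow_le {k p M : ℕ} (hk : 0 < k) (hp : 0 < p) (hM : 1 ≤ M) {B : ℝ} (hB0 : 0 ≤ B)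
    (hB : ∀ ξ : Fin k → ℕ, IsTransverse p 0 ξ → ∀ η, meanI p M 0 ξ 1 η ≤ B) :
    (J (k * (k + 1)) k (p ^ M) : ℝ) ≤
      (2 * k) ^ (2 * (k * (k + 1))) * (p * J (k * (k + 1)) k (p ^ (M - 1))) +
      (2 * p) ^ (2 * (k * (k + 1))) * (p ^ k * (k * B)) := by
  have : NeZero k := ⟨hk.ne'⟩
  have hexp : k * (2 * (k + 1)) = 2 * (k * (k + 1)) := by ring
  have hprod (ζ : Fin k → ℕ) (hζ : IsTransverse p 0 ζ) :
      torusMean (fun α => 1 * ‖classProd p M 0 ζ α‖ ^ (2 * (k + 1))) ≤ k * B := by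
    calc torusMean (fun α => 1 * ‖classProd p M 0 ζ α‖ ^ (2 * (k + 1)))
        ≤ torusMean fun α => ∑ i,
            ‖classProd p M 0 ζ α‖ ^ 2 * ‖classSum p M 1 (ζ i) α‖ ^ (2 * k ^ 2) := by
          refine torusMean_mono (by fun_prop) (by fun_prop) fun α => ?_
          rw [one_mul, ← mul_sum, mul_add_one, add_comm, pow_add]
          gcongr
          refine (norm_prod_pow_le _ _).trans_eq ?_
          rw [Fintype.card_fin, mul_assoc, ← pow_two]
      _ ≤ #(univ : Finset (Fin k)) * B :=
          torusMean_sum_le (fun i _ => by fun_prop) fun i _ => hB ζ hζ (ζ i)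
      _ = k * B := by rw [card_univ, Fintype.card_fin]
  have hclass (ζ : ℕ) :
      torusMean (fun α : Fin k → ℝ => 1 * ‖classSum p M (0 + 1) ζ α‖ ^ (k * (2 * (k + 1)))) ≤
        J (k * (k + 1)) k (p ^ (M - 1)) := by
    simpa only [one_mul, hexp] using torusMean_norm_classSum_pow_le k _ hp hM ζ
  have htop : (J (k * (k + 1)) k (p ^ M) : ℝ) =
      torusMean fun α : Fin k → ℝ => 1 * ‖classSum p M 0 0 α‖ ^ (k * (2 * (k + 1))) := by
    have hres : residueClass p M 0 0 = range (p ^ M) := by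
      ext x
      simp [mem_residueClass, Nat.modEq_one]
    simp only [one_mul, hexp, classSum, hres, torusMean_norm_expSum_pow, J]
  rw [htop, ← hexp]
  exact torusMean_mul_norm_classSum_pow_le (W := fun _ => 1) hk.ne' hp (by lia) (by fun_prop)
    (fun _ => zero_le_one) (by positivity) hclass hprod 0

lemma exists_J_pow_le {k : ℕ} (hk : 1 < k) {η : ℝ} (hη : 0 < η) :
    ∃ M : ℕ, 1 ≤ M ∧ ∀ lam A : ℝ, MeanValueBound k lam A → 3 / 2 * (k : ℝ) * (k + 1) + η ≤ lam →
      ∃ C, 0 ≤ C ∧ ∀ p, p.Prime → k < p →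
        (J (k * (k + 1)) k (p ^ M) : ℝ) ≤ C * (p : ℝ) ^ (lam * M - 1) := by
  have hk2 : (2 : ℝ) ≤ k := by exact_mod_cast hk
  have hw : 0 < η * (1 - (k : ℝ)⁻¹) :=
    mul_pos hη (sub_pos.2 (inv_lt_one_of_one_lt₀ (by linarith)))
  obtain ⟨n, hn⟩ := exists_nat_ge
    ((2 * (k * (k + 1)) + k + 2 * (2 * (k : ℝ) ^ 2 + k) + 1) / (η * (1 - (k : ℝ)⁻¹)))
  rw [div_le_iff₀ hw] at hn
  obtain ⟨M, hM, hgain⟩ := exists_meanIBound hk hη.le n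
  refine ⟨M, hM, fun lam A hA hlam => ?_⟩
  obtain ⟨C, hI⟩ := hgain lam A hA hlam M
  set g := n * (η * (1 - (k : ℝ)⁻¹))
  have hA0 := hA.nonneg
  refine ⟨(2 * k) ^ (2 * (k * (k + 1))) * A + 2 ^ (2 * (k * (k + 1))) * (k * |C|), by positivity,
    fun p hp hkp => ?_⟩
  have hp0 : (0 : ℝ) < p := Nat.cast_pos.2 hp.pos
  have hp1 : (1 : ℝ) ≤ p := Nat.one_le_cast.2 hp.one_le
  have hB (ξ : Fin k → ℕ) (hξ : IsTransverse p 0 ξ) (ζ : ℕ) :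
      meanI p M 0 ξ 1 ζ ≤ |C| * (p : ℝ) ^ savingExponent k lam g M (0 : ℕ) (1 : ℕ) :=
    (hI p hp hkp 0 1 le_rfl (by lia) (by lia) ξ hξ ζ).trans
      (mul_le_mul_of_nonneg_right (le_abs_self C) (by positivity))
  refine (J_pow_le (by lia) hp.pos hM (by positivity) hB).trans ?_
  rw [add_mul, mul_assoc, mul_assoc]
  gcongr ?_ + ?_
  · refine mul_le_mul_of_nonneg_left ?_ (by positivity)
    calc (p : ℝ) * J (k * (k + 1)) k (p ^ (M - 1)) ≤ p * (A * (p : ℝ) ^ (lam * (M - (1 : ℕ)))) := by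
          gcongr
          exact hA.J_pow_sub_le hp.pos hM
      _ = A * (p : ℝ) ^ (1 + lam * (M - 1)) := by
          rw [Real.rpow_add hp0, Real.rpow_one]
          push_cast
          ring
      _ ≤ A * (p : ℝ) ^ (lam * M - 1) := by
          gcongr
          nlinarith
  · calc _ = 2 ^ (2 * (k * (k + 1))) * (k * |C| * (p : ℝ) ^ (((2 * (k * (k + 1)) + k : ℕ) : ℝ) +
          savingExponent k lam g M (0 : ℕ) (1 : ℕ))) := by
          rw [Real.rpow_add hp0, Real.rpow_natCast, mul_pow, pow_add (p : ℝ)]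
          ring
      _ ≤ 2 ^ (2 * (k * (k + 1))) * (k * |C| * (p : ℝ) ^ (lam * M - 1)) := by
          gcongr
          rw [savingExponent]
          push_cast
          nlinarith

lemma exists_prime_scale {k : ℕ} (hk : 0 < k) {y : ℝ} (hy : 1 ≤ y) :
    ∃ p, p.Prime ∧ k < p ∧ y ≤ p ∧ (p : ℝ) ≤ 4 * k * y := by
  have hm1 : 1 ≤ ⌈y⌉₊ := Nat.one_le_ceil_iff.2 (by linarith)
  obtain ⟨p, hp, hlt, hle⟩ := Nat.exists_prime_lt_and_le_two_mul (k * ⌈y⌉₊) (by positivity)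
  refine ⟨p, hp, (Nat.le_mul_of_pos_right k hm1).trans_lt hlt, ?_, ?_⟩
  · exact (Nat.le_ceil y).trans (Nat.cast_le.2 ((Nat.le_mul_of_pos_left _ hk).trans hlt.le))
  · calc (p : ℝ) ≤ 2 * (k * ⌈y⌉₊) := by exact_mod_cast hle
      _ ≤ 2 * (k * (2 * y)) := by
          gcongr
          linarith [Nat.ceil_lt_add_one (zero_le_one.trans hy)]
      _ = 4 * k * y := by ring

lemma exists_meanValueBound_sub_inv {k : ℕ} (hk : 1 < k) {η : ℝ} (hη : 0 < η) :
    ∃ M : ℕ, 1 ≤ M ∧ ∀ lam A : ℝ, MeanValueBound k lam A → 3 / 2 * (k : ℝ) * (k + 1) + η ≤ lam →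
      ∃ A', MeanValueBound k (lam - (M : ℝ)⁻¹) A' := by
  obtain ⟨M, hM, hprime⟩ := exists_J_pow_le hk hη
  refine ⟨M, hM, fun lam A hA hlam => ?_⟩
  obtain ⟨C, hC, hJ⟩ := hprime lam A hA hlam
  refine ⟨C * (4 * k : ℝ) ^ (lam * M - 1), fun X hX => ?_⟩
  have hk2 : (2 : ℝ) ≤ k := by exact_mod_cast hk
  have hM1 : (1 : ℝ) ≤ M := Nat.one_le_cast.2 hM
  have hlam1 : 1 ≤ lam := by nlinarith
  have hexp : 0 ≤ lam * M - 1 := by nlinarith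
  set y := (X : ℝ) ^ (M : ℝ)⁻¹
  have hy : 1 ≤ y := Real.one_le_rpow (Nat.one_le_cast.2 hX) (by positivity)
  obtain ⟨p, hp, hkp, hyp, hpy⟩ := exists_prime_scale (by lia : 0 < k) hy
  have hXp : X ≤ p ^ M := by
    have : (X : ℝ) ≤ (p : ℝ) ^ M := by
      calc (X : ℝ) = y ^ M := (Real.rpow_inv_natCast_pow X.cast_nonneg (by lia)).symm
        _ ≤ _ := by gcongr
    exact_mod_cast this
  calc (J (k * (k + 1)) k X : ℝ) ≤ J (k * (k + 1)) k (p ^ M) := Nat.cast_le.2 (J_mono _ _ hXp)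
    _ ≤ C * (p : ℝ) ^ (lam * M - 1) := hJ p hp hkp
    _ ≤ C * (4 * k * y) ^ (lam * M - 1) := by gcongr
    _ = C * (4 * k : ℝ) ^ (lam * M - 1) * (X : ℝ) ^ (lam - (M : ℝ)⁻¹) := by
        rw [Real.mul_rpow (by positivity) (by positivity), ← Real.rpow_mul X.cast_nonneg, mul_assoc]
        congr 3
        field_simp

theorem exists_meanValueBound {k : ℕ} (hk : 1 < k) {ε : ℝ} (hε : 0 < ε) :
    ∃ A, MeanValueBound k (3 / 2 * (k : ℝ) * (k + 1) + ε) A := by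
  obtain ⟨M, hM, himprove⟩ := exists_meanValueBound_sub_inv hk hε
  set t := 3 / 2 * (k : ℝ) * (k + 1) + ε
  set t₀ := ((2 * (k * (k + 1)) : ℕ) : ℝ)
  have htrivial : MeanValueBound k t₀ 1 := fun X _ => by
    rw [one_mul, Real.rpow_natCast]
    exact_mod_cast J_le_pow _ k X
  have hiter (n : ℕ) : ∃ A, MeanValueBound k (max t (t₀ - n * (M : ℝ)⁻¹)) A := by
    induction n with
    | zero => exact ⟨1, htrivial.mono (by simp)⟩
    | succ n ih =>
      obtain ⟨A, hA⟩ := ih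
      obtain ⟨A', hA'⟩ := himprove _ A hA (le_max_left _ _)
      refine ⟨A', hA'.mono ?_⟩
      rw [← max_sub_sub_right]
      refine max_le_max (sub_le_self _ (by positivity)) ?_
      push_cast
      linarith
  obtain ⟨n, hn⟩ := exists_nat_ge ((t₀ - t) * M)
  obtain ⟨A, hA⟩ := hiter n
  refine ⟨A, hA.mono (max_le le_rfl ?_)⟩
  rw [sub_le_comm, ← div_eq_mul_inv, le_div_iff₀ (by positivity)]
  exact hn

/-! ### Weyl differencing -/

lemma exists_add_le_lt_add_of_card {H : Finset ℕ} {N L m : ℕ} (hL : 0 < L) (hm : 0 < m)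
    (hH : ∀ h ∈ H, h < N) (hcard : (N / L + 1) * m ≤ #H) :
    ∃ x ∈ H, ∃ y ∈ H, y + m ≤ x + 1 ∧ x < y + L := by
  have hmaps : ∀ h ∈ H, h / L ∈ range (N / L + 1) := fun h hh =>
    mem_range.2 (Nat.lt_succ_of_le (Nat.div_le_div_right (hH h hh).le))
  obtain ⟨i, -, hi⟩ := exists_le_card_fiber_of_mul_le_card_of_maps_to hmaps
    ⟨0, by simp⟩ (by rwa [card_range])
  set B := {h ∈ H | h / L = i}
  have hB : B.Nonempty := card_pos.1 (hm.trans_le hi)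
  obtain ⟨hmaxH, hmax⟩ := mem_filter.1 (B.max'_mem hB)
  obtain ⟨hminH, hmin⟩ := mem_filter.1 (B.min'_mem hB)
  refine ⟨B.max' hB, hmaxH, B.min' hB, hminH, ?_, ?_⟩
  · have hcardB : #B ≤ B.max' hB + 1 - B.min' hB := by
      rw [← Nat.card_Icc]
      exact card_le_card fun x hx => mem_Icc.2 ⟨B.min'_le x hx, B.le_max' x hx⟩
    omega
  · have hlt := Nat.lt_mul_div_succ (B.max' hB) hL
    have hle := Nat.mul_div_le (B.min' hB) L
    rw [hmax, mul_add] at hlt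
    rw [hmin] at hle
    omega

lemma mul_eq_mul_of_abs_mul_sub_lt_one {θ : ℝ} {d Δ b g : ℤ}
    (h : |(Δ : ℝ)| * |d * θ - b| + |(d : ℝ)| * |Δ * θ - g| < 1) : d * g = Δ * b := by
  have hlt : |((d * g - Δ * b : ℤ) : ℝ)| < 1 := by
    calc |((d * g - Δ * b : ℤ) : ℝ)| = |Δ * (d * θ - b) - d * (Δ * θ - g)| := by
          push_cast; ring_nf
      _ ≤ |Δ * (d * θ - b)| + |d * (Δ * θ - g)| := abs_sub _ _
      _ < 1 := by rwa [abs_mul, abs_mul]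
  exact sub_eq_zero.1 (Int.abs_lt_one_iff.1 (by exact_mod_cast hlt))

lemma abs_sub_mul_sub_sub_le {θ ε : ℝ} {x y : ℕ} (hyx : y ≤ x) {a b : ℤ} (hx : |x * θ - a| ≤ ε)
    (hy : |y * θ - b| ≤ ε) : |(x - y : ℕ) * θ - (a - b : ℤ)| ≤ 2 * ε := by
  have hrw : (x - y : ℕ) * θ - (a - b : ℤ) = x * θ - a - (y * θ - b) := by
    push_cast [hyx]
    ring
  rw [hrw]
  linarith [abs_sub (x * θ - a) (y * θ - b)]

lemma exists_lt_sub_le_of_card {N A : ℕ} (hA : 1 ≤ A) (hN : 4 * A ≤ N) {H : Finset ℕ}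
    (hH : ∀ h ∈ H, h < N) (hcard : N ≤ A * #H) : ∃ x ∈ H, ∃ y ∈ H, y < x ∧ x - y ≤ 4 * A := by
  obtain ⟨x, hx, y, hy, hyx, hxy⟩ :=
    exists_add_le_lt_add_of_card (L := 4 * A) (by lia) two_pos hH <|
      Nat.le_of_mul_le_mul_left (by nlinarith [Nat.mul_div_le N (4 * A)] : A * _ ≤ A * _) hA
  exact ⟨x, hx, y, hy, by lia, by lia⟩

lemma exists_lt_mul_sub_le_of_card {N A : ℕ} (hA : 1 ≤ A) (hN : 200 * A ^ 2 ≤ N)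
    {H : Finset ℕ} (hH : ∀ h ∈ H, h < N) (hcard : N ≤ A * #H) :
    ∃ u ∈ H, ∃ v ∈ H, v < u ∧ 16 * A * (u - v) ≤ N ∧ N ≤ 200 * A ^ 2 * (u - v) := by
  obtain ⟨L, hL, hLN, hNL⟩ : ∃ L, 0 < L ∧ 16 * A * L ≤ N ∧ N ≤ 32 * A * L := by
    have hlt := Nat.lt_mul_div_succ N (by lia : 0 < 16 * A)
    have hpos : 0 < N / (16 * A) := Nat.div_pos (by nlinarith) (by lia)
    exact ⟨N / (16 * A), hpos, Nat.mul_div_le _ _, by nlinarith⟩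
  obtain ⟨m, hm, hmN, hNm⟩ : ∃ m, 5 ≤ m ∧ 33 * A ^ 2 * m ≤ N ∧ N ≤ 33 * A ^ 2 * (m + 1) :=
    ⟨N / (33 * A ^ 2), (Nat.le_div_iff_mul_le (by positivity)).2 (by nlinarith),
      Nat.mul_div_le _ _, (Nat.lt_mul_div_succ N (by positivity)).le⟩
  have hboxes : (N / L + 1) * m ≤ #H := by
    have hNdiv : N / L ≤ 32 * A := Nat.div_le_of_le_mul (by nlinarith)
    refine Nat.le_of_mul_le_mul_left (?_ : A * _ ≤ A * _) hA
    calc A * ((N / L + 1) * m) ≤ A * ((32 * A + A) * m) := by gcongr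
      _ ≤ A * #H := by linarith
  obtain ⟨u, hu, v, hv, hvu, huv⟩ := exists_add_le_lt_add_of_card hL (by lia) hH hboxes
  have hlt : u - v ≤ L := by lia
  have hle : m ≤ u - v + 1 := by lia
  exact ⟨u, hu, v, hv, by lia, by nlinarith, by nlinarith⟩

-- The approximations to `θ` read off from a close pair and from a far pair of elements of `H` are
-- proportional, so the close pair inherits the precision of the far one.
lemma exists_abs_mul_sub_le_of_card {N A : ℕ} (hA : 1 ≤ A) (hN : 200 * A ^ 2 ≤ N) {θ ε : ℝ}
    (hε : 0 ≤ ε) (hεA : ε * N ≤ A) {H : Finset ℕ} (hH : ∀ h ∈ H, h < N) (hcard : N ≤ A * #H)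
    (hθ : ∀ h ∈ H, ∃ c : ℤ, |h * θ - c| ≤ ε) :
    ∃ d : ℕ, 1 ≤ d ∧ d ≤ 4 * A ∧ ∃ b : ℤ, |d * θ - b| * N ≤ 1600 * A ^ 3 * ε := by
  choose! c hc using hθ
  obtain ⟨x, hx, y, hy, hyx, hd⟩ := exists_lt_sub_le_of_card hA (by nlinarith) hH hcard
  obtain ⟨u, hu, v, hv, hvu, hΔ, hNΔ⟩ := exists_lt_mul_sub_le_of_card hA hN hH hcard
  have hclose := abs_sub_mul_sub_sub_le hyx.le (hc x hx) (hc y hy)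
  have hfar := abs_sub_mul_sub_sub_le hvu.le (hc u hu) (hc v hv)
  have hd₀ : 1 ≤ x - y := by lia
  have hΔ₀ : 1 ≤ u - v := by lia
  generalize c x - c y = b, x - y = d at *
  generalize c u - c v = g, u - v = Δ at *
  refine ⟨d, hd₀, hd, b, ?_⟩
  have hA' : (0 : ℝ) < A := mod_cast hA
  have hd' : (d : ℝ) ≤ 4 * A := mod_cast hd
  have hεΔ : 16 * (ε * Δ) ≤ 1 := by
    have : 16 * (A : ℝ) * Δ ≤ N := mod_cast hΔ
    nlinarith
  have hεA' : 200 * (ε * A) ≤ 1 := by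
    have : 200 * (A : ℝ) ^ 2 ≤ N := mod_cast hN
    nlinarith
  have hprop : (d : ℝ) * g = Δ * b := by
    refine mod_cast mul_eq_mul_of_abs_mul_sub_lt_one (θ := θ) (d := d) (Δ := Δ) ?_
    simp only [Int.cast_natCast, Nat.abs_cast]
    calc Δ * |d * θ - b| + d * |Δ * θ - g| ≤ Δ * (2 * ε) + 4 * A * (2 * ε) := by gcongr
      _ < 1 := by linarith
  calc |d * θ - b| * N ≤ |d * θ - b| * (200 * A ^ 2 * Δ) := by gcongr; exact_mod_cast hNΔ
    _ = 200 * A ^ 2 * |Δ * (d * θ - b)| := by rw [abs_mul, Nat.abs_cast]; ring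
    _ = 200 * A ^ 2 * (d * |Δ * θ - g|) := by
      have hdist : (Δ : ℝ) * (d * θ - b) = d * (Δ * θ - g) := by linarith
      rw [hdist, abs_mul, Nat.abs_cast]
    _ ≤ 200 * A ^ 2 * (4 * A * (2 * ε)) := by gcongr
    _ = 1600 * A ^ 3 * ε := by ring

lemma e_add_intCast (x : ℝ) (n : ℤ) : e (x + n) = e x := by rw [e_add, e_intCast, mul_one]

lemma norm_e_sub_one (x : ℝ) : ‖e x - 1‖ = 2 * |Real.sin (Real.pi * x)| := by
  rw [e, show 2 * Real.pi * Complex.I * x = Complex.I * (2 * Real.pi * x : ℝ) by push_cast; ring,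
    Complex.norm_exp_I_mul_ofReal_sub_one, Real.norm_eq_abs, abs_mul, abs_two]
  ring_nf

lemma four_mul_abs_le_norm_e_sub_one {x : ℝ} (hx : |x| ≤ 1 / 2) : 4 * |x| ≤ ‖e x - 1‖ := by
  rw [norm_e_sub_one]
  have hsin := Real.mul_abs_le_abs_sin (x := Real.pi * x) (by
    rw [abs_mul, abs_of_pos Real.pi_pos]
    nlinarith [Real.pi_pos])
  rw [abs_mul, abs_of_pos Real.pi_pos, ← mul_assoc, div_mul_cancel₀ _ Real.pi_ne_zero] at hsin
  linarith

lemma norm_sum_e_le {ι : Type*} (s : Finset ι) (φ : ι → ℝ) : ‖∑ n ∈ s, e (φ n)‖ ≤ #s := by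
  simpa [norm_e] using norm_sum_le s fun n => e (φ n)

lemma norm_sum_range_sq_le (z : ℕ → ℂ) (N : ℕ) :
    ‖∑ n ∈ range N, z n‖ ^ 2 ≤
      2 * (∑ n ∈ range N, z n * conj (∑ m ∈ range (n + 1), z m)).re := by
  induction N with
  | zero => simp
  | succ N ih =>
    rw [sum_range_succ (fun n => z n * _), Complex.add_re, mul_add, sum_range_succ z]
    set S := ∑ n ∈ range N, z n
    have hsq : ‖S + z N‖ ^ 2 = ‖S‖ ^ 2 + 2 * (z N * conj (S + z N)).re - ‖z N‖ ^ 2 := by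
      simp only [← Complex.normSq_eq_norm_sq, Complex.normSq_apply, Complex.add_re,
        Complex.add_im, Complex.mul_re, Complex.conj_re, Complex.conj_im]
      ring
    nlinarith [sq_nonneg ‖z N‖]

lemma norm_sum_e_sq_le (φ : ℕ → ℝ) (N : ℕ) :
    ‖∑ n ∈ range N, e (φ n)‖ ^ 2 ≤
      2 * ∑ h ∈ range N, ‖∑ n ∈ range (N - h), e (φ (n + h) - φ n)‖ := by
  have hdiag : ∑ n ∈ range N, e (φ n) * conj (∑ m ∈ range (n + 1), e (φ m)) =
      ∑ h ∈ range N, ∑ n ∈ range (N - h), e (φ (n + h) - φ n) := by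
    rw [← sum_range_diag_flip N fun h n => e (φ (n + h) - φ n)]
    refine sum_congr rfl fun n _ => ?_
    rw [map_sum, mul_sum, ← sum_range_reflect]
    refine sum_congr rfl fun h hh => ?_
    have hhn : h ≤ n := Nat.lt_succ_iff.1 (mem_range.1 hh)
    rw [add_tsub_cancel_right, Nat.sub_add_cancel hhn, e_sub]
  calc ‖∑ n ∈ range N, e (φ n)‖ ^ 2
      ≤ 2 * (∑ h ∈ range N, ∑ n ∈ range (N - h), e (φ (n + h) - φ n)).re := by
        rw [← hdiag]
        exact norm_sum_range_sq_le _ N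
    _ ≤ 2 * ∑ h ∈ range N, ‖∑ n ∈ range (N - h), e (φ (n + h) - φ n)‖ := by
        gcongr
        exact (Complex.re_le_norm _).trans (norm_sum_le _ _)

lemma exists_abs_mul_sub_le_of_card_of_le {N M Q A : ℕ} (hA : 1 ≤ A) (hMQ : M * Q ≤ A)
    (hN : 200 * A ^ 2 ≤ N) {θ ε : ℝ} (hε : 0 ≤ ε) (hεA : ε * N ≤ A) {H : Finset ℕ}
    (hH : ∀ h ∈ H, h < N) (hcard : N ≤ M * #H)
    (hθ : ∀ h ∈ H, ∃ q : ℕ, 1 ≤ q ∧ q ≤ Q ∧ ∃ c : ℤ, |q * (h * θ) - c| ≤ ε) :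
    ∃ q : ℕ, 1 ≤ q ∧ q ≤ 4 * A * Q ∧ ∃ b : ℤ, |q * θ - b| * N ≤ 1600 * A ^ 3 * ε := by
  obtain ⟨h₀, hh₀⟩ : H.Nonempty := card_pos.1 (by by_contra!; nlinarith)
  choose! q hq₁ hqQ hc using hθ
  have hQ : 1 ≤ Q := (hq₁ h₀ hh₀).trans (hqQ h₀ hh₀)
  obtain ⟨q₀, hq₀, hfiber⟩ := exists_le_card_fiber_of_nsmul_le_card_of_maps_to (M := ℚ)
    (b := #H / Q) (fun h hh => mem_Icc.2 ⟨hq₁ h hh, hqQ h hh⟩) ⟨1, mem_Icc.2 ⟨le_rfl, hQ⟩⟩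
    (by rw [Nat.card_Icc, add_tsub_cancel_right, nsmul_eq_mul]; field_simp; rfl)
  rw [div_le_iff₀ (by positivity)] at hfiber
  obtain ⟨hq₀₁, hq₀Q⟩ := mem_Icc.1 hq₀
  set F := {h ∈ H | q h = q₀}
  have hF : N ≤ A * #F := by
    calc N ≤ M * #H := hcard
      _ ≤ M * (#F * Q) := by gcongr; exact_mod_cast hfiber
      _ = M * Q * #F := by ring
      _ ≤ A * #F := by gcongr
  obtain ⟨d, hd₁, hd, b, hb⟩ := exists_abs_mul_sub_le_of_card hA hN (θ := q₀ * θ) hε hεA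
    (fun h hh => hH h (mem_filter.1 hh).1) hF fun h hh => by
      obtain ⟨hhH, rfl⟩ := mem_filter.1 hh
      rw [mul_left_comm]
      exact hc h hhH
  refine ⟨d * q₀, Nat.mul_pos hd₁ hq₀₁, Nat.mul_le_mul hd hq₀Q, b, ?_⟩
  rwa [Nat.cast_mul, mul_assoc]

lemma le_four_mul_sq_mul_card_filter {φ : ℕ → ℝ} {N T : ℕ} (hT : 1 ≤ T) (hN : 1 ≤ N)
    (hφ : N ≤ T * ‖∑ n ∈ range N, e (φ n)‖) :
    N ≤ 4 * T ^ 2 * #{h ∈ range N |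
      (N : ℝ) ≤ 4 * T ^ 2 * ‖∑ n ∈ range (N - h), e (φ (n + h) - φ n)‖} := by
  set S : ℕ → ℝ := fun h => ‖∑ n ∈ range (N - h), e (φ (n + h) - φ n)‖
  set H := {h ∈ range N | (N : ℝ) ≤ 4 * T ^ 2 * S h}
  have hN' : (0 : ℝ) < N := mod_cast hN
  have hS (h : ℕ) : S h ≤ N := (norm_sum_e_le _ _).trans (by simp)
  have hsum : ∑ h ∈ range N, S h ≤ #H * N + N * (N / (4 * T ^ 2)) := by
    rw [← sum_filter_add_sum_filter_not (range N) fun h => (N : ℝ) ≤ 4 * T ^ 2 * S h]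
    gcongr
    · simpa using sum_le_card_nsmul H S N fun h _ => hS h
    · calc ∑ h ∈ range N with ¬(N : ℝ) ≤ 4 * T ^ 2 * S h, S h
          ≤ ∑ h ∈ range N with ¬(N : ℝ) ≤ 4 * T ^ 2 * S h, (N : ℝ) / (4 * T ^ 2) :=
            sum_le_sum fun h hh => by
              rw [le_div_iff₀' (by positivity)]
              exact (not_le.1 (mem_filter.1 hh).2).le
        _ ≤ ∑ h ∈ range N, (N : ℝ) / (4 * T ^ 2) :=
            sum_le_sum_of_subset_of_nonneg (filter_subset _ _) fun _ _ _ => by positivity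
        _ = N * (N / (4 * T ^ 2)) := by simp
  have hsq : (N : ℝ) ^ 2 ≤ T ^ 2 * (2 * (#H * N + N * (N / (4 * T ^ 2)))) := by
    calc (N : ℝ) ^ 2 ≤ (T * ‖∑ n ∈ range N, e (φ n)‖) ^ 2 := by gcongr
      _ = T ^ 2 * ‖∑ n ∈ range N, e (φ n)‖ ^ 2 := mul_pow _ _ _
      _ ≤ T ^ 2 * (2 * (#H * N + N * (N / (4 * T ^ 2)))) := by
        gcongr
        exact (norm_sum_e_sq_le φ N).trans (by gcongr)
  field_simp at hsq
  exact_mod_cast (by linarith : (N : ℝ) ≤ 4 * T ^ 2 * #H)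

lemma abs_sub_round_mul_pow_le (θ : ℝ) {N B : ℝ} (hN : 0 ≤ N) (hNB : N ≤ B) (k : ℕ) :
    |θ - round θ| * N ^ k ≤ B ^ k := by
  have hround : |θ - round θ| ≤ 1 := (abs_sub_round θ).trans (by norm_num)
  calc |θ - round θ| * N ^ k ≤ 1 * B ^ k := by gcongr
    _ = B ^ k := one_mul _

lemma coeff_taylor_sub_self {R : Type*} [CommRing R] {p : R[X]} {k : ℕ}
    (hp : p.natDegree ≤ k + 1) (r : R) :
    (Polynomial.taylor r p - p).coeff k = (k + 1) * r * p.coeff (k + 1) := by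
  have hderiv : (Polynomial.hasseDeriv k p).natDegree ≤ 1 := by
    have := Polynomial.natDegree_hasseDeriv_le p k
    lia
  rw [Polynomial.coeff_sub, Polynomial.taylor_coeff,
    Polynomial.eval_eq_sum_range' (Nat.lt_succ_of_le hderiv), sum_range_succ, sum_range_one,
    Polynomial.hasseDeriv_coeff, Polynomial.hasseDeriv_coeff, add_comm 1 k]
  simp
  ring

lemma natDegree_taylor_sub_self_le {R : Type*} [CommRing R] {p : R[X]} {k : ℕ}
    (hp : p.natDegree ≤ k + 1) (r : R) : (Polynomial.taylor r p - p).natDegree ≤ k := by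
  rw [Polynomial.natDegree_le_iff_coeff_eq_zero]
  intro i hi
  have hderiv : (Polynomial.hasseDeriv i p).natDegree ≤ 0 := by
    have := Polynomial.natDegree_hasseDeriv_le p i
    lia
  rw [Polynomial.coeff_sub, Polynomial.taylor_coeff,
    Polynomial.eq_C_of_natDegree_le_zero hderiv, Polynomial.eval_C, Polynomial.hasseDeriv_coeff]
  simp

/-- A Weyl-type bound: if the exponential sum over `n < N` of a real polynomial of degree at most
`k` is at least `N / T`, then `k!` times its coefficient of degree `k` has a rational
approximation with denominator and (suitably normalised) error at most `T ^ C`. -/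
def LeadingCoeffBound (k C : ℕ) : Prop :=
  ∀ T N : ℕ, 2 ≤ T → 1 ≤ N → ∀ p : ℝ[X], p.natDegree ≤ k →
    (N : ℝ) ≤ T * ‖∑ n ∈ range N, e (p.eval (n : ℝ))‖ →
    ∃ q : ℕ, 1 ≤ q ∧ q ≤ T ^ C ∧ ∃ a : ℤ, |q * (k.factorial * p.coeff k) - a| * (N : ℝ) ^ k ≤ T ^ C

lemma e_natCast_mul (n : ℕ) (x : ℝ) : e (n * x) = e x ^ n := by
  rw [e, e, ← Complex.exp_nat_mul]
  push_cast
  ring_nf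

lemma leadingCoeffBound_one : LeadingCoeffBound 1 1 := by
  intro T N hT _ p hp hS
  obtain ⟨a, b, rfl⟩ := Polynomial.exists_eq_X_add_C_of_natDegree_le_one hp
  have hgeom : ∑ n ∈ range N, e ((Polynomial.C a * Polynomial.X + Polynomial.C b).eval (n : ℝ)) =
      e b * ∑ n ∈ range N, e a ^ n := by
    rw [mul_sum]
    refine sum_congr rfl fun n _ => ?_
    simp [e_add, mul_comm a, e_natCast_mul, mul_comm (e b)]
  rw [hgeom, norm_mul, norm_e, one_mul] at hS
  have hround : 4 * |a - round a| ≤ ‖e a - 1‖ := by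
    have := four_mul_abs_le_norm_e_sub_one (abs_sub_round a)
    rwa [← e_add_intCast _ (round a), sub_add_cancel] at this
  have hbound : ‖∑ n ∈ range N, e a ^ n‖ * ‖e a - 1‖ ≤ 2 := by
    rw [← norm_mul, geom_sum_mul]
    refine (norm_sub_le _ _).trans_eq ?_
    simp [norm_e, one_add_one_eq_two]
  refine ⟨1, le_rfl, by lia, round a, ?_⟩
  calc |((1 : ℕ) : ℝ) * (Nat.factorial 1 * (Polynomial.C a * Polynomial.X + Polynomial.C b).coeff 1)
          - round a| * (N : ℝ) ^ 1
      = |a - round a| * N := by simp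
    _ ≤ |a - round a| * (T * ‖∑ n ∈ range N, e a ^ n‖) := by gcongr
    _ = T * (4 * |a - round a| * ‖∑ n ∈ range N, e a ^ n‖) / 4 := by ring
    _ ≤ T * (‖e a - 1‖ * ‖∑ n ∈ range N, e a ^ n‖) / 4 := by gcongr
    _ ≤ T * 2 / 4 := by
      gcongr
      rwa [mul_comm]
    _ ≤ (T : ℝ) ^ 1 := by linarith [T.cast_nonneg (α := ℝ)]

-- If the sums of the differenced polynomials of degree `k` are large for many shifts `h`, then
-- `h` times the new leading coefficient is well approximable for all those `h`.
lemma LeadingCoeffBound.exists_shift {k C T N : ℕ} (h : LeadingCoeffBound k C) (hT : 1 ≤ T)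
    (hN : 1 ≤ N) {p : ℝ[X]} (hp : p.natDegree ≤ k + 1)
    (hS : N ≤ T * ‖∑ n ∈ range N, e (p.eval (n : ℝ))‖) :
    ∃ H : Finset ℕ, (∀ h ∈ H, h < N) ∧ N ≤ 4 * T ^ 2 * #H ∧
      ∀ h ∈ H, ∃ q : ℕ, 1 ≤ q ∧ q ≤ (4 * T ^ 2) ^ C ∧ ∃ a : ℤ,
        |q * (h * ((k + 1).factorial * p.coeff (k + 1))) - a| ≤
          (4 * T ^ 2 : ℝ) ^ (C + k) / N ^ k := by
  refine ⟨_, fun h hh => mem_range.1 (mem_filter.1 hh).1, le_four_mul_sq_mul_card_filter hT hN hS,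
    fun m hm => ?_⟩
  obtain ⟨hmN, hSm⟩ := mem_filter.1 hm
  rw [mem_range] at hmN
  set r := Polynomial.taylor (m : ℝ) p - p with hr
  have hphase (n : ℕ) : p.eval ((n + m : ℕ) : ℝ) - p.eval (n : ℝ) = r.eval (n : ℝ) := by
    simp [hr, Polynomial.taylor_eval]
  simp only [hphase] at hSm
  have hle : ((N - m : ℕ) : ℝ) ≤ (4 * T ^ 2 : ℕ) * ‖∑ n ∈ range (N - m), e (r.eval (n : ℝ))‖ := by
    push_cast [hmN.le] at hSm ⊢
    linarith [m.cast_nonneg (α := ℝ)]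
  obtain ⟨q, hq₁, hq, a, ha⟩ := h (4 * T ^ 2) (N - m) (by nlinarith) (by lia) r
    (natDegree_taylor_sub_self_le hp _) hle
  refine ⟨q, hq₁, hq, a, ?_⟩
  have hcoeff : (k.factorial * r.coeff k : ℝ) = m * ((k + 1).factorial * p.coeff (k + 1)) := by
    rw [coeff_taylor_sub_self hp, Nat.factorial_succ]
    push_cast
    ring
  rw [hcoeff] at ha
  have hNm : (N : ℝ) ≤ 4 * T ^ 2 * (N - m : ℕ) :=
    hSm.trans (by gcongr; exact (norm_sum_e_le _ _).trans (by simp))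
  rw [le_div_iff₀ (by positivity)]
  calc _ ≤ |q * (m * ((k + 1).factorial * p.coeff (k + 1))) - a| *
        (4 * T ^ 2 * (N - m : ℕ)) ^ k := by gcongr
    _ = |q * (m * ((k + 1).factorial * p.coeff (k + 1))) - a| * ((N - m : ℕ) : ℝ) ^ k *
        (4 * T ^ 2) ^ k := by ring
    _ ≤ (4 * T ^ 2 : ℕ) ^ C * (4 * T ^ 2) ^ k := by gcongr
    _ = (4 * T ^ 2) ^ (C + k) := by push_cast; ring

lemma LeadingCoeffBound.exists_of_large {k C D T N : ℕ} (hk : 1 ≤ k) (h : LeadingCoeffBound k C)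
    (hD : C + k + 1 ≤ D) (hT : 1 ≤ T) (hN : 200 * ((4 * T ^ 2) ^ D) ^ 2 ≤ N) {p : ℝ[X]}
    (hp : p.natDegree ≤ k + 1) (hS : N ≤ T * ‖∑ n ∈ range N, e (p.eval (n : ℝ))‖) :
    ∃ q : ℕ, 1 ≤ q ∧ q ≤ 4 * (4 * T ^ 2) ^ (2 * D) ∧ ∃ b : ℤ,
      |q * ((k + 1).factorial * p.coeff (k + 1)) - b| * (N : ℝ) ^ (k + 1) ≤
        1600 * (4 * T ^ 2) ^ (4 * D) := by
  have hM : 1 ≤ 4 * T ^ 2 := by nlinarith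
  have hpow {i j : ℕ} (hij : i ≤ j) : (4 * T ^ 2) ^ i ≤ (4 * T ^ 2) ^ j :=
    Nat.pow_le_pow_right hM hij
  have hpow' {i j : ℕ} (hij : i ≤ j) : (4 * T ^ 2 : ℝ) ^ i ≤ (4 * T ^ 2) ^ j :=
    mod_cast hpow hij
  have hN₁ : 1 ≤ N := hN.trans' (Nat.one_le_iff_ne_zero.2 (by positivity))
  have hNk : (N : ℝ) ≤ N ^ k := mod_cast Nat.le_self_pow (by lia) N
  have : (0 : ℝ) < N := mod_cast hN₁
  obtain ⟨H, hHN, hcard, hH⟩ := h.exists_shift hT hN₁ hp hS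
  obtain ⟨q, hq₁, hq, b, hb⟩ := exists_abs_mul_sub_le_of_card_of_le
    (Nat.one_le_pow D _ hM) (by rw [← pow_succ']; exact hpow (by lia)) hN (by positivity)
    (by
      push_cast
      calc (4 * T ^ 2 : ℝ) ^ (C + k) / N ^ k * N ≤ (4 * T ^ 2) ^ (C + k) / N ^ k * N ^ k := by
            gcongr
        _ = (4 * T ^ 2) ^ (C + k) := div_mul_cancel₀ _ (by positivity)
        _ ≤ (4 * T ^ 2) ^ D := hpow' (by lia)) hHN hcard hH
  refine ⟨q, hq₁, ?_, b, ?_⟩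
  · calc q ≤ 4 * (4 * T ^ 2) ^ D * (4 * T ^ 2) ^ C := hq
      _ ≤ 4 * (4 * T ^ 2) ^ D * (4 * T ^ 2) ^ D := by gcongr _ * ?_; exact hpow (by lia)
      _ = 4 * (4 * T ^ 2) ^ (2 * D) := by ring
  · push_cast at hb
    calc |q * ((k + 1).factorial * p.coeff (k + 1)) - b| * (N : ℝ) ^ (k + 1)
        = |q * ((k + 1).factorial * p.coeff (k + 1)) - b| * N * N ^ k := by ring
      _ ≤ 1600 * ((4 * T ^ 2) ^ D) ^ 3 * ((4 * T ^ 2) ^ (C + k) / N ^ k) * N ^ k := by gcongr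
      _ = 1600 * ((4 * T ^ 2) ^ D) ^ 3 * (4 * T ^ 2) ^ (C + k) := by field_simp
      _ ≤ 1600 * ((4 * T ^ 2) ^ D) ^ 3 * (4 * T ^ 2) ^ D := by gcongr _ * ?_; exact hpow' (by lia)
      _ = 1600 * (4 * T ^ 2) ^ (4 * D) := by ring

lemma LeadingCoeffBound.succ {k C : ℕ} (hk : 1 ≤ k) (h : LeadingCoeffBound k C) :
    ∃ C', LeadingCoeffBound (k + 1) C' := by
  set D := C + k + 1
  refine ⟨(8 + 8 * D) * (k + 1) + (11 + 16 * D), fun T N hT _ p hp hS => ?_⟩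
  have hT' : (2 : ℝ) ≤ T := mod_cast hT
  have hT₁ : (1 : ℝ) ≤ T := by linarith
  have hM : 4 * (T : ℝ) ^ 2 ≤ T ^ 4 := by
    calc 4 * (T : ℝ) ^ 2 = 2 ^ 2 * T ^ 2 := by norm_num
      _ ≤ (T : ℝ) ^ 2 * T ^ 2 := by gcongr
      _ = (T : ℝ) ^ 4 := by ring
  rcases le_or_gt (200 * ((4 * T ^ 2) ^ D) ^ 2) N with hbig | hsmall
  · obtain ⟨q, hq₁, hq, b, hb⟩ := h.exists_of_large hk le_rfl (by lia) hbig hp hS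
    refine ⟨q, hq₁, ?_, b, hb.trans ?_⟩
    · rify at hq ⊢
      calc (q : ℝ) ≤ 2 ^ 2 * (4 * T ^ 2) ^ (2 * D) := by linarith
        _ ≤ T ^ 2 * (T ^ 4) ^ (2 * D) := by gcongr
        _ = T ^ (2 + 8 * D) := by ring
        _ ≤ T ^ ((8 + 8 * D) * (k + 1) + (11 + 16 * D)) := pow_le_pow_right₀ hT₁ (by lia)
    · calc (1600 : ℝ) * (4 * T ^ 2) ^ (4 * D) ≤ 2 ^ 11 * (4 * T ^ 2) ^ (4 * D) := by
            gcongr; norm_num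
        _ ≤ (T : ℝ) ^ 11 * (T ^ 4) ^ (4 * D) := by gcongr
        _ = (T : ℝ) ^ (11 + 16 * D) := by ring
        _ ≤ (T : ℝ) ^ ((8 + 8 * D) * (k + 1) + (11 + 16 * D)) := pow_le_pow_right₀ hT₁ (by lia)
  · have hN' : (N : ℝ) ≤ T ^ (8 + 8 * D) := by
      calc (N : ℝ) ≤ 200 * ((4 * T ^ 2) ^ D) ^ 2 := mod_cast hsmall.le
        _ ≤ 2 ^ 8 * ((4 * T ^ 2) ^ D) ^ 2 := by gcongr; norm_num
        _ ≤ T ^ 8 * ((T ^ 4) ^ D) ^ 2 := by gcongr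
        _ = T ^ (8 + 8 * D) := by ring
    refine ⟨1, le_rfl, Nat.one_le_pow _ _ (by lia), round ((k + 1).factorial * p.coeff (k + 1)), ?_⟩
    rw [Nat.cast_one, one_mul]
    calc _ ≤ ((T : ℝ) ^ (8 + 8 * D)) ^ (k + 1) :=
          abs_sub_round_mul_pow_le _ (Nat.cast_nonneg N) hN' _
      _ ≤ T ^ ((8 + 8 * D) * (k + 1) + (11 + 16 * D)) := by
          rw [← pow_mul]
          exact pow_le_pow_right₀ hT₁ (by lia)

lemma exists_leadingCoeffBound {k : ℕ} (hk : 1 ≤ k) : ∃ C, LeadingCoeffBound k C := by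
  induction k, hk using Nat.le_induction with
  | base => exact ⟨1, leadingCoeffBound_one⟩
  | succ k hk ih => exact ih.elim fun _ h => h.succ hk

/-! ### Rational approximation of all coefficients -/

lemma norm_sum_add_sub_sum_le {u : ℕ → ℂ} (hu : ∀ n, ‖u n‖ ≤ 1) (X s : ℕ) :
    ‖∑ n ∈ range X, u (n + s) - ∑ n ∈ range X, u n‖ ≤ 2 * s := by
  have hswap : ∑ n ∈ range X, u (n + s) - ∑ n ∈ range X, u n =
      ∑ n ∈ range s, u (X + n) - ∑ n ∈ range s, u n := by
    have h₁ := sum_range_add u X s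
    rw [add_comm X s, sum_range_add u s X] at h₁
    simp only [add_comm _ s]
    linear_combination h₁
  have hle (v : ℕ → ℂ) (hv : ∀ n, ‖v n‖ ≤ 1) : ‖∑ n ∈ range s, v n‖ ≤ s := by
    simpa using norm_sum_le_of_le (range s) fun n _ => hv n
  rw [hswap]
  linarith [norm_sub_le (∑ n ∈ range s, u (X + n)) (∑ n ∈ range s, u n),
    hle (fun n => u (X + n)) fun n => hu _, hle u hu]

lemma exists_le_norm_sum_progression {u : ℕ → ℂ} (hu : ∀ n, ‖u n‖ ≤ 1) {X q M : ℕ} {t : ℝ}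
    (hX : 0 < X) (h : X * t + 2 * (q * M) ≤ ‖∑ n ∈ range X, u n‖) :
    ∃ n₀ < X, M * t ≤ ‖∑ m ∈ range M, u (q * m + n₀)‖ := by
  have hshift : ‖∑ m ∈ range M, (∑ n ∈ range X, u (n + q * m) - ∑ n ∈ range X, u n)‖ ≤
      ∑ m ∈ range M, (2 * (q * M) : ℝ) := by
    refine norm_sum_le_of_le _ fun m hm => (norm_sum_add_sub_sum_le hu X (q * m)).trans ?_
    push_cast
    gcongr
    exact (mem_range.1 hm).le
  rw [sum_sub_distrib, sum_comm, sum_const, sum_const, card_range, nsmul_eq_mul, nsmul_eq_mul,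
    norm_sub_rev] at hshift
  have htri := norm_sub_norm_le ((M : ℂ) * ∑ n ∈ range X, u n)
    (∑ n ∈ range X, ∑ m ∈ range M, u (n + q * m))
  rw [norm_mul, Complex.norm_natCast] at htri
  have hsum : ∑ _ ∈ range X, (M * t : ℝ) ≤
      ∑ n ∈ range X, ‖∑ m ∈ range M, u (n + q * m)‖ := by
    rw [sum_const, card_range, nsmul_eq_mul]
    have := norm_sum_le (range X) fun n => ∑ m ∈ range M, u (n + q * m)
    nlinarith [M.cast_nonneg (α := ℝ)]
  obtain ⟨n₀, hn₀, hle⟩ := exists_le_of_sum_le (nonempty_range_iff.2 hX.ne') hsum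
  exact ⟨n₀, mem_range.1 hn₀, by simpa only [add_comm] using hle⟩

lemma pow_sub_pow_mul_le {n s X : ℝ} (hn : 0 ≤ n) (hs : 0 ≤ s) (hnX : n ≤ X) (hsX : s ≤ X)
    (i : ℕ) : ((n + s) ^ i - n ^ i) * X ≤ (2 ^ i - 1) * s * X ^ i := by
  induction i with
  | zero => simp
  | succ i ih =>
    have hpow : (0 : ℝ) ≤ 2 ^ i - 1 := sub_nonneg.2 (one_le_pow₀ one_le_two)
    have hX : 0 ≤ X := hn.trans hnX
    calc ((n + s) ^ (i + 1) - n ^ (i + 1)) * X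
        = (n + s) * (((n + s) ^ i - n ^ i) * X) + s * n ^ i * X := by ring
      _ ≤ (n + s) * ((2 ^ i - 1) * s * X ^ i) + s * X ^ i * X := by gcongr
      _ ≤ (X + X) * ((2 ^ i - 1) * s * X ^ i) + s * X ^ i * X := by gcongr
      _ = (2 ^ (i + 1) - 1) * s * X ^ (i + 1) := by ring

lemma exists_pow_sub_pow_eq_mul {X q m n₀ : ℕ} (hq : 1 ≤ q) (hn₀ : n₀ ≤ X) (hqm : q * m ≤ X)
    (i : ℕ) : ∃ w : ℕ, (q * m + n₀) ^ i = n₀ ^ i + q * w ∧ (w : ℝ) * X ≤ 2 ^ i * m * X ^ i := by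
  obtain ⟨w, hw⟩ : q ∣ (q * m + n₀) ^ i - n₀ ^ i :=
    (Dvd.intro m (by lia)).trans (Nat.sub_dvd_pow_sub_pow (q * m + n₀) n₀ i)
  have hle : n₀ ^ i ≤ (q * m + n₀) ^ i := by gcongr; lia
  have hw' : (q * m + n₀) ^ i = n₀ ^ i + q * w := by lia
  refine ⟨w, hw', ?_⟩
  have hpow := pow_sub_pow_mul_le (n := n₀) (s := q * m) (X := X) (by positivity) (by positivity)
    (mod_cast hn₀) (mod_cast hqm) i
  have hcast : ((n₀ : ℝ) + q * m) ^ i = n₀ ^ i + q * w := by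
    rw [add_comm]
    exact_mod_cast hw'
  have hq' : (0 : ℝ) < q := mod_cast hq
  rw [hcast] at hpow
  refine le_of_mul_le_mul_left (?_ : (q : ℝ) * _ ≤ q * _) hq'
  nlinarith [show (0 : ℝ) ≤ q * m * X ^ i by positivity]

lemma exists_abs_sum_sub_sub_intCast_le {I : Finset ℕ} {k X q m M n₀ : ℕ} {B : ℝ}
    {c : ℕ → ℝ} (hI : ∀ i ∈ I, i ≤ k) (hq : 1 ≤ q) (hn₀ : n₀ ≤ X) (hqM : q * M ≤ X) (hm : m ≤ M)
    (hB : 0 ≤ B) (hc : ∀ i ∈ I, ∃ a : ℤ, |q * c i - a| * (X : ℝ) ^ i ≤ B) :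
    ∃ z : ℤ, |∑ i ∈ I, c i * (q * m + n₀ : ℕ) ^ i - ∑ i ∈ I, c i * (n₀ : ℝ) ^ i - z| * X ≤
      #I * (2 ^ k * B * M) := by
  choose! a ha using hc
  choose w hw hwX using exists_pow_sub_pow_eq_mul (m := m) hq hn₀ (hqM.trans' (by gcongr))
  refine ⟨∑ i ∈ I, a i * w i, ?_⟩
  have hsum : ∑ i ∈ I, c i * (q * m + n₀ : ℕ) ^ i - ∑ i ∈ I, c i * (n₀ : ℝ) ^ i -
      (∑ i ∈ I, a i * w i : ℤ) = ∑ i ∈ I, (q * c i - a i) * w i := by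
    push_cast
    rw [← sum_sub_distrib, ← sum_sub_distrib]
    refine sum_congr rfl fun i _ => ?_
    have : ((q * m + n₀ : ℝ)) ^ i = n₀ ^ i + q * w i := mod_cast hw i
    rw [this]
    ring
  rw [hsum, ← nsmul_eq_mul, ← sum_const]
  calc |∑ i ∈ I, (q * c i - a i) * w i| * X ≤ (∑ i ∈ I, |(q * c i - a i) * w i|) * X := by
        gcongr
        exact abs_sum_le_sum_abs _ _
    _ = ∑ i ∈ I, |(q * c i - a i) * w i| * X := sum_mul _ _ _
    _ ≤ ∑ i ∈ I, 2 ^ k * B * M := sum_le_sum fun i hi => ?_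
  calc |(q * c i - a i) * w i| * X = |q * c i - a i| * (w i * X) := by
        rw [abs_mul, Nat.abs_cast, mul_assoc]
    _ ≤ |q * c i - a i| * (2 ^ i * m * X ^ i) := by gcongr _ * ?_; exact hwX i
    _ = 2 ^ i * (|q * c i - a i| * X ^ i) * m := by ring
    _ ≤ 2 ^ k * B * M := by
      gcongr
      · exact one_le_two
      · exact hI i hi
      · exact ha i hi

lemma norm_e_sub_e_le (x y : ℝ) (z : ℤ) : ‖e x - e y‖ ≤ 2 * Real.pi * |x - y - z| := by
  have hfactor : e x - e y = e y * (e (x - y - z) - 1) := by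
    have hshift := e_add_intCast (x - z) z
    rw [sub_add_cancel] at hshift
    rw [mul_sub, ← e_add, mul_one, hshift]
    ring_nf
  have hsin : |Real.sin (Real.pi * (x - y - z))| ≤ |Real.pi * (x - y - z)| := Real.abs_sin_le_abs
  rw [hfactor, norm_mul, norm_e, one_mul, norm_e_sub_one, mul_assoc]
  rw [abs_mul, abs_of_pos Real.pi_pos] at hsin
  linarith

-- On a progression whose modulus is a common denominator of the coefficients of degree at least
-- `l`, the part of `p` of degree at least `l` is nearly constant modulo one.
lemma norm_e_eval_sub_le {k l X q m M n₀ T : ℕ} {B : ℝ} {p : ℝ[X]} (hp : p.natDegree ≤ k)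
    (hl : l ≤ k + 1) (hX : 0 < X) (hT : 1 ≤ T) (hq : 1 ≤ q) (hn₀ : n₀ ≤ X) (hqM : q * M ≤ X)
    (hm : m ≤ M) (hB : 0 ≤ B) (hBM : 32 * 4 ^ (k + 1) * T * B * M ≤ X)
    (hc : ∀ i ∈ Ico l (k + 1), ∃ a : ℤ, |q * p.coeff i - a| * (X : ℝ) ^ i ≤ B) :
    ‖e (p.eval ((q * m + n₀ : ℕ) : ℝ)) - e (∑ i ∈ Ico l (k + 1), p.coeff i * (n₀ : ℝ) ^ i) *
      e (∑ i ∈ range l, p.coeff i * ((q * m + n₀ : ℕ) : ℝ) ^ i)‖ ≤ 1 / (4 * T) := by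
  obtain ⟨z, hz⟩ := exists_abs_sum_sub_sub_intCast_le
    (fun i hi => Nat.lt_succ_iff.1 (mem_Ico.1 hi).2) hq hn₀ hqM hm hB hc
  have hsplit : p.eval ((q * m + n₀ : ℕ) : ℝ) =
      ∑ i ∈ range l, p.coeff i * ((q * m + n₀ : ℕ) : ℝ) ^ i +
        ∑ i ∈ Ico l (k + 1), p.coeff i * ((q * m + n₀ : ℕ) : ℝ) ^ i := by
    rw [sum_range_add_sum_Ico _ hl, Polynomial.eval_eq_sum_range' (Nat.lt_succ_of_le hp)]
  rw [hsplit, e_add, mul_comm (e _), ← sub_mul, norm_mul, norm_e, mul_one]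
  refine (norm_e_sub_e_le _ _ z).trans ?_
  set δ := |∑ i ∈ Ico l (k + 1), p.coeff i * ((q * m + n₀ : ℕ) : ℝ) ^ i -
    ∑ i ∈ Ico l (k + 1), p.coeff i * (n₀ : ℝ) ^ i - z|
  have : 0 ≤ δ := abs_nonneg _
  have hcard : (#(Ico l (k + 1)) : ℝ) ≤ 2 ^ (k + 1) := by
    rw [Nat.card_Ico]
    exact_mod_cast (Nat.sub_le _ _).trans Nat.lt_two_pow_self.le
  have hX' : (0 : ℝ) < X := mod_cast hX
  have hδX : δ * (32 * T) * X ≤ 1 * X := calc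
    δ * (32 * T) * X = 32 * T * (δ * X) := by ring
    _ ≤ 32 * T * (#(Ico l (k + 1)) * (2 ^ k * B * M)) := by gcongr
    _ ≤ 32 * T * (2 ^ (k + 1) * (2 ^ (k + 1) * B * M)) := by
      gcongr
      · exact one_le_two
      · exact k.le_succ
    _ = 32 * 4 ^ (k + 1) * T * B * M := by
      rw [show (4 : ℝ) = 2 * 2 by norm_num, mul_pow]
      ring
    _ ≤ 1 * X := by rwa [one_mul]
  have hδT : δ * (32 * T) ≤ 1 := le_of_mul_le_mul_right hδX hX'
  rw [le_div_iff₀ (by positivity)]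
  calc 2 * Real.pi * δ * (4 * T) ≤ 2 * 4 * δ * (4 * T) := by gcongr; exact Real.pi_le_four
    _ ≤ 1 := by linarith

lemma exists_polynomial_eval_progression (p : ℝ[X]) (q r : ℝ) (j : ℕ) :
    ∃ Q : ℝ[X], Q.natDegree ≤ j + 1 ∧ Q.coeff (j + 1) = q ^ (j + 1) * p.coeff (j + 1) ∧
      ∀ x, Q.eval x = ∑ i ∈ range (j + 2), p.coeff i * (q * x + r) ^ i := by
  let P : ℝ[X] := ∑ i ∈ range (j + 2), Polynomial.monomial i (p.coeff i)
  have hP : P.natDegree ≤ j + 1 := Polynomial.natDegree_sum_le_of_forall_le _ _ fun i hi =>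
    (Polynomial.natDegree_monomial_le _).trans (Nat.lt_succ_iff.1 (mem_range.1 hi))
  have hPj : P.coeff (j + 1) = p.coeff (j + 1) := by
    simp [P, Polynomial.finsetSum_coeff, Polynomial.coeff_monomial]
  refine ⟨(Polynomial.taylor r P).comp (Polynomial.C q * Polynomial.X), ?_, ?_, fun x => ?_⟩
  · refine Polynomial.natDegree_comp_le.trans ?_
    rw [Polynomial.natDegree_taylor]
    have hlin : (Polynomial.C q * Polynomial.X).natDegree ≤ 1 :=
      (Polynomial.natDegree_C_mul_le _ _).trans Polynomial.natDegree_X_le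
    exact (Nat.mul_le_mul hP hlin).trans (mul_one _).le
  · have htaylor := Polynomial.coeff_eq_zero_of_natDegree_lt
      (Nat.lt_succ_of_le (natDegree_taylor_sub_self_le hP r))
    rw [Polynomial.coeff_sub, sub_eq_zero] at htaylor
    rw [Polynomial.comp_C_mul_X_coeff, htaylor, hPj, mul_comm]
  · rw [Polynomial.eval_comp, Polynomial.taylor_eval]
    simp [P, Polynomial.eval_finsetSum, add_comm]

lemma exists_low_degree_large_sum {k j X q M T : ℕ} {B : ℝ} {p : ℝ[X]} (hp : p.natDegree ≤ k)
    (hj : j + 1 ≤ k) (hX : 0 < X) (hT : 1 ≤ T) (hq : 1 ≤ q) (hqM : 8 * T * (q * M) ≤ X)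
    (hB : 0 ≤ B) (hBM : 32 * 4 ^ (k + 1) * T * B * M ≤ X)
    (hc : ∀ i ∈ Ico (j + 2) (k + 1), ∃ a : ℤ, |q * p.coeff i - a| * (X : ℝ) ^ i ≤ B)
    (hS : X ≤ T * ‖∑ n ∈ range X, e (p.eval (n : ℝ))‖) :
    ∃ Q : ℝ[X], Q.natDegree ≤ j + 1 ∧ Q.coeff (j + 1) = (q : ℝ) ^ (j + 1) * p.coeff (j + 1) ∧
      M ≤ (2 * T : ℕ) * ‖∑ m ∈ range M, e (Q.eval (m : ℝ))‖ := by
  have hT' : (0 : ℝ) < T := mod_cast hT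
  have hqM' : (8 * T * (q * M) : ℝ) ≤ X := mod_cast hqM
  obtain ⟨n₀, hn₀, hprog⟩ := exists_le_norm_sum_progression (u := fun n => e (p.eval (n : ℝ)))
    (X := X) (q := q) (M := M) (t := 3 / (4 * T)) (fun n => (norm_e _).le) hX (by
      rw [← div_le_iff₀' hT'] at hS
      refine le_trans ?_ hS
      rw [le_div_iff₀ hT']
      field_simp
      linarith)
  obtain ⟨Q, hQdeg, hQcoeff, hQ⟩ := exists_polynomial_eval_progression p q n₀ j
  refine ⟨Q, hQdeg, hQcoeff, ?_⟩
  set c := e (∑ i ∈ Ico (j + 2) (k + 1), p.coeff i * (n₀ : ℝ) ^ i)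
  have hterm : ∀ m ∈ range M,
      ‖e (p.eval ((q * m + n₀ : ℕ) : ℝ)) - c * e (Q.eval (m : ℝ))‖ ≤ 1 / (4 * T) := by
    intro m hm
    have := norm_e_eval_sub_le hp (by lia) hX hT hq hn₀.le (by nlinarith) (mem_range.1 hm).le hB
      hBM hc
    rw [hQ, show (q * m + n₀ : ℝ) = ((q * m + n₀ : ℕ) : ℝ) by push_cast; rfl]
    exact this
  have hdiff := norm_sum_le_of_le _ hterm
  rw [sum_sub_distrib, ← mul_sum, sum_const, card_range, nsmul_eq_mul] at hdiff
  have htri := norm_sub_norm_le (∑ m ∈ range M, e (p.eval ((q * m + n₀ : ℕ) : ℝ)))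
    (c * ∑ m ∈ range M, e (Q.eval (m : ℝ)))
  rw [norm_mul, norm_e, one_mul] at htri
  have hle : (M : ℝ) * (1 / (2 * T)) ≤ ‖∑ m ∈ range M, e (Q.eval (m : ℝ))‖ := by
    have : (M : ℝ) * (1 / (2 * T)) = M * (3 / (4 * T)) - M * (1 / (4 * T)) := by
      field_simp
      norm_num1
      ring
    linarith
  rw [mul_one_div, div_le_iff₀' (by positivity)] at hle
  exact_mod_cast hle

/-- The inverse form of Weyl's inequality for the coefficients of degree above `j`: if the
exponential sum over `n < X` of a real polynomial of degree at most `k` is at least `X / T`, then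
these coefficients have rational approximations with a common denominator and (suitably
normalised) errors at most `T ^ C`. -/
def CoeffsBound (k j C : ℕ) : Prop :=
  ∀ T X : ℕ, 2 ≤ T → 1 ≤ X → ∀ p : ℝ[X], p.natDegree ≤ k →
    (X : ℝ) ≤ T * ‖∑ n ∈ range X, e (p.eval (n : ℝ))‖ →
    ∃ q : ℕ, 1 ≤ q ∧ q ≤ T ^ C ∧ ∃ a : ℕ → ℤ,
      ∀ i ∈ Ioc j k, |q * p.coeff i - a i| * (X : ℝ) ^ i ≤ T ^ C

lemma LeadingCoeffBound.exists_of_coeffs {k j C C' g T X q : ℕ} {p : ℝ[X]}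
    (h : LeadingCoeffBound (j + 1) C') (hj : j + 1 ≤ k) (hg : C + 2 * k + 8 ≤ g) (hT : 2 ≤ T)
    (hTX : T ^ g ≤ X) (hp : p.natDegree ≤ k) (hq : 1 ≤ q) (hqT : q ≤ T ^ C)
    (hc : ∀ i ∈ Ico (j + 2) (k + 1), ∃ a : ℤ, |q * p.coeff i - a| * (X : ℝ) ^ i ≤ T ^ C)
    (hS : X ≤ T * ‖∑ n ∈ range X, e (p.eval (n : ℝ))‖) :
    ∃ q' : ℕ, 1 ≤ q' ∧ q' ≤ T ^ (2 * C') ∧ ∃ b : ℤ,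
      |q' * ((j + 1).factorial * ((q : ℝ) ^ (j + 1) * p.coeff (j + 1))) - b| * (X : ℝ) ^ (j + 1) ≤
        T ^ (2 * C' + (g + 1) * k) := by
  have hT₁ : 1 ≤ T := by lia
  have hTg : 0 < T ^ g := Nat.pow_pos hT₁
  set M := X / T ^ g
  have hM : 1 ≤ M := Nat.div_pos hTX hTg
  have hMX : T ^ g * M ≤ X := Nat.mul_div_le X _
  have hXM : X ≤ T ^ (g + 1) * M := calc
    X ≤ T ^ g * (M + 1) := (Nat.lt_mul_div_succ X hTg).le
    _ ≤ T ^ g * (T * M) := by gcongr; nlinarith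
    _ = T ^ (g + 1) * M := by ring
  have hsize : 32 * 4 ^ (k + 1) * T * T ^ C * M ≤ X := calc
    32 * 4 ^ (k + 1) * T * T ^ C * M = 2 ^ (2 * k + 7) * T ^ (C + 1) * M := by
      rw [show 4 = 2 ^ 2 by norm_num, ← pow_mul]
      ring
    _ ≤ T ^ (2 * k + 7) * T ^ (C + 1) * M := by gcongr
    _ ≤ T ^ g * M := by
      rw [← pow_add]
      gcongr
      lia
    _ ≤ X := hMX
  obtain ⟨Q, hQdeg, hQcoeff, hQ⟩ := exists_low_degree_large_sum (M := M) hp hj (hTg.trans_le hTX)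
    hT₁ hq (by
      calc 8 * T * (q * M) ≤ 8 * T * (T ^ C * M) := by gcongr
        _ = 8 * 1 * T * T ^ C * M := by ring
        _ ≤ 32 * 4 ^ (k + 1) * T * T ^ C * M := by gcongr <;> simp [Nat.one_le_pow]
        _ ≤ X := hsize) (by positivity) (mod_cast hsize) hc hS
  obtain ⟨q', hq', hq'T, b, hb⟩ := h (2 * T) M (by lia) hM Q hQdeg hQ
  have h2T : 2 * T ≤ T ^ 2 := by nlinarith
  refine ⟨q', hq', hq'T.trans ?_, b, ?_⟩
  · rw [pow_mul]
    gcongr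
  rw [hQcoeff] at hb
  set E := |q' * ((j + 1).factorial * ((q : ℝ) ^ (j + 1) * p.coeff (j + 1))) - b|
  calc E * (X : ℝ) ^ (j + 1) ≤ E * ((T ^ (g + 1) * M : ℕ) : ℝ) ^ (j + 1) := by gcongr
    _ = E * (M : ℝ) ^ (j + 1) * T ^ ((g + 1) * (j + 1)) := by
      push_cast
      ring
    _ ≤ ((T ^ 2 : ℕ) : ℝ) ^ C' * T ^ ((g + 1) * k) := by
      gcongr
      · exact hb.trans (by gcongr)
      · exact mod_cast hT₁
    _ = T ^ (2 * C' + (g + 1) * k) := by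
      push_cast
      ring

lemma factorial_le_pow {k j T : ℕ} (hj : j ≤ k) (hT : 2 ≤ T) : j.factorial ≤ T ^ (k * k) := calc
  j.factorial ≤ j ^ j := Nat.factorial_le_pow _
  _ ≤ (T ^ j) ^ j := by gcongr; exact (Nat.lt_pow_self (by lia)).le
  _ ≤ T ^ (k * k) := by rw [← pow_mul]; gcongr; lia

lemma CoeffsBound.exists_of_large {k j C C' g T X : ℕ} {p : ℝ[X]} (h : CoeffsBound k (j + 1) C)
    (h' : LeadingCoeffBound (j + 1) C') (hj : j + 1 ≤ k) (hg : C + 2 * k + 8 ≤ g) (hT : 2 ≤ T)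
    (hTX : T ^ g ≤ X) (hp : p.natDegree ≤ k)
    (hS : X ≤ T * ‖∑ n ∈ range X, e (p.eval (n : ℝ))‖) :
    ∃ q : ℕ, 1 ≤ q ∧ q ≤ T ^ (2 * C' + k * k + C * k + (g + 1) * k) ∧ ∃ a : ℕ → ℤ,
      ∀ i ∈ Ioc j k, |q * p.coeff i - a i| * (X : ℝ) ^ i ≤
        T ^ (2 * C' + k * k + C * k + (g + 1) * k) := by
  have hT₁ : 1 ≤ T := by lia
  have hT' : (1 : ℝ) ≤ T := mod_cast hT₁
  obtain ⟨q, hq, hqT, a, ha⟩ := h T X hT ((Nat.pow_pos hT₁).trans_le hTX) p hp hS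
  obtain ⟨q', hq', hq'T, b, hb⟩ := h'.exists_of_coeffs hj hg hT hTX hp hq hqT
    (fun i hi => ⟨a i, ha i (by simp only [mem_Ico, mem_Ioc] at hi ⊢; lia)⟩) hS
  have hu : q' * (j + 1).factorial * q ^ j ≤ T ^ (2 * C' + k * k + C * j) := by
    rw [pow_add, pow_add, pow_mul T C j]
    exact Nat.mul_le_mul (Nat.mul_le_mul hq'T (factorial_le_pow hj hT)) (Nat.pow_le_pow_left hqT _)
  set u := q' * (j + 1).factorial * q ^ j with hu_def
  have hCj : C * j + C ≤ C * k := Nat.mul_le_mul_left C hj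
  have hmul : T ^ (2 * C' + k * k + C * j) * T ^ C ≤
      T ^ (2 * C' + k * k + C * k + (g + 1) * k) := by
    rw [← pow_add]
    exact Nat.pow_le_pow_right hT₁ (by lia)
  have hu₁ : 1 ≤ u * q :=
    Nat.mul_pos (Nat.mul_pos (Nat.mul_pos hq' (Nat.factorial_pos _)) (Nat.pow_pos hq)) hq
  refine ⟨u * q, hu₁, (Nat.mul_le_mul hu hqT).trans hmul,
    fun i => if i = j + 1 then b else u * a i, fun i hi => ?_⟩
  beta_reduce
  split_ifs with hij
  · subst hij
    refine le_trans (le_of_eq ?_) (hb.trans (pow_le_pow_right₀ hT' (by lia)))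
    rw [hu_def]
    push_cast
    ring_nf
  · have hai := ha i (by simp only [mem_Ioc] at hi ⊢; lia)
    calc |((u * q : ℕ) : ℝ) * p.coeff i - ((u * a i : ℤ) : ℝ)| * (X : ℝ) ^ i
        = u * (|q * p.coeff i - a i| * (X : ℝ) ^ i) := by
          rw [← mul_assoc, ← abs_of_nonneg (Nat.cast_nonneg (α := ℝ) u), ← abs_mul]
          push_cast
          ring_nf
      _ ≤ (T ^ (2 * C' + k * k + C * j) : ℕ) * (T ^ C : ℕ) := by
          push_cast
          gcongr
          exact_mod_cast hu
      _ ≤ T ^ (2 * C' + k * k + C * k + (g + 1) * k) := mod_cast hmul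

lemma CoeffsBound.step {k j C C' : ℕ} (h : CoeffsBound k (j + 1) C)
    (h' : LeadingCoeffBound (j + 1) C') (hj : j + 1 ≤ k) : ∃ D, CoeffsBound k j D := by
  let g := C + 2 * k + 8
  refine ⟨2 * C' + k * k + C * k + (g + 1) * k, fun T X hT _ p hp hS => ?_⟩
  obtain hTX | hXT := le_total (T ^ g) X
  · exact h.exists_of_large h' hj le_rfl hT hTX hp hS
  have hT' : (1 : ℝ) ≤ T := by exact_mod_cast (by lia : 1 ≤ T)
  refine ⟨1, le_rfl, Nat.one_le_pow _ _ (by lia), fun i => round (p.coeff i), fun i hi => ?_⟩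
  rw [Nat.cast_one, one_mul]
  refine (abs_sub_round_mul_pow_le (p.coeff i) X.cast_nonneg
    (mod_cast hXT : (X : ℝ) ≤ T ^ g) i).trans ?_
  rw [← pow_mul]
  gcongr
  have : g * i ≤ g * k := Nat.mul_le_mul_left g (mem_Ioc.1 hi).2
  lia

theorem exists_coeffsBound (k : ℕ) : ∃ C, CoeffsBound k 0 C := by
  refine Nat.decreasingInduction (n := k) (motive := fun j _ => ∃ C, CoeffsBound k j C)
    (fun j hj ⟨C, hC⟩ => ?_) ⟨0, fun T X _ _ p _ _ => ⟨1, le_rfl, by simp, 0, by simp⟩⟩ k.zero_le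
  obtain ⟨C', hC'⟩ := exists_leadingCoeffBound (k := j + 1) (by lia)
  exact hC.step hC' hj

/-! ### Exponential sums near rational points -/

lemma sum_range_mul {R : Type*} [AddCommMonoid R] (f : ℕ → R) (N M : ℕ) :
    ∑ n ∈ range (N * M), f n = ∑ n ∈ range N, ∑ m ∈ range M, f (n * M + m) := by
  induction N with
  | zero => simp
  | succ N ih => rw [Nat.succ_mul, sum_range_add, ih, sum_range_succ]

lemma sum_range_add_of_periodic {R : Type*} [AddCancelCommMonoid R] {u : ℕ → R} {q : ℕ}
    (hu : Function.Periodic u q) (n : ℕ) :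
    ∑ m ∈ range q, u (n + m) = ∑ m ∈ range q, u m := by
  induction n with
  | zero => simp
  | succ n ih =>
    have hleft := sum_range_succ (fun m => u (n + m)) q
    rw [sum_range_succ' (fun m => u (n + m)) q, hu n, add_zero] at hleft
    rw [← ih, ← add_right_cancel hleft]
    simp only [add_assoc, add_comm 1]

/-- A one-sided Lipschitz condition at the points of `[0, 1]` for steps of length at most one, under
which Riemann sums of different mesh can be compared. -/
def IsStepLipschitz (D : ℝ) (g : ℝ → ℂ) : Prop :=
  ∀ x ∈ Set.Icc (0 : ℝ) 1, ∀ s ∈ Set.Icc (0 : ℝ) 1, ‖g (x + s) - g x‖ ≤ D * s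

section IsStepLipschitz

variable {D : ℝ} {g : ℝ → ℂ}

lemma IsStepLipschitz.nonneg (hg : IsStepLipschitz D g) : 0 ≤ D := by
  simpa using (norm_nonneg _).trans (hg 0 (by simp) 1 (by simp))

lemma IsStepLipschitz.norm_sum_sub_mul_sum_le (hg : IsStepLipschitz D g) {N M : ℕ} (hN : 0 < N)
    (hM : 0 < M) :
    ‖∑ n ∈ range (N * M), g (n / (N * M : ℕ)) - M * ∑ n ∈ range N, g (n / N)‖ ≤ D * M := by
  have hN' : (0 : ℝ) < N := mod_cast hN
  have : (0 : ℝ) < M := mod_cast hM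
  have hN₁ : (1 : ℝ) ≤ N := mod_cast hN
  have hD := hg.nonneg
  have hterm : ∀ n ∈ range N, ∀ m ∈ range M,
      ‖g ((n * M + m : ℕ) / (N * M : ℕ)) - g (n / N)‖ ≤ D * (1 / N) := by
    intro n hn m hm
    have hn' : (n : ℝ) ≤ N := mod_cast (mem_range.1 hn).le
    have hm' : (m : ℝ) ≤ M := mod_cast (mem_range.1 hm).le
    have hsplit : ((n * M + m : ℕ) : ℝ) / (N * M : ℕ) = n / N + m / (N * M) := by
      push_cast
      field_simp
    have hstep : (m : ℝ) / (N * M) ≤ 1 / N := by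
      rw [div_le_div_iff₀ (by positivity) hN']
      nlinarith
    rw [hsplit]
    refine (hg _ ⟨by positivity, (div_le_one hN').2 hn'⟩ _
      ⟨by positivity, hstep.trans ((div_le_one hN').2 hN₁)⟩).trans ?_
    gcongr
  have hsum := norm_sum_le_of_le _ fun n hn => norm_sum_le_of_le _ (hterm n hn)
  simp only [sum_sub_distrib, sum_const, card_range, nsmul_eq_mul] at hsum
  rw [sum_range_mul, mul_sum]
  refine hsum.trans (le_of_eq ?_)
  field_simp

lemma IsStepLipschitz.norm_average_sub_average_le (hg : IsStepLipschitz D g) {X Y : ℕ}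
    (hX : 0 < X) (hY : 0 < Y) :
    ‖(∑ n ∈ range X, g (n / X)) / X - (∑ n ∈ range Y, g (n / Y)) / Y‖ ≤ D * (1 / X + 1 / Y) := by
  have : (0 : ℝ) < X := mod_cast hX
  have : (0 : ℝ) < Y := mod_cast hY
  have hX₀ : (X : ℂ) ≠ 0 := mod_cast hX.ne'
  have hY₀ : (Y : ℂ) ≠ 0 := mod_cast hY.ne'
  have hYX := hg.norm_sum_sub_mul_sum_le hY hX
  rw [mul_comm Y X] at hYX
  set S := ∑ n ∈ range (X * Y), g (n / (X * Y : ℕ))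
  have hdiff : (∑ n ∈ range X, g (n / X)) / X - (∑ n ∈ range Y, g (n / Y)) / Y =
      ((S - X * ∑ n ∈ range Y, g (n / Y)) - (S - Y * ∑ n ∈ range X, g (n / X))) / (X * Y) := by
    field_simp
    ring
  rw [hdiff, norm_div, norm_mul, Complex.norm_natCast, Complex.norm_natCast,
    div_le_iff₀ (by positivity)]
  refine (norm_sub_le _ _).trans
    ((add_le_add hYX (hg.norm_sum_sub_mul_sum_le hX hY)).trans (le_of_eq ?_))
  field_simp
  ring

variable {q : ℕ} {u : ℕ → ℂ}

lemma IsStepLipschitz.norm_sum_periodic_mul_sub_le (hg : IsStepLipschitz D g)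
    (hg₁ : ∀ x, ‖g x‖ ≤ 1) (hu : Function.Periodic u q) (hu₁ : ∀ n, ‖u n‖ ≤ 1) {X : ℕ} (hq : 1 ≤ q)
    (hqX : q ≤ X) :
    ‖∑ n ∈ range X, u n * g (n / X) - (∑ m ∈ range q, u m) / q * ∑ n ∈ range X, g (n / X)‖ ≤
      q * (2 + D) := by
  have hX : (0 : ℝ) < X := by exact_mod_cast (by lia : 0 < X)
  have hq' : (0 : ℝ) < q := mod_cast hq
  have hq₀ : (q : ℂ) ≠ 0 := mod_cast (by lia : q ≠ 0)
  have hD := hg.nonneg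
  have hF (n : ℕ) : ‖u n * g (n / X)‖ ≤ 1 := by
    rw [norm_mul]
    exact mul_le_one₀ (hu₁ n) (norm_nonneg _) (hg₁ _)
  have hshift : ∀ m ∈ range q, ‖∑ n ∈ range X, u (n + m) * g ((n + m : ℕ) / X) -
      ∑ n ∈ range X, u n * g (n / X)‖ ≤ 2 * q := fun m hm => by
    refine (norm_sum_add_sub_sum_le hF X m).trans ?_
    gcongr
    exact (mem_range.1 hm).le
  have hfreeze : ∀ n ∈ range X, ∀ m ∈ range q,
      ‖u (n + m) * g ((n + m : ℕ) / X) - u (n + m) * g (n / X)‖ ≤ D * (q / X) := by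
    intro n hn m hm
    have hn' : (n : ℝ) ≤ X := mod_cast (mem_range.1 hn).le
    have hm' : (m : ℝ) ≤ q := mod_cast (mem_range.1 hm).le
    have hqX' : (q : ℝ) ≤ X := mod_cast hqX
    rw [← mul_sub, norm_mul, Nat.cast_add, add_div]
    refine (mul_le_of_le_one_left (norm_nonneg _) (hu₁ _)).trans ((hg _ ⟨by positivity,
      (div_le_one hX).2 hn'⟩ _ ⟨by positivity, (div_le_one hX).2 (hm'.trans hqX')⟩).trans ?_)
    gcongr
  have h₁ := norm_sum_le_of_le _ hshift
  have h₂ := norm_sum_le_of_le _ fun n hn => norm_sum_le_of_le _ (hfreeze n hn)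
  simp only [sum_sub_distrib, sum_const, card_range, nsmul_eq_mul, ← sum_mul,
    sum_range_add_of_periodic hu] at h₁ h₂
  rw [← mul_sum, sum_comm] at h₂
  have hdiv (S P W : ℂ) : S - P / q * W = (q * S - P * W) / q := by field_simp
  rw [hdiv, norm_div, Complex.norm_natCast, div_le_iff₀ hq']
  refine (norm_sub_le_norm_sub_add_norm_sub _ _ _).trans
    ((add_le_add ((norm_sub_rev _ _).trans_le h₁) h₂).trans (le_of_eq ?_))
  field_simp

lemma IsStepLipschitz.norm_average_periodic_mul_sub_le (hg : IsStepLipschitz D g)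
    (hg₁ : ∀ x, ‖g x‖ ≤ 1) (hu : Function.Periodic u q) (hu₁ : ∀ n, ‖u n‖ ≤ 1) {X Y : ℕ}
    (hq : 1 ≤ q) (hqY : q ≤ Y) (hYX : Y ≤ X) :
    ‖(∑ n ∈ range X, u n * g (n / X)) / X - (∑ n ∈ range Y, u n * g (n / Y)) / Y‖ ≤
      4 * q * (1 + D) / Y := by
  have hY : (0 : ℝ) < Y := by exact_mod_cast (by lia : 0 < Y)
  have hq' : (1 : ℝ) ≤ q := mod_cast hq
  have hD := hg.nonneg
  set σ := (∑ m ∈ range q, u m) / q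
  have hσ : ‖σ‖ ≤ 1 := by
    rw [norm_div, Complex.norm_natCast, div_le_one (by positivity)]
    simpa using norm_sum_le_of_le (range q) fun m _ => hu₁ m
  have hmain (Z : ℕ) (hYZ : Y ≤ Z) : ‖(∑ n ∈ range Z, u n * g (n / Z)) / Z -
      σ * ((∑ n ∈ range Z, g (n / Z)) / Z)‖ ≤ q * (2 + D) / Y := by
    rw [← mul_div_assoc, ← sub_div, norm_div, Complex.norm_natCast]
    have := hg.norm_sum_periodic_mul_sub_le hg₁ hu hu₁ hq (hqY.trans hYZ)
    gcongr
  have hmid := hg.norm_average_sub_average_le (X := X) (Y := Y) (by lia) (by lia)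
  set WX := (∑ n ∈ range X, g (n / X)) / (X : ℂ)
  set WY := (∑ n ∈ range Y, g (n / Y)) / (Y : ℂ)
  have hσmid : ‖σ * WX - σ * WY‖ ≤ D * (1 / Y + 1 / Y) := by
    rw [← mul_sub, norm_mul]
    refine (mul_le_of_le_one_left (norm_nonneg _) hσ).trans (hmid.trans ?_)
    gcongr
  have htri := (norm_sub_le_norm_sub_add_norm_sub _ (σ * WX) _).trans
    (add_le_add (hmain X hYX) ((norm_sub_le_norm_sub_add_norm_sub _ (σ * WY) _).trans
      (add_le_add hσmid ((norm_sub_rev _ _).trans_le (hmain Y le_rfl)))))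
  refine htri.trans ?_
  rw [← sub_nonneg]
  have : 4 * q * (1 + D) / Y - (q * (2 + D) / Y + (D * (1 / Y + 1 / Y) + q * (2 + D) / Y)) =
      2 * D * (q - 1) / Y := by
    field_simp
    ring
  rw [this]
  have : (0 : ℝ) ≤ q - 1 := sub_nonneg.2 hq'
  positivity

end IsStepLipschitz

lemma isStepLipschitz_e_sum {k : ℕ} {γ : Fin k → ℝ} {B : ℝ} (hB : 0 ≤ B) (hγ : ∀ i, |γ i| ≤ B) :
    IsStepLipschitz (8 * 4 ^ k * B) fun x => e (∑ i : Fin k, γ i * x ^ (i + 1 : ℕ)) := by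
  intro x hx s hs
  have hterm : ∀ i ∈ univ, |γ i * (x + s) ^ (i + 1 : ℕ) - γ i * x ^ (i + 1 : ℕ)| ≤
      B * (2 ^ k * s) := by
    intro i _
    have hpow := pow_sub_pow_mul_le hx.1 hs.1 hx.2 hs.2 (i + 1)
    rw [one_pow, mul_one, mul_one] at hpow
    have hmono : x ^ (i + 1 : ℕ) ≤ (x + s) ^ (i + 1 : ℕ) :=
      pow_le_pow_left₀ hx.1 (le_add_of_nonneg_right hs.1) _
    have h2k : (2 : ℝ) ^ (i + 1 : ℕ) - 1 ≤ 2 ^ k := by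
      have : (2 : ℝ) ^ (i + 1 : ℕ) ≤ 2 ^ k := pow_le_pow_right₀ one_le_two i.isLt
      linarith
    rw [← mul_sub, abs_mul, abs_of_nonneg (sub_nonneg.2 hmono)]
    exact mul_le_mul (hγ i) (hpow.trans (mul_le_mul_of_nonneg_right h2k hs.1))
      (sub_nonneg.2 hmono) hB
  have hsum := (abs_sum_le_sum_abs _ _).trans (sum_le_sum hterm)
  rw [sum_sub_distrib, sum_const, card_univ, Fintype.card_fin, nsmul_eq_mul] at hsum
  have hk : (k : ℝ) ≤ 2 ^ k := mod_cast Nat.lt_two_pow_self.le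
  have hs₀ := hs.1
  refine (norm_e_sub_e_le _ _ 0).trans ?_
  rw [Int.cast_zero, sub_zero]
  calc _ ≤ 2 * 4 * (k * (B * (2 ^ k * s))) := by gcongr; exact Real.pi_le_four
    _ ≤ 2 * 4 * (2 ^ k * (B * (2 ^ k * s))) := by gcongr
    _ = 8 * 4 ^ k * B * s := by
      rw [show (4 : ℝ) = 2 * 2 by norm_num, mul_pow]
      ring

lemma periodic_e_sum_div {k q : ℕ} (hq : q ≠ 0) (a : Fin k → ℤ) :
    Function.Periodic (fun n : ℕ => e (∑ i : Fin k, (a i / q : ℝ) * (n : ℝ) ^ (i + 1 : ℕ))) q := by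
  intro n
  have hdvd (i : Fin k) : ∃ w : ℤ, ((n + q : ℤ) ^ (i + 1 : ℕ) - (n : ℤ) ^ (i + 1 : ℕ)) = q * w := by
    have := sub_dvd_pow_sub_pow (n + q : ℤ) n (i + 1)
    rwa [add_sub_cancel_left] at this
  choose w hw using hdvd
  have hsum : ∑ i : Fin k, (a i / q : ℝ) * ((n + q : ℕ) : ℝ) ^ (i + 1 : ℕ) =
      ∑ i : Fin k, (a i / q : ℝ) * (n : ℝ) ^ (i + 1 : ℕ) + (∑ i : Fin k, a i * w i : ℤ) := by
    push_cast
    rw [← sum_add_distrib]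
    refine sum_congr rfl fun i _ => ?_
    have hi : (n + q : ℝ) ^ (i + 1 : ℕ) - (n : ℝ) ^ (i + 1 : ℕ) = q * w i := mod_cast hw i
    rw [sub_eq_iff_eq_add.1 hi]
    field_simp
    ring
  beta_reduce
  rw [hsum, e_add_intCast]

-- Both normalised sums are close to the same product of a complete sum modulo `q` and an average
-- of `e (∑ γ i x ^ (i + 1))` over `[0, 1]`.
lemma norm_expSum_div_sub_expSum_div_le {k q X Y : ℕ} {a : Fin k → ℤ} {γ : Fin k → ℝ} {B : ℝ}
    (hB : 0 ≤ B) (hγ : ∀ i, |γ i| ≤ B) (hq : 1 ≤ q) (hqY : q ≤ Y) (hYX : Y ≤ X) :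
    ‖expSum (range X) (fun i => a i / q + γ i / (X : ℝ) ^ (i + 1 : ℕ)) / X -
      expSum (range Y) (fun i => a i / q + γ i / (Y : ℝ) ^ (i + 1 : ℕ)) / Y‖ ≤
      4 * q * (1 + 8 * 4 ^ k * B) / Y := by
  have hsplit (Z : ℕ) :
      expSum (range Z) (fun i => a i / q + γ i / (Z : ℝ) ^ (i + 1 : ℕ)) =
        ∑ n ∈ range Z, e (∑ i : Fin k, (a i / q : ℝ) * (n : ℝ) ^ (i + 1 : ℕ)) *
          e (∑ i : Fin k, γ i * (n / Z : ℝ) ^ (i + 1 : ℕ)) := by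
    refine sum_congr rfl fun n _ => ?_
    rw [← e_add, ← sum_add_distrib]
    congr! 2 with i
    rw [div_pow]
    ring
  rw [hsplit X, hsplit Y]
  exact (isStepLipschitz_e_sum hB hγ).norm_average_periodic_mul_sub_le (fun _ => (norm_e _).le)
    (periodic_e_sum_div (by lia) a) (fun _ => (norm_e _).le) hq hqY hYX

lemma CoeffsBound.exists_of_le_norm_expSum {k C T X : ℕ} (h : CoeffsBound k 0 C) (hT : 2 ≤ T)
    (hX : 1 ≤ X) {α : Fin k → ℝ} (hα : X ≤ T * ‖expSum (range X) α‖) :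
    ∃ q : ℕ, 1 ≤ q ∧ q ≤ T ^ C ∧ ∃ a : Fin k → ℤ,
      ∀ i, |q * α i - a i| * (X : ℝ) ^ (i + 1 : ℕ) ≤ T ^ C := by
  let p : ℝ[X] := ∑ i : Fin k, Polynomial.monomial (i + 1 : ℕ) (α i)
  have hp : p.natDegree ≤ k := Polynomial.natDegree_sum_le_of_forall_le _ _ fun i _ =>
    (Polynomial.natDegree_monomial_le _).trans i.isLt
  have hcoeff (i : Fin k) : p.coeff (i + 1) = α i := by
    simp [p, Polynomial.finsetSum_coeff, Polynomial.coeff_monomial, Fin.val_inj]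
  have heval : expSum (range X) α = ∑ n ∈ range X, e (p.eval (n : ℝ)) := by
    simp [p, expSum, Polynomial.eval_finsetSum]
  obtain ⟨q, hq, hqT, a, ha⟩ := h T X hT hX p hp (heval ▸ hα)
  refine ⟨q, hq, hqT, fun i => a (i + 1), fun i => ?_⟩
  rw [← hcoeff]
  exact ha _ (mem_Ioc.2 ⟨Nat.succ_pos _, i.isLt⟩)

/-! ### Major arcs and the set of large values -/

/-- The total degree `1 + 2 + ⋯ + k` of the Vinogradov system, which is the homogeneous dimension
of `Fin k → ℝ` under the dilations `dilation`. -/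
def totalDegree (k : ℕ) : ℕ := ∑ i : Fin k, (i + 1 : ℕ)

lemma two_mul_totalDegree (k : ℕ) : 2 * totalDegree k = k * (k + 1) := by
  induction k with
  | zero => rfl
  | succ k ih =>
    have hsucc : totalDegree (k + 1) = totalDegree k + (k + 1) := Fin.sum_univ_castSucc _
    rw [hsucc, mul_add, ih]
    ring

lemma cast_totalDegree (k : ℕ) : (totalDegree k : ℝ) = k * (k + 1) / 2 := by
  rw [eq_div_iff two_ne_zero, mul_comm]
  exact_mod_cast two_mul_totalDegree k

section Dilation

variable {k : ℕ}

/-- The dilation about `θ` multiplying the `i`-th coordinate, which is the coefficient of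
`x ^ (i + 1)` in `expSum`, by `c ^ (i + 1)`. -/
def dilation (c : ℝ) (θ α : Fin k → ℝ) : Fin k → ℝ := fun i => θ i + c ^ (i + 1 : ℕ) * (α i - θ i)

lemma volume_preimage_dilation {c : ℝ} (hc : 0 < c) (θ : Fin k → ℝ) (S : Set (Fin k → ℝ)) :
    volume (dilation c θ ⁻¹' S) = ENNReal.ofReal (c ^ totalDegree k)⁻¹ * volume S := by
  let L := Matrix.toLin' (Matrix.diagonal fun i : Fin k => c ^ (i + 1 : ℕ))
  have hdet : LinearMap.det L = c ^ totalDegree k := by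
    rw [LinearMap.det_toLin', Matrix.det_diagonal, prod_pow_eq_pow_sum, totalDegree]
  have hpre : dilation c θ ⁻¹' S = (· + -θ) ⁻¹' (L ⁻¹' ((· + θ) ⁻¹' S)) := by
    ext α
    have : dilation c θ α = L (α + -θ) + θ := by
      ext i
      simp [dilation, L, Matrix.mulVec_diagonal, sub_eq_add_neg, add_comm]
    simp only [Set.mem_preimage, this]
  rw [hpre, measure_preimage_add_right,
    Measure.addHaar_preimage_linearMap _ (by rw [hdet]; positivity), measure_preimage_add_right,
    hdet, abs_of_pos (by positivity)]

/-- The major arc of radius `Q` at scale `Z` around `θ`. -/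
def majorArc (Q Z : ℝ) (θ : Fin k → ℝ) : Set (Fin k → ℝ) :=
  {α | ∀ i, |α i - θ i| * Z ^ (i + 1 : ℕ) ≤ Q}

lemma isClosed_majorArc (Q Z : ℝ) (θ : Fin k → ℝ) : IsClosed (majorArc Q Z θ) := by
  simp only [majorArc, Set.ofPred_forall]
  exact isClosed_iInter fun i => isClosed_le (by fun_prop) continuous_const

lemma abs_sub_le_one_of_mem_majorArc {Q Z : ℝ} {θ α : Fin k → ℝ} (hα : α ∈ majorArc Q Z θ)
    (hZ : 1 ≤ Z) (hQZ : Q ≤ Z) (i : Fin k) : |α i - θ i| ≤ 1 := by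
  have hpow : Z ≤ Z ^ (i + 1 : ℕ) := le_self_pow₀ hZ (Nat.succ_ne_zero _)
  exact le_of_mul_le_mul_right ((hα i).trans (by linarith)) (by linarith : 0 < Z ^ (i + 1 : ℕ))

lemma dilation_sub_mul_pow {X Y : ℝ} (hY : Y ≠ 0) (θ α : Fin k → ℝ) (i : Fin k) :
    (dilation (X / Y) θ α i - θ i) * Y ^ (i + 1 : ℕ) = (α i - θ i) * X ^ (i + 1 : ℕ) := by
  rw [dilation, div_pow]
  field_simp
  ring

lemma dilation_mem_majorArc {Q X Y : ℝ} (hX : 0 < X) (hY : 0 < Y) {θ α : Fin k → ℝ}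
    (hα : α ∈ majorArc Q X θ) : dilation (X / Y) θ α ∈ majorArc Q Y θ := by
  intro i
  rw [← abs_of_pos (pow_pos hY _), ← abs_mul, dilation_sub_mul_pow hY.ne', abs_mul,
    abs_of_pos (pow_pos hX _)]
  exact hα i

end Dilation

/-- The points where the exponential sum of length `X` is at least a `1 / T` fraction of its trivial
bound. -/
def largeValues (k X T : ℕ) : Set (Fin k → ℝ) := {α | X ≤ T * ‖expSum (range X) α‖}

lemma isClosed_largeValues (k X T : ℕ) : IsClosed (largeValues k X T) :=
  isClosed_le continuous_const (by fun_prop)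

lemma dilation_mem_largeValues {k q X Y T : ℕ} {a : Fin k → ℤ} {Q : ℝ} {α : Fin k → ℝ}
    (hT : 0 < T) (hq : 1 ≤ q) (hY : 8 * T * q * (1 + 8 * 4 ^ k * Q) ≤ Y) (hYX : Y ≤ X)
    (hqY : q ≤ Y) (hQ : 0 ≤ Q)
    (hα : α ∈ majorArc Q X fun i => a i / q) (hαT : α ∈ largeValues k X T) :
    dilation (X / Y) (fun i => a i / q) α ∈ largeValues k Y (2 * T) := by
  have hT' : (0 : ℝ) < T := mod_cast hT
  have hY' : (0 : ℝ) < Y := by exact_mod_cast (by lia : 0 < Y)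
  have hX' : (0 : ℝ) < X := by exact_mod_cast (by lia : 0 < X)
  set β := dilation (X / Y) (fun i => a i / q : Fin k → ℝ) α
  let γ : Fin k → ℝ := fun i => (α i - a i / q) * (X : ℝ) ^ (i + 1 : ℕ)
  have hγ (i : Fin k) : |γ i| ≤ Q := by
    rw [abs_mul, abs_of_pos (pow_pos hX' _)]
    exact hα i
  have hαγ : α = fun i => a i / q + γ i / (X : ℝ) ^ (i + 1 : ℕ) := by
    ext i
    simp only [γ]
    field_simp
    ring
  have hβγ : β = fun i => a i / q + γ i / (Y : ℝ) ^ (i + 1 : ℕ) := by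
    ext i
    simp only [γ]
    rw [← dilation_sub_mul_pow hY'.ne' (fun i => a i / q) α,
      mul_div_cancel_right₀ _ (by positivity), add_sub_cancel]
  have hcompare := norm_expSum_div_sub_expSum_div_le (a := a) hQ hγ hq hqY hYX
  rw [← hαγ, ← hβγ] at hcompare
  have herr : 4 * q * (1 + 8 * 4 ^ k * Q) / Y ≤ 1 / (2 * T) := by
    rw [div_le_div_iff₀ hY' (by positivity)]
    linarith
  have hlarge : 1 / T ≤ ‖expSum (range X) α / X‖ := by
    rw [norm_div, Complex.norm_natCast, div_le_div_iff₀ hT' hX', one_mul, mul_comm]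
    exact hαT
  have hsmall := (norm_sub_norm_le _ _).trans (hcompare.trans herr)
  have hhalf : (1 : ℝ) / T = 1 / (2 * T) + 1 / (2 * T) := by
    field_simp
    norm_num
  have hβ : 1 / (2 * T) ≤ ‖expSum (range Y) β / Y‖ := by linarith
  rw [norm_div, Complex.norm_natCast, div_le_div_iff₀ (by positivity) hY', one_mul, mul_comm] at hβ
  exact_mod_cast hβ

/-- The centres of the major arcs meeting the unit cube: rational points with a common denominator
at most `H`. -/
def majorCentres (k H : ℕ) : Set (Fin k → ℚ) :=
  {θ | θ ∈ Set.Icc (-1) 2 ∧ ∃ q : ℕ, 1 ≤ q ∧ q ≤ H ∧ ∃ a : Fin k → ℤ, ∀ i, θ i = a i / q}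

lemma CoeffsBound.subset_iUnion_majorArc {k C X T : ℕ} (h : CoeffsBound k 0 C) (hT : 2 ≤ T)
    (hX : T ^ C ≤ X) :
    Set.Icc 0 1 ∩ largeValues k X T ⊆
      ⋃ θ : majorCentres k (T ^ C), majorArc ((T : ℝ) ^ C) X fun i => (θ.1 i : ℝ) := by
  rintro α ⟨hα, hαT⟩
  have hX₁ : 1 ≤ X := (Nat.one_le_pow _ _ (by lia)).trans hX
  obtain ⟨q, hq, hqT, a, ha⟩ := h.exists_of_le_norm_expSum hT hX₁ hαT
  have hq' : (1 : ℝ) ≤ q := mod_cast hq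
  have hmem : α ∈ majorArc ((T : ℝ) ^ C) X fun i => (a i / q : ℝ) := by
    refine fun i => le_trans ?_ (ha i)
    have hfactor : (q : ℝ) * α i - a i = q * (α i - a i / q) := by field_simp
    rw [hfactor, abs_mul, Nat.abs_cast]
    gcongr
    exact le_mul_of_one_le_left (abs_nonneg _) hq'
  have hclose := abs_sub_le_one_of_mem_majorArc hmem (mod_cast hX₁) (mod_cast hX)
  refine Set.mem_iUnion.2 ⟨⟨fun i => a i / q, ⟨fun i => ?_, fun i => ?_⟩, q, hq, hqT, a,
    fun _ => rfl⟩, by simpa using hmem⟩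
  · have := (abs_le.1 (hclose i)).2
    have : (-1 : ℝ) ≤ a i / q := by linarith [hα.1 i, Pi.zero_apply (M := fun _ => ℝ) i]
    exact_mod_cast this
  · have := (abs_le.1 (hclose i)).1
    have : (a i / q : ℝ) ≤ 2 := by linarith [hα.2 i, Pi.one_apply (M := fun _ => ℝ) i]
    exact_mod_cast this

lemma pairwise_disjoint_majorArc {k H : ℕ} {Q Z : ℝ} (hZ : 1 ≤ Z) (hQZ : 2 * H ^ 2 * Q < Z) :
    Pairwise fun θ θ' : majorCentres k H =>
      Disjoint (majorArc Q Z fun i => (θ.1 i : ℝ)) (majorArc Q Z fun i => (θ'.1 i : ℝ)) := by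
  rintro ⟨θ, _, q, hq, hqH, a, ha⟩ ⟨θ', _, q', hq', hqH', a', ha'⟩ hne
  refine Set.disjoint_left.2 fun α hα hα' => hne (Subtype.ext (funext fun i => (?_ : θ i = θ' i)))
  have hq₀ : (0 : ℝ) < q := mod_cast hq
  have hq₀' : (0 : ℝ) < q' := mod_cast hq'
  have hdist : ∀ t : ℝ, |α i - t| * Z ^ (i + 1 : ℕ) ≤ Q → |α i - t| * Z ≤ Q := fun t ht =>
    le_trans (by gcongr; exact le_self_pow₀ hZ (Nat.succ_ne_zero _)) ht
  have hclose := hdist _ (hα i)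
  have hclose' := hdist _ (hα' i)
  simp only [ha, ha', Rat.cast_div, Rat.cast_intCast, Rat.cast_natCast] at hclose hclose'
  have hsum : |((q' : ℤ) : ℝ)| * |(q : ℤ) * α i - a i| + |((q : ℤ) : ℝ)| * |(q' : ℤ) * α i - a' i| <
      1 := by
    have hfactor : (q : ℝ) * α i - a i = q * (α i - a i / q) := by field_simp
    have hfactor' : (q' : ℝ) * α i - a' i = q' * (α i - a' i / q') := by field_simp
    push_cast
    rw [hfactor, hfactor', abs_mul, abs_mul, Nat.abs_cast, Nat.abs_cast]
    refine lt_of_mul_lt_mul_right ?_ (zero_le_one.trans hZ)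
    calc _ = (q * q' : ℝ) * (|α i - a i / q| * Z + |α i - a' i / q'| * Z) := by ring
      _ ≤ (H * H) * (Q + Q) := by gcongr
      _ = 2 * H ^ 2 * Q := by ring
      _ < 1 * Z := by rwa [one_mul]
  have hcross := mul_eq_mul_of_abs_mul_sub_lt_one hsum
  rw [ha, ha', div_eq_div_iff (mod_cast hq₀.ne') (mod_cast hq₀'.ne'), mul_comm, eq_comm,
    mul_comm]
  exact_mod_cast hcross

lemma majorArc_subset_Icc {k H : ℕ} {Q Z : ℝ} (hZ : 1 ≤ Z) (hQZ : Q ≤ Z) (θ : majorCentres k H) :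
    majorArc Q Z (fun i => (θ.1 i : ℝ)) ⊆ Set.Icc (-2) 3 := by
  intro α hα
  have hclose i := abs_le.1 (abs_sub_le_one_of_mem_majorArc hα hZ hQZ i)
  have hlow i : (-1 : ℝ) ≤ (θ.1 i : ℝ) := mod_cast θ.2.1.1 i
  have hhigh i : (θ.1 i : ℝ) ≤ 2 := mod_cast θ.2.1.2 i
  refine ⟨fun i => (?_ : (-2 : ℝ) ≤ α i), fun i => (?_ : α i ≤ (3 : ℝ))⟩
  · linarith [(hclose i).1, hlow i]
  · linarith [(hclose i).2, hhigh i]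

lemma majorArc_inter_largeValues_subset {k H X Y T : ℕ} {Q : ℝ} (hT : 0 < T) (hQ : 0 ≤ Q)
    (hY : 8 * T * H * (1 + 8 * 4 ^ k * Q) ≤ Y) (hYX : Y ≤ X) (hHY : H ≤ Y)
    (θ : majorCentres k H) :
    majorArc Q X (fun i => (θ.1 i : ℝ)) ∩ largeValues k X T ⊆
      dilation (X / Y) (fun i => (θ.1 i : ℝ)) ⁻¹'
        (majorArc Q Y (fun i => (θ.1 i : ℝ)) ∩ largeValues k Y (2 * T)) := by
  rintro α ⟨hα, hαT⟩
  obtain ⟨θ, _, q, hq, hqH, a, ha⟩ := θ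
  have hY₀ : (0 : ℝ) < Y := by exact_mod_cast (by lia : 0 < Y)
  have hX₀ : (0 : ℝ) < X := by exact_mod_cast (by lia : 0 < X)
  refine ⟨dilation_mem_majorArc hX₀ hY₀ hα, ?_⟩
  simp only [ha, Rat.cast_div, Rat.cast_intCast, Rat.cast_natCast] at hα ⊢
  refine dilation_mem_largeValues hT hq (hY.trans' ?_) hYX (hqH.trans hHY) hQ hα hαT
  gcongr

-- The dilations carry the part of `largeValues k X T` in each major arc at scale `X` into the
-- corresponding major arc at scale `Y`, and the latter arcs are disjoint.
lemma CoeffsBound.volume_largeValues_le {k C X Y T : ℕ} (h : CoeffsBound k 0 C) (hT : 2 ≤ T)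
    (hYX : Y ≤ X) (hY : 8 * T * T ^ C * (1 + 8 * 4 ^ k * T ^ C) ≤ Y)
    (hY' : 2 * (T ^ C) ^ 2 * T ^ C < Y) :
    volume (Set.Icc 0 1 ∩ largeValues k X T) ≤
      ENNReal.ofReal (((X : ℝ) / Y) ^ totalDegree k)⁻¹ *
        volume (Set.Icc (-2) 3 ∩ largeValues k Y (2 * T)) := by
  have hTC : 1 ≤ T ^ C := Nat.one_le_pow _ _ (by lia)
  have hTY : T ^ C ≤ Y := by nlinarith
  have hY₀ : (0 : ℝ) < Y := by exact_mod_cast (by lia : 0 < Y)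
  have hX₀ : (0 : ℝ) < X := by exact_mod_cast (by lia : 0 < X)
  let E (θ : majorCentres k (T ^ C)) : Set (Fin k → ℝ) :=
    majorArc ((T : ℝ) ^ C) Y (fun i => (θ.1 i : ℝ)) ∩ largeValues k Y (2 * T)
  calc volume (Set.Icc 0 1 ∩ largeValues k X T)
      ≤ volume (⋃ θ : majorCentres k (T ^ C),
          majorArc ((T : ℝ) ^ C) X (fun i => (θ.1 i : ℝ)) ∩ largeValues k X T) := by
        rw [← Set.iUnion_inter]
        exact measure_mono (Set.subset_inter (h.subset_iUnion_majorArc hT (hTY.trans hYX))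
          Set.inter_subset_right)
    _ ≤ ∑' θ, ENNReal.ofReal (((X : ℝ) / Y) ^ totalDegree k)⁻¹ * volume (E θ) := by
        refine (measure_iUnion_le _).trans (ENNReal.tsum_le_tsum fun θ => ?_)
        rw [← volume_preimage_dilation (div_pos hX₀ hY₀)]
        exact measure_mono (majorArc_inter_largeValues_subset (by lia) (by positivity)
          (mod_cast hY) hYX hTY θ)
    _ = ENNReal.ofReal (((X : ℝ) / Y) ^ totalDegree k)⁻¹ * volume (⋃ θ, E θ) := by
        rw [ENNReal.tsum_mul_left, measure_iUnion]
        · exact fun θ θ' hne => (pairwise_disjoint_majorArc (mod_cast hTC.trans hTY)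
            (mod_cast hY') hne).mono Set.inter_subset_left Set.inter_subset_left
        · exact fun θ => ((isClosed_majorArc _ _ _).inter
            (isClosed_largeValues _ _ _)).measurableSet
    _ ≤ _ := by
        gcongr
        exact Set.iUnion_subset fun θ => Set.inter_subset_inter_left _
          (majorArc_subset_Icc (mod_cast hTC.trans hTY) (mod_cast hTY) θ)

lemma volume_largeValues_mul_pow_le {k : ℕ} (a : Fin k → ℝ) (n s X T : ℕ) :
    volume.real (Set.Icc a (a + n) ∩ largeValues k X T) * (X : ℝ) ^ (2 * s) ≤
      (T : ℝ) ^ (2 * s) * (n ^ k * J s k X) := by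
  have hmarkov := mul_meas_ge_le_integral_of_nonneg (μ := volume.restrict (Set.Icc a (a + n)))
    (f := fun α => (T : ℝ) ^ (2 * s) * ‖expSum (range X) α‖ ^ (2 * s))
    (Filter.Eventually.of_forall fun α => by positivity)
    (Continuous.integrableOn_Icc (by fun_prop)) ((X : ℝ) ^ (2 * s))
  rw [integral_const_mul, integral_norm_expSum_pow, mul_comm] at hmarkov
  refine le_trans ?_ hmarkov
  gcongr
  rw [Set.inter_comm, ← measureReal_restrict_apply (isClosed_largeValues k X T).measurableSet]
  have : IsFiniteMeasure (volume.restrict (Set.Icc a (a + n))) :=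
    isFiniteMeasure_restrict.2 measure_Icc_lt_top.ne
  refine measureReal_mono fun α hα => ?_
  rw [Set.mem_ofPred_eq, ← mul_pow]
  exact pow_le_pow_left₀ (Nat.cast_nonneg _) hα _

lemma MeanValueBound.J_mul_pow_totalDegree_le {k m : ℕ} {A : ℝ}
    (h : MeanValueBound k (3 / 2 * (k : ℝ) * (k + 1) + 1 / m) A) (hm : m ≠ 0) {X : ℕ} (hX : 1 ≤ X)
    {t : ℝ} (ht : 0 ≤ t) (hXt : X ≤ t ^ m) :
    (J (k * (k + 1)) k X : ℝ) * (X : ℝ) ^ totalDegree k ≤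
      A * t * (X : ℝ) ^ (2 * (k * (k + 1))) := by
  have hX' : (0 : ℝ) < X := mod_cast hX
  have hroot : (X : ℝ) ^ (1 / m : ℝ) ≤ t := by
    rw [one_div]
    exact (Real.rpow_le_rpow hX'.le hXt (by positivity)).trans_eq (Real.pow_rpow_inv_natCast ht hm)
  have hA := h.nonneg
  calc (J (k * (k + 1)) k X : ℝ) * (X : ℝ) ^ totalDegree k
      ≤ A * (X : ℝ) ^ (3 / 2 * (k : ℝ) * (k + 1) + 1 / m) * (X : ℝ) ^ totalDegree k := by
        gcongr
        exact h X hX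
    _ = A * (X : ℝ) ^ (1 / m : ℝ) * (X : ℝ) ^ (2 * (k * (k + 1))) := by
        rw [← Real.rpow_natCast, ← Real.rpow_natCast, mul_assoc A, mul_assoc A, ← Real.rpow_add hX',
          ← Real.rpow_add hX', cast_totalDegree]
        push_cast
        ring_nf
    _ ≤ _ := by gcongr

lemma CoeffsBound.volumeReal_largeValues_mul_pow_le {k C X Y T : ℕ} (h : CoeffsBound k 0 C)
    (hT : 2 ≤ T) (hYX : Y ≤ X) (hY : 8 * T * T ^ C * (1 + 8 * 4 ^ k * T ^ C) ≤ Y)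
    (hY' : 2 * (T ^ C) ^ 2 * T ^ C < Y) :
    volume.real (Set.Icc 0 1 ∩ largeValues k X T) * (X : ℝ) ^ totalDegree k ≤
      (Y : ℝ) ^ totalDegree k * volume.real (Set.Icc (-2) 3 ∩ largeValues k Y (2 * T)) := by
  have hY₀ : (0 : ℝ) < Y := by exact_mod_cast (by lia : 0 < Y)
  have hX₀ : (0 : ℝ) < X := by exact_mod_cast (by lia : 0 < X)
  have hfin : volume (Set.Icc (-2) 3 ∩ largeValues k Y (2 * T)) ≠ ⊤ :=
    ((measure_mono Set.inter_subset_left).trans_lt measure_Icc_lt_top).ne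
  have hreal := ENNReal.toReal_mono (ENNReal.mul_ne_top ENNReal.ofReal_ne_top hfin)
    (h.volume_largeValues_le hT hYX hY hY')
  rw [ENNReal.toReal_mul, ENNReal.toReal_ofReal (by positivity), div_pow, inv_div,
    div_mul_eq_mul_div, le_div_iff₀ (by positivity)] at hreal
  exact hreal

lemma majorArc_scale_le_pow (k C : ℕ) {T : ℕ} (hT : 2 ≤ T) :
    8 * T * T ^ C * (1 + 8 * 4 ^ k * T ^ C) ≤ T ^ (3 * C + 2 * k + 8) := by
  calc 8 * T * T ^ C * (1 + 8 * 4 ^ k * T ^ C)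
      ≤ 8 * T * T ^ C * (4 ^ k * T ^ C + 8 * 4 ^ k * T ^ C) := by
        gcongr
        exact Nat.mul_pos (by positivity) (by positivity)
    _ = 72 * 2 ^ (2 * k) * T ^ (2 * C + 1) := by rw [pow_mul 2 2 k]; ring
    _ ≤ T ^ 7 * T ^ (2 * k) * T ^ (2 * C + 1) := by
        gcongr
        calc 72 ≤ 2 ^ 7 := by norm_num
          _ ≤ T ^ 7 := by gcongr
    _ = T ^ (2 * C + 2 * k + 8) := by ring
    _ ≤ T ^ (3 * C + 2 * k + 8) := Nat.pow_le_pow_right (by lia) (by lia)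

lemma majorArc_separation_lt_pow (k C : ℕ) {T : ℕ} (hT : 2 ≤ T) :
    2 * (T ^ C) ^ 2 * T ^ C < T ^ (3 * C + 2 * k + 8) := by
  calc 2 * (T ^ C) ^ 2 * T ^ C ≤ T * (T ^ C) ^ 2 * T ^ C := by gcongr
    _ = T ^ (3 * C + 1) := by ring
    _ < T ^ (3 * C + 2 * k + 8) := Nat.pow_lt_pow_right hT (by lia)

lemma exists_volume_largeValues_le {k : ℕ} (hk : 1 < k) :
    ∃ (m : ℕ) (A : ℝ), m ≠ 0 ∧ 0 ≤ A ∧ ∀ X T : ℕ, 2 ≤ T → T ^ m ≤ X →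
      volume.real (Set.Icc 0 1 ∩ largeValues k X T) * (X : ℝ) ^ totalDegree k ≤
        A * (T : ℝ) ^ (2 * (k * (k + 1)) + 1) := by
  obtain ⟨C, hC⟩ := exists_coeffsBound k
  let m := 3 * C + 2 * k + 8
  obtain ⟨B, hB⟩ := exists_meanValueBound hk (ε := 1 / (m : ℝ)) (by positivity)
  refine ⟨m, 2 ^ (2 * (k * (k + 1))) * 5 ^ k * B, by lia, mul_nonneg (by positivity) hB.nonneg,
    fun X T hT hX => ?_⟩
  have hT₀ : 0 < T := by lia
  have hY₁ : 1 ≤ T ^ m := Nat.one_le_pow _ _ hT₀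
  have hmarkov := volume_largeValues_mul_pow_le (-2 : Fin k → ℝ) 5 (k * (k + 1)) (T ^ m) (2 * T)
  rw [show (-2 : Fin k → ℝ) + (5 : ℕ) = 3 by norm_num] at hmarkov
  have hJ := hB.J_mul_pow_totalDegree_le (by lia) hY₁ (Nat.cast_nonneg T) (Nat.cast_pow T m).le
  refine (hC.volumeReal_largeValues_mul_pow_le hT hX (majorArc_scale_le_pow k C hT)
    (majorArc_separation_lt_pow k C hT)).trans ?_
  have : (0 : ℝ) < (T ^ m : ℕ) := mod_cast hY₁
  set Y : ℕ := T ^ m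
  set μ := volume.real (Set.Icc (-2) 3 ∩ largeValues k Y (2 * T))
  refine le_of_mul_le_mul_right ?_ (by positivity : (0 : ℝ) < (Y : ℝ) ^ (2 * (k * (k + 1))))
  calc (Y : ℝ) ^ totalDegree k * μ * (Y : ℝ) ^ (2 * (k * (k + 1)))
      = (Y : ℝ) ^ totalDegree k * (μ * (Y : ℝ) ^ (2 * (k * (k + 1)))) := by ring
    _ ≤ (Y : ℝ) ^ totalDegree k *
        (((2 * T : ℕ) : ℝ) ^ (2 * (k * (k + 1))) * ((5 : ℕ) ^ k * J (k * (k + 1)) k Y)) := by gcongr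
    _ = 2 ^ (2 * (k * (k + 1))) * 5 ^ k * (T : ℝ) ^ (2 * (k * (k + 1))) *
        (J (k * (k + 1)) k Y * (Y : ℝ) ^ totalDegree k) := by
      push_cast
      ring
    _ ≤ 2 ^ (2 * (k * (k + 1))) * 5 ^ k * (T : ℝ) ^ (2 * (k * (k + 1))) *
        (B * T * (Y : ℝ) ^ (2 * (k * (k + 1)))) := by gcongr
    _ = _ := by ring

/-! ### Removing the epsilon -/

lemma pow_le_pow_mul_add_sum_dyadic {x M : ℝ} (hx : 0 ≤ x) (hxM : x ≤ M) {p q : ℕ} (hqp : q ≤ p)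
    (n : ℕ) :
    x ^ p ≤ (M / 2 ^ n) ^ (p - q) * x ^ q +
      ∑ i ∈ range n, if M ≤ 2 ^ (i + 1) * x then (M / 2 ^ i) ^ p else 0 := by
  have hM := hx.trans hxM
  have hterm (i : ℕ) : 0 ≤ if M ≤ 2 ^ (i + 1) * x then (M / 2 ^ i) ^ p else 0 := by positivity
  have hdyadic : x ≤ M / 2 ^ n ∨ ∃ i ∈ range n, M ≤ 2 ^ (i + 1) * x ∧ x ≤ M / 2 ^ i := by
    induction n with
    | zero => exact Or.inl (by simpa using hxM)
    | succ n ih =>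
      obtain hn | ⟨i, hi, hix⟩ := ih
      · obtain h | h := le_total x (M / 2 ^ (n + 1))
        · exact Or.inl h
        · exact Or.inr ⟨n, self_mem_range_succ n, (div_le_iff₀' (by positivity)).1 h, hn⟩
      · exact Or.inr ⟨i, range_subset_range.2 n.le_succ hi, hix⟩
  obtain hn | ⟨i, hi, hMx, hxi⟩ := hdyadic
  · refine le_add_of_le_of_nonneg ?_ (sum_nonneg fun i _ => hterm i)
    rw [← pow_sub_mul_pow x hqp]
    gcongr
  · refine le_add_of_nonneg_of_le (by positivity) (le_trans ?_
      (single_le_sum (fun i _ => hterm i) hi))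
    rw [if_pos hMx]
    gcongr

lemma J_le_pow_mul_J_add_sum_volume (k X n : ℕ) {s r : ℕ} (hsr : s ≤ r) :
    (J r k X : ℝ) ≤ ((X : ℝ) / 2 ^ n) ^ (2 * r - 2 * s) * J s k X +
      ∑ i ∈ range n, volume.real (Set.Icc 0 1 ∩ largeValues k X (2 ^ (i + 1))) *
        ((X : ℝ) / 2 ^ i) ^ (2 * r) := by
  let F (α : Fin k → ℝ) := ‖expSum (range X) α‖
  let G (i : ℕ) : (Fin k → ℝ) → ℝ :=
    (largeValues k X (2 ^ (i + 1))).indicator fun _ => ((X : ℝ) / 2 ^ i) ^ (2 * r)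
  have hmeas (i : ℕ) : MeasurableSet (largeValues k X (2 ^ (i + 1))) :=
    (isClosed_largeValues _ _ _).measurableSet
  have hF (p : ℕ) (c : ℝ) : IntegrableOn (fun α => c * F α ^ p) (Set.Icc 0 1) :=
    Continuous.integrableOn_Icc (by fun_prop)
  have hG (i : ℕ) : IntegrableOn (G i) (Set.Icc 0 1) :=
    (integrableOn_const measure_Icc_lt_top.ne).indicator (hmeas i)
  have hGint (i : ℕ) : ∫ α in Set.Icc 0 1, G i α =
      volume.real (Set.Icc 0 1 ∩ largeValues k X (2 ^ (i + 1))) * ((X : ℝ) / 2 ^ i) ^ (2 * r) := by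
    rw [setIntegral_indicator (hmeas i), setIntegral_const, smul_eq_mul]
  have hJ (p : ℕ) : ∫ α in Set.Icc 0 1, F α ^ (2 * p) = J p k X := torusMean_norm_expSum_pow p _
  have hpoint (α : Fin k → ℝ) : F α ^ (2 * r) ≤
      ((X : ℝ) / 2 ^ n) ^ (2 * r - 2 * s) * F α ^ (2 * s) + ∑ i ∈ range n, G i α := by
    convert pow_le_pow_mul_add_sum_dyadic (norm_nonneg _)
      (by simpa using norm_expSum_le (range X) α) (by lia : 2 * s ≤ 2 * r) n using 3 with i
    simp [G, largeValues, Set.indicator_apply]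
  calc (J r k X : ℝ) = ∫ α in Set.Icc 0 1, F α ^ (2 * r) := (hJ r).symm
    _ ≤ ∫ α in Set.Icc 0 1, (((X : ℝ) / 2 ^ n) ^ (2 * r - 2 * s) * F α ^ (2 * s) +
        ∑ i ∈ range n, G i α) :=
      integral_mono (by simpa only [IntegrableOn, one_mul] using hF (2 * r) 1)
        ((hF _ _).add (integrable_finsetSum _ fun i _ => hG i)) hpoint
    _ = _ := by
      rw [integral_add (hF _ _) (integrable_finsetSum _ fun i _ => hG i), integral_const_mul, hJ,
        integral_finsetSum _ fun i _ => hG i, sum_congr rfl fun i _ => hGint i]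

lemma MeanValueBound.div_pow_mul_J_mul_pow_le {k m n r X : ℕ} {B : ℝ}
    (h : MeanValueBound k (3 / 2 * (k : ℝ) * (k + 1) + 1 / m) B) (hm : m ≠ 0)
    (hr : k * (k + 1) < r) (hX : 1 ≤ X) (hXn : X ≤ (2 ^ (n + 1)) ^ m) :
    ((X : ℝ) / 2 ^ n) ^ (2 * r - 2 * (k * (k + 1))) * J (k * (k + 1)) k X *
      (X : ℝ) ^ totalDegree k ≤ 2 * B * (X : ℝ) ^ (2 * r) := by
  have hB := h.nonneg
  have hJ := h.J_mul_pow_totalDegree_le hm hX (t := 2 ^ (n + 1)) (by positivity) (mod_cast hXn)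
  set s := k * (k + 1)
  have hpow : (2 : ℝ) ^ n ≤ (2 ^ n) ^ (2 * r - 2 * s) :=
    le_self_pow₀ (one_le_pow₀ one_le_two) (by lia)
  calc ((X : ℝ) / 2 ^ n) ^ (2 * r - 2 * s) * J s k X * (X : ℝ) ^ totalDegree k
      = ((X : ℝ) / 2 ^ n) ^ (2 * r - 2 * s) * (J s k X * (X : ℝ) ^ totalDegree k) := mul_assoc _ _ _
    _ ≤ ((X : ℝ) / 2 ^ n) ^ (2 * r - 2 * s) * (B * 2 ^ (n + 1) * (X : ℝ) ^ (2 * s)) := by gcongr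
    _ = 2 * B * ((X : ℝ) ^ (2 * r - 2 * s) * (X : ℝ) ^ (2 * s)) *
        (2 ^ n / (2 ^ n) ^ (2 * r - 2 * s)) := by ring
    _ = 2 * B * (X : ℝ) ^ (2 * r) * (2 ^ n / (2 ^ n) ^ (2 * r - 2 * s)) := by
      rw [pow_sub_mul_pow _ (by lia)]
    _ ≤ 2 * B * (X : ℝ) ^ (2 * r) :=
      mul_le_of_le_one_right (by positivity) (div_le_one_of_le₀ hpow (by positivity))

lemma mul_pow_two_pow_succ_mul_div_pow_le {A x : ℝ} (hA : 0 ≤ A) {r s : ℕ} (hsr : s < r)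
    (hx : 0 ≤ x) (i : ℕ) :
    A * (2 ^ (i + 1)) ^ (2 * s + 1) * (x / 2 ^ i) ^ (2 * r) ≤
      A * 2 ^ (2 * s + 1) * x ^ (2 * r) * (1 / 2) ^ i := by
  have hpow : ((2 : ℝ) ^ i) ^ (2 * s + 1) * 2 ^ i ≤ (2 ^ i) ^ (2 * r) := by
    rw [← pow_succ]
    exact pow_le_pow_right₀ (one_le_pow₀ one_le_two) (by lia)
  calc A * (2 ^ (i + 1)) ^ (2 * s + 1) * (x / 2 ^ i) ^ (2 * r)
      = A * 2 ^ (2 * s + 1) * x ^ (2 * r) * ((2 ^ i) ^ (2 * s + 1) / (2 ^ i) ^ (2 * r)) := by ring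
    _ ≤ A * 2 ^ (2 * s + 1) * x ^ (2 * r) * (1 / 2) ^ i := by
      refine mul_le_mul_of_nonneg_left ?_ (by positivity)
      rw [one_div_pow, div_le_div_iff₀ (by positivity) (by positivity), one_mul]
      exact hpow

lemma sum_volume_largeValues_mul_pow_le {k m n r s X : ℕ} {A : ℝ} (hA : 0 ≤ A) (hsr : s < r)
    (hvol : ∀ T : ℕ, 2 ≤ T → T ^ m ≤ X →
      volume.real (Set.Icc 0 1 ∩ largeValues k X T) * (X : ℝ) ^ totalDegree k ≤
        A * (T : ℝ) ^ (2 * s + 1))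
    (hn : (2 ^ n) ^ m ≤ X) :
    (∑ i ∈ range n, volume.real (Set.Icc 0 1 ∩ largeValues k X (2 ^ (i + 1))) *
      ((X : ℝ) / 2 ^ i) ^ (2 * r)) * (X : ℝ) ^ totalDegree k ≤
        A * 2 ^ (2 * s + 1) * X ^ (2 * r) * 2 := by
  have hterm : ∀ i ∈ range n, volume.real (Set.Icc 0 1 ∩ largeValues k X (2 ^ (i + 1))) *
      ((X : ℝ) / 2 ^ i) ^ (2 * r) * (X : ℝ) ^ totalDegree k ≤
        A * 2 ^ (2 * s + 1) * X ^ (2 * r) * (1 / 2) ^ i := fun i hi => by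
    have hTX : (2 ^ (i + 1)) ^ m ≤ X := hn.trans' <| by
      gcongr
      · exact one_le_two
      · exact mem_range.1 hi
    have hv := hvol (2 ^ (i + 1)) (le_self_pow₀ one_le_two i.succ_ne_zero) hTX
    push_cast at hv
    refine le_trans ?_ (mul_pow_two_pow_succ_mul_div_pow_le hA hsr (Nat.cast_nonneg X) i)
    rw [mul_right_comm]
    gcongr
  rw [sum_mul]
  refine (sum_le_sum hterm).trans ?_
  rw [← mul_sum]
  gcongr
  exact sum_geometric_two_le n

theorem exists_J_mul_pow_totalDegree_le {k r : ℕ} (hk : 1 < k) (hr : k * (k + 1) < r) :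
    ∃ K : ℝ, 0 < K ∧ ∀ X : ℕ, 1 ≤ X → (J r k X : ℝ) * (X : ℝ) ^ totalDegree k ≤
      K * (X : ℝ) ^ (2 * r) := by
  obtain ⟨m, A, hm, hA, hvol⟩ := exists_volume_largeValues_le hk
  obtain ⟨B, hB⟩ := exists_meanValueBound hk (ε := 1 / (m : ℝ)) (by positivity)
  have hB₀ := hB.nonneg
  set s := k * (k + 1)
  refine ⟨2 * B + A * 2 ^ (2 * s + 1) * 2 + 1, by positivity, fun X hX => ?_⟩
  set n := Nat.log (2 ^ m) X
  have hlow : (2 ^ n) ^ m ≤ X := by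
    rw [pow_right_comm]
    exact Nat.pow_log_le_self _ (by lia)
  have hhigh : X ≤ (2 ^ (n + 1)) ^ m := by
    rw [pow_right_comm]
    exact (Nat.lt_pow_succ_log_self (Nat.one_lt_two_pow hm) X).le
  have hsmall := hB.div_pow_mul_J_mul_pow_le hm hr hX hhigh
  have hlarge := sum_volume_largeValues_mul_pow_le hA hr (hvol X) hlow
  have hsplit := mul_le_mul_of_nonneg_right (J_le_pow_mul_J_add_sum_volume k X n hr.le)
    (by positivity : (0 : ℝ) ≤ (X : ℝ) ^ totalDegree k)
  have : (0 : ℝ) ≤ (X : ℝ) ^ (2 * r) := by positivity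
  rw [add_mul] at hsplit
  linarith

lemma exists_J_le_rpow {k r : ℕ} (hk : 1 < k) (hr : k * (k + 1) < r) :
    ∃ K : ℝ, 0 < K ∧ ∀ X : ℕ, 1 ≤ X →
      (J r k X : ℝ) ≤ K * (X : ℝ) ^ (2 * (r : ℝ) - k * (k + 1) / 2) := by
  obtain ⟨K, hK, hJ⟩ := exists_J_mul_pow_totalDegree_le hk hr
  refine ⟨K, hK, fun X hX => ?_⟩
  have hX' : (0 : ℝ) < X := mod_cast hX
  rw [Real.rpow_sub hX', ← cast_totalDegree, mul_div_assoc', le_div_iff₀ (by positivity)]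
  exact_mod_cast hJ X hX

lemma card_solutions_Icc (s k X : ℕ) : #(solutions s k (Icc 1 X)) = J s k X := by
  have hIcc : Icc 1 X = (range X).image (1 + 1 * ·) := by
    simp only [one_mul, range_eq_Ico, image_add_left_Ico, add_zero, add_comm 1 X,
      Ico_add_one_right_eq_Icc]
  rw [hIcc, card_solutions_image_affine one_ne_zero, J]

lemma setOf_eq_solutions_Icc (s k X : ℕ) :
    {z : (Fin s → ℕ) × (Fin s → ℕ) | (∀ i, z.1 i ∈ Icc 1 X) ∧ (∀ i, z.2 i ∈ Icc 1 X) ∧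
      ∀ j ∈ Icc 1 k, ∑ i, z.1 i ^ j = ∑ i, z.2 i ^ j} = solutions s k (Icc 1 X) := by
  ext z
  rw [Set.mem_ofPred_eq, mem_coe, mem_solutions, and_assoc]
  refine and_congr_right' (and_congr_right' ⟨fun h j => h _ ?_, fun h j hj => ?_⟩)
  · simp only [mem_Icc]
    lia
  · rw [mem_Icc] at hj
    simpa only [Nat.sub_add_cancel hj.1] using h ⟨j - 1, by lia⟩

end VinogradovMeanValue

/-- For `d ≥ 2` and `r > d(d+1)`, the number `J_{r,d}(V)` of solutions of the
Vinogradov system of degree `d` in `2r` variables from `{1,…,V}` satisfies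
`J_{r,d}(V) ≪_{d,r} V^{2r - d(d+1)/2}`. -/
theorem vinogradov_mean_value (d r : ℕ) (hd : 2 ≤ d) (hr : d * (d + 1) < r) :
    ∃ K : ℝ, 0 < K ∧ ∀ V : ℕ, 1 ≤ V →
      (Nat.card {vw : (Fin r → ℕ) × (Fin r → ℕ) |
          (∀ i, vw.1 i ∈ Finset.Icc 1 V) ∧ (∀ i, vw.2 i ∈ Finset.Icc 1 V) ∧
          ∀ j ∈ Finset.Icc 1 d, ∑ i, vw.1 i ^ j = ∑ i, vw.2 i ^ j} : ℝ) ≤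
        K * (V : ℝ) ^ (2 * (r : ℝ) - d * (d + 1) / 2) := by
  obtain ⟨K, hK, hJ⟩ := VinogradovMeanValue.exists_J_le_rpow hd hr
  refine ⟨K, hK, fun V hV => ?_⟩
  rw [VinogradovMeanValue.setOf_eq_solutions_Icc, Nat.card_coe_set_eq, Set.ncard_coe_finset,
    VinogradovMeanValue.card_solutions_Icc]
  exact hJ V hV
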